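/- Suppose f is such a piecewise-C³ one-parameter family with β > 0, a_R < −1, and 1/a_R < a_L < 0, and let ν(μ) = f(0;μ). Then there exist μ₀ > 0, continuous functions s_L(μ) = a_L + O(μ), s_R(μ) = a_R + O(μ), and t(μ), and open neighbourhoods N of 0 and M(μ) of 0 such that, writing g̃(y;μ) = g(y; ν(μ), s_L(μ), s_R(μ), t(μ)): (i) for μ ∈ (−μ₀, 0], f(·;μ) on N and g̃(·;μ) on M(μ) are differentiably conjugate; (ii) for μ ∈ (0, μ₀), f has an unstable fixed point x_R > 0 and a stable period-two orbit {u_L, u_R} in N, g̃ has an unstable fixed point y_R > 0 and a stable period-two orbit in M(μ), and f on N and g̃ on M(μ) are differentiably conjugate on the basins of repulsion of their fixed points and on the basins of attraction of their period-two solutions. Moreover, for any δ > 0 one can choose μ₀ > 0, N = (−p, p), and M(μ) = (q⁻(μ), q⁺(μ)) so that (1 − δ)p < |q⁻(μ)| < (1 + δ)p and (1 − δ)p < |q⁺(μ)| < (1 + δ)p for all μ ∈ (−μ₀, μ₀). -/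

import Mathlib

/-- The piecewise-smooth family: `f(x;μ) = f_L(x;μ)` for `x ≤ 0` and `f_R(x;μ)` for `x > 0`
(these agree when the continuity condition `f_L(0;μ) = f_R(0;μ)` holds). -/
noncomputable def pwFam (fL fR : ℝ → ℝ → ℝ) (μ : ℝ) : ℝ → ℝ :=
  fun x => if x ≤ 0 then fL x μ else fR x μ

/-- The extended normal form `g(y; ν, s_L, s_R, t)`. -/
noncomputable def enf (ν sL sR t : ℝ) : ℝ → ℝ :=
  fun y => if y ≤ 0 then ν + sL * y + t * y ^ 2 else ν + sR * y

/-- `h` is a `C¹` diffeomorphism from `U` onto `V`. -/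
def IsDiffeoOn (h : ℝ → ℝ) (U V : Set ℝ) : Prop :=
  Set.BijOn h U V ∧ ContDiffOn ℝ 1 h U ∧
    ∃ hinv : ℝ → ℝ, Set.InvOn hinv h U V ∧ ContDiffOn ℝ 1 hinv V

/-- `h` intertwines `f` and `g` on `U`: `h (f x) = g (h x)` for all `x ∈ U` with `f x ∈ U`. -/
def ConjRelOn (h f g : ℝ → ℝ) (U : Set ℝ) : Prop :=
  ∀ x ∈ U, f x ∈ U → h (f x) = g (h x)

/-- `f` on `U` is differentiably conjugate to `g` on `V`. -/
def DiffConjOn (f g : ℝ → ℝ) (U V : Set ℝ) : Prop :=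
  ∃ h : ℝ → ℝ, IsDiffeoOn h U V ∧ ConjRelOn h f g U

/-- The basin of repulsion within `N` of an unstable fixed point `p` of `F`:
points admitting a backward orbit in `N` converging to `p`. -/
def basinRep (F : ℝ → ℝ) (N : Set ℝ) (p : ℝ) : Set ℝ :=
  {x ∈ N | ∃ u : ℕ → ℝ, u 0 = x ∧ (∀ n, u n ∈ N) ∧ (∀ n, F (u (n + 1)) = u n) ∧
    Filter.Tendsto u Filter.atTop (nhds p)}

/-- The basin of attraction within `N` of a stable period-two solution `{p, q}` of `F`:
points whose forward orbit stays in `N` and whose even iterates converge to `p` or to `q`. -/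
def basinAttr2 (F : ℝ → ℝ) (N : Set ℝ) (p q : ℝ) : Set ℝ :=
  {x ∈ N | (∀ n : ℕ, F^[n] x ∈ N) ∧
    (Filter.Tendsto (fun n => F^[2 * n] x) Filter.atTop (nhds p) ∨
     Filter.Tendsto (fun n => F^[2 * n] x) Filter.atTop (nhds q))}

/-- The conclusions (i)–(ii) of Theorem 2.3, for the data `(μ₀, s_L, s_R, t, N, M)`:
writing `g̃(y;μ) = g(y; ν(μ), s_L(μ), s_R(μ), t(μ))` with `ν(μ) = f(0;μ) = f_L(0;μ)`,
(i) for `μ ∈ (−μ₀,0]`, `f` on `N` and `g̃` on `M(μ)` are differentiably conjugate;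
(ii) for `μ ∈ (0,μ₀)`, `f` has an unstable fixed point `x_R > 0` and a stable period-two
solution `{u_L, u_R}` in `N`, `g̃` has an unstable fixed point `y_R > 0` and a stable
period-two solution `{v_L, v_R}` in `M(μ)`, and `f` on `N` and `g̃` on `M(μ)` are
differentiably conjugate on the basins of repulsion of their fixed points and on the basins
of attraction of their period-two solutions. -/
def PdConclusion (fL fR : ℝ → ℝ → ℝ) (μ₀ : ℝ) (sL sR t : ℝ → ℝ)
    (N : Set ℝ) (M : ℝ → Set ℝ) : Prop :=
  (∀ μ ∈ Set.Ioo (-μ₀) μ₀, IsOpen (M μ) ∧ (0:ℝ) ∈ M μ) ∧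
  (∀ μ ∈ Set.Ioc (-μ₀) 0,
    DiffConjOn (pwFam fL fR μ) (enf (fL 0 μ) (sL μ) (sR μ) (t μ)) N (M μ)) ∧
  (∀ μ ∈ Set.Ioo 0 μ₀,
    ∃ xR uL uR yR vL vR : ℝ,
      0 < xR ∧ xR ∈ N ∧ pwFam fL fR μ xR = xR ∧
      1 < |deriv (pwFam fL fR μ) xR| ∧
      uL < 0 ∧ xR < uR ∧ uL ∈ N ∧ uR ∈ N ∧ uL ≠ uR ∧
      pwFam fL fR μ uL = uR ∧ pwFam fL fR μ uR = uL ∧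
      |deriv (pwFam fL fR μ) uL * deriv (pwFam fL fR μ) uR| < 1 ∧
      0 < yR ∧ yR ∈ M μ ∧ enf (fL 0 μ) (sL μ) (sR μ) (t μ) yR = yR ∧
      1 < |deriv (enf (fL 0 μ) (sL μ) (sR μ) (t μ)) yR| ∧
      vL < 0 ∧ yR < vR ∧ vL ∈ M μ ∧ vR ∈ M μ ∧ vL ≠ vR ∧
      enf (fL 0 μ) (sL μ) (sR μ) (t μ) vL = vR ∧
      enf (fL 0 μ) (sL μ) (sR μ) (t μ) vR = vL ∧
      |deriv (enf (fL 0 μ) (sL μ) (sR μ) (t μ)) vL *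
        deriv (enf (fL 0 μ) (sL μ) (sR μ) (t μ)) vR| < 1 ∧
      DiffConjOn (pwFam fL fR μ) (enf (fL 0 μ) (sL μ) (sR μ) (t μ))
        (basinRep (pwFam fL fR μ) N xR)
        (basinRep (enf (fL 0 μ) (sL μ) (sR μ) (t μ)) (M μ) yR) ∧
      DiffConjOn (pwFam fL fR μ) (enf (fL 0 μ) (sL μ) (sR μ) (t μ))
        (basinAttr2 (pwFam fL fR μ) N uL uR)
        (basinAttr2 (enf (fL 0 μ) (sL μ) (sR μ) (t μ)) (M μ) vL vR))

open Set Filter Topology Function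
open scoped NNReal

/-!
A differentiable conjugacy between two kinked maps that fixes the kink preserves the ratio of the
one-sided slopes there and the multipliers of fixed points and period-two solutions. Conversely,
these invariants suffice. Cut off outside a neighbourhood of the origin, both maps become decreasing
homeomorphisms of the line with Lipschitz logarithmic slopes, whose left branch contracts, whose
right branch expands, and whose composition of branches contracts. Such a contraction is linearized
globally by a `C¹` coordinate whose slope is an infinite product along orbits, so equal multipliers
give a conjugacy near the attractor: the left fixed point for `ν ≤ 0`, the period-two solution for
`ν > 0`. (Near the repelling right fixed point one argues with the inverse maps.) The relation
`h ∘ f = g ∘ h` then extends `h` along backward orbits, and the equality of the kink ratios is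
what keeps the extension `C¹` across the preimages of the kink. Since the slope of `h` varies
little along orbits, `h` is close to an isometry near the origin, whence the nearly symmetric
neighbourhoods.

The normal form has three free parameters, against three invariants for `μ > 0` and two for `μ ≤ 0`.
For `μ > 0`, `t` is a quotient of two `C¹` functions of `μ` vanishing at `0`, the denominator with
nonzero slope, so it extends continuously to `μ = 0`. For `μ ≤ 0` the invariants can be matched by
`C¹` parameters with any prescribed value of `t(0)`, in particular with that limit.
-/

/-! ### Contractions towards a point -/

lemma dist_iterate_le_of_mapsTo {X : Type*} [PseudoMetricSpace X] {F : X → X} {S : Set X} {p : X}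
    {θ : ℝ} (hθ : 0 ≤ θ) (hS : MapsTo F S S) (hF : ∀ x ∈ S, dist (F x) p ≤ θ * dist x p)
    {x : X} (hx : x ∈ S) (n : ℕ) : dist (F^[n] x) p ≤ θ ^ n * dist x p := by
  induction n with
  | zero => simp
  | succ n ih =>
    rw [iterate_succ_apply']
    calc dist (F (F^[n] x)) p ≤ θ * dist (F^[n] x) p := hF _ (hS.iterate n hx)
      _ ≤ θ * (θ ^ n * dist x p) := by gcongr
      _ = θ ^ (n + 1) * dist x p := by ring

lemma tendsto_iterate_of_mapsTo {X : Type*} [PseudoMetricSpace X] {F : X → X} {S : Set X} {p : X}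
    {θ : ℝ} (hθ : 0 ≤ θ) (hθ1 : θ < 1) (hS : MapsTo F S S)
    (hF : ∀ x ∈ S, dist (F x) p ≤ θ * dist x p) {x : X} (hx : x ∈ S) :
    Tendsto (fun n => F^[n] x) atTop (𝓝 p) := by
  have hgeom : Tendsto (fun n : ℕ => θ ^ n * dist x p) atTop (𝓝 0) := by
    simpa using (tendsto_pow_atTop_nhds_zero_of_lt_one hθ hθ1).mul_const (dist x p)
  exact tendsto_iff_dist_tendsto_zero.2 <|
    squeeze_zero (fun _ => dist_nonneg) (dist_iterate_le_of_mapsTo hθ hS hF hx) hgeom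

/-! ### Orientation-preserving local diffeomorphisms of the line -/

/-- `h` is `C¹` near `x` with positive derivative, i.e. an orientation-preserving local `C¹`
diffeomorphism at `x`. -/
def IncDiffeoAt (h : ℝ → ℝ) (x : ℝ) : Prop :=
  ContDiffAt ℝ 1 h x ∧ 0 < deriv h x

lemma IncDiffeoAt.hasDerivAt {h : ℝ → ℝ} {x : ℝ} (hh : IncDiffeoAt h x) :
    HasDerivAt h (deriv h x) x :=
  (hh.1.differentiableAt one_ne_zero).hasDerivAt

lemma IncDiffeoAt.congr_of_eventuallyEq {h k : ℝ → ℝ} {x : ℝ} (hh : IncDiffeoAt h x)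
    (hk : k =ᶠ[𝓝 x] h) : IncDiffeoAt k x :=
  ⟨hh.1.congr_of_eventuallyEq hk, hk.deriv_eq ▸ hh.2⟩

lemma IncDiffeoAt.comp {h k : ℝ → ℝ} {x : ℝ} (hk : IncDiffeoAt k (h x)) (hh : IncDiffeoAt h x) :
    IncDiffeoAt (k ∘ h) x := by
  refine ⟨hk.1.comp x hh.1, ?_⟩
  rw [(hk.hasDerivAt.comp x hh.hasDerivAt).deriv]
  exact mul_pos hk.2 hh.2

lemma contDiff_of_incDiffeoAt {h : ℝ → ℝ} (hh : ∀ x, IncDiffeoAt h x) : ContDiff ℝ 1 h :=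
  contDiff_iff_contDiffAt.2 fun x => (hh x).1

lemma strictMono_of_incDiffeoAt {h : ℝ → ℝ} (hh : ∀ x, IncDiffeoAt h x) : StrictMono h :=
  strictMono_of_deriv_pos fun x => (hh x).2

lemma incDiffeoAt_of_hasDerivAt {h k : ℝ → ℝ} (hd : ∀ x, HasDerivAt h (k x) x)
    (hk : Continuous k) (hpos : ∀ x, 0 < k x) (x : ℝ) : IncDiffeoAt h x := by
  have hderiv : deriv h = k := funext fun y => (hd y).deriv
  refine ⟨ContDiff.contDiffAt (contDiff_one_iff_deriv.2 ⟨fun y => (hd y).differentiableAt, ?_⟩), ?_⟩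
  · rwa [hderiv]
  · rw [hderiv]; exact hpos x

lemma exists_inverse_of_incDiffeoAt {h : ℝ → ℝ} (hh : ∀ x, IncDiffeoAt h x) (hs : Surjective h) :
    ∃ k : ℝ → ℝ, LeftInverse k h ∧ RightInverse k h ∧ (∀ y, IncDiffeoAt k y) ∧
      ∀ y, deriv k y = (deriv h (k y))⁻¹ := by
  let e : ℝ ≃o ℝ := (strictMono_of_incDiffeoAt hh).orderIsoOfSurjective h hs
  have hright : ∀ y, h (e.symm y) = y := e.apply_symm_apply
  have hd : ∀ y, HasDerivAt e.symm (deriv h (e.symm y))⁻¹ y := fun y =>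
    HasDerivAt.of_local_left_inverse e.symm.continuous.continuousAt (hh _).hasDerivAt (hh _).2.ne'
      (Eventually.of_forall hright)
  have hcont : Continuous fun y => (deriv h (e.symm y))⁻¹ :=
    ((contDiff_of_incDiffeoAt hh).continuous_deriv_one.comp e.symm.continuous).inv₀
      fun y => (hh _).2.ne'
  exact ⟨e.symm, e.symm_apply_apply, hright,
    incDiffeoAt_of_hasDerivAt hd hcont fun y => inv_pos.2 (hh _).2, fun y => (hd y).deriv⟩

/-! ### Linearization of contractions of the line -/

/-- The logarithm of the slope `|F'|`; note that `Real.log` ignores signs. -/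
noncomputable def logSlope (F : ℝ → ℝ) (x : ℝ) : ℝ :=
  Real.log (deriv F x)

/-- A contraction of the line onto itself whose logarithmic slope is Lipschitz. This is the
regularity under which a one-dimensional contraction can be `C¹`-linearized globally. -/
structure LogLipContraction (F : ℝ → ℝ) (θ : ℝ) (C : ℝ≥0) : Prop where
  lt_one : θ < 1
  differentiable : Differentiable ℝ F
  surjective : Surjective F
  deriv_ne_zero : ∀ x, deriv F x ≠ 0
  abs_deriv_le : ∀ x, |deriv F x| ≤ θ
  lipschitzWith : LipschitzWith C (logSlope F)

/-- The sum along the forward orbit of `x` of the deviation of the logarithmic slope from its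
value at the fixed point `p`. -/
noncomputable def logDistortion (F : ℝ → ℝ) (p x : ℝ) : ℝ :=
  ∑' k : ℕ, (logSlope F (F^[k] x) - logSlope F p)

/-- The coordinate centred at the fixed point `p` in which the contraction `F` is linear. -/
noncomputable def linearization (F : ℝ → ℝ) (p x : ℝ) : ℝ :=
  ∫ s in p..x, Real.exp (logDistortion F p s)

namespace LogLipContraction

variable {F : ℝ → ℝ} {θ p : ℝ} {C : ℝ≥0}

lemma nonneg (hF : LogLipContraction F θ C) : 0 ≤ θ :=
  (abs_nonneg _).trans (hF.abs_deriv_le 0)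

lemma dist_le (hF : LogLipContraction F θ C) (x y : ℝ) : dist (F x) (F y) ≤ θ * dist x y :=
  (lipschitzWith_of_nnnorm_deriv_le (C := ⟨θ, hF.nonneg⟩) hF.differentiable
    hF.abs_deriv_le).dist_le_mul x y

lemma dist_iterate_le (hF : LogLipContraction F θ C) (hp : F p = p) (x : ℝ) (n : ℕ) :
    dist (F^[n] x) p ≤ θ ^ n * dist x p :=
  dist_iterate_le_of_mapsTo hF.nonneg (mapsTo_univ F univ)
    (fun y _ => by simpa [hp] using hF.dist_le y p) (mem_univ x) n

lemma abs_logSlope_iterate_sub_le (hF : LogLipContraction F θ C) (hp : F p = p) (x : ℝ) (n : ℕ) :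
    |logSlope F (F^[n] x) - logSlope F p| ≤ C * (θ ^ n * dist x p) :=
  (hF.lipschitzWith.dist_le_mul _ _).trans (by gcongr; exact hF.dist_iterate_le hp x n)

lemma summable_geometric_bound (hF : LogLipContraction F θ C) (r : ℝ) :
    Summable fun n : ℕ => C * (θ ^ n * r) :=
  ((summable_geometric_of_lt_one hF.nonneg hF.lt_one).mul_right r).mul_left _

lemma logDistortion_eq_add (hF : LogLipContraction F θ C) (hp : F p = p) (x : ℝ) :
    logDistortion F p x = logSlope F x - logSlope F p + logDistortion F p (F x) := by
  have hsum : Summable fun n => logSlope F (F^[n] x) - logSlope F p :=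
    .of_norm_bounded (hF.summable_geometric_bound _) (hF.abs_logSlope_iterate_sub_le hp x)
  simpa [logDistortion] using hsum.tsum_eq_zero_add

lemma continuous_logDistortion (hF : LogLipContraction F θ C) (hp : F p = p) :
    Continuous (logDistortion F p) := by
  refine continuous_iff_continuousAt.2 fun x => ?_
  have hball : ContinuousOn (logDistortion F p) (Metric.ball p (dist x p + 1)) := by
    refine continuousOn_tsum (fun n => ?_) (hF.summable_geometric_bound (dist x p + 1))
      fun n y hy => (hF.abs_logSlope_iterate_sub_le hp y n).trans ?_
    · exact ((hF.lipschitzWith.continuous.comp (hF.differentiable.continuous.iterate n)).sub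
        continuous_const).continuousOn
    · have := hF.nonneg
      gcongr
      exact (Metric.mem_ball.1 hy).le
  exact hball.continuousAt (Metric.isOpen_ball.mem_nhds (by simp))

lemma deriv_div_deriv_pos (hF : LogLipContraction F θ C) (x y : ℝ) :
    0 < deriv F x / deriv F y := by
  rcases hasDerivWithinAt_forall_lt_or_forall_gt_of_forall_ne convex_univ
    (fun z _ => (hF.differentiable z).hasDerivAt.hasDerivWithinAt)
    (fun z _ => hF.deriv_ne_zero z) with hneg | hpos
  · exact div_pos_of_neg_of_neg (hneg x trivial) (hneg y trivial)
  · exact div_pos (hpos x trivial) (hpos y trivial)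

lemma exp_logDistortion (hF : LogLipContraction F θ C) (hp : F p = p) (x : ℝ) :
    Real.exp (logDistortion F p x) =
      deriv F x / deriv F p * Real.exp (logDistortion F p (F x)) := by
  rw [hF.logDistortion_eq_add hp x, Real.exp_add, logSlope, logSlope,
    ← Real.log_div (hF.deriv_ne_zero x) (hF.deriv_ne_zero p),
    Real.exp_log (hF.deriv_div_deriv_pos x p)]

lemma hasDerivAt_linearization (hF : LogLipContraction F θ C) (hp : F p = p) (x : ℝ) :
    HasDerivAt (linearization F p) (Real.exp (logDistortion F p x)) x := by
  have hc : Continuous fun s => Real.exp (logDistortion F p s) :=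
    Real.continuous_exp.comp (hF.continuous_logDistortion hp)
  exact intervalIntegral.integral_hasDerivAt_right (hc.intervalIntegrable _ _)
    hc.aestronglyMeasurable.stronglyMeasurableAtFilter hc.continuousAt

lemma incDiffeoAt_linearization (hF : LogLipContraction F θ C) (hp : F p = p) (x : ℝ) :
    IncDiffeoAt (linearization F p) x :=
  incDiffeoAt_of_hasDerivAt (hF.hasDerivAt_linearization hp)
    (Real.continuous_exp.comp (hF.continuous_logDistortion hp)) (fun _ => Real.exp_pos _) x

lemma deriv_linearization_self (hF : LogLipContraction F θ C) (hp : F p = p) :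
    deriv (linearization F p) p = 1 := by
  simp [(hF.hasDerivAt_linearization hp p).deriv, logDistortion, iterate_fixed hp]

lemma linearization_self : linearization F p p = 0 :=
  intervalIntegral.integral_same

lemma linearization_map (hF : LogLipContraction F θ C) (hp : F p = p) (x : ℝ) :
    linearization F p (F x) = deriv F p * linearization F p x := by
  have hd : ∀ y, HasDerivAt (fun z => linearization F p (F z) - deriv F p * linearization F p z)
      0 y := fun y => by
    refine (((hF.hasDerivAt_linearization hp (F y)).comp y (hF.differentiable y).hasDerivAt).sub
      ((hF.hasDerivAt_linearization hp y).const_mul (deriv F p))).congr_deriv ?_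
    have := hF.deriv_ne_zero p
    rw [hF.exp_logDistortion hp y]
    field_simp
    ring
  have hconst := is_const_of_deriv_eq_zero (fun y => (hd y).differentiableAt)
    (fun y => (hd y).deriv) x p
  simp only [hp, linearization_self] at hconst
  linarith

lemma exists_linearization_eq_pow_mul (hF : LogLipContraction F θ C) (hp : F p = p) (n : ℕ)
    (x : ℝ) : ∃ y, linearization F p x = deriv F p ^ n * linearization F p y := by
  induction n with
  | zero => exact ⟨x, by simp⟩
  | succ n ih =>
    obtain ⟨y, hy⟩ := ih
    obtain ⟨z, rfl⟩ := hF.surjective y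
    exact ⟨z, by rw [hy, hF.linearization_map hp]; ring⟩

-- The range is an open interval around `0` which is stable under division by `F' p ^ 2 < 1`.
lemma surjective_linearization (hF : LogLipContraction F θ C) (hp : F p = p) :
    Surjective (linearization F p) := by
  intro y
  have hmono := strictMono_of_incDiffeoAt (hF.incDiffeoAt_linearization hp)
  have hright : 0 < linearization F p (p + 1) := by
    simpa using (linearization_self (F := F) (p := p)).symm.trans_lt (hmono (lt_add_one p))
  have hleft : linearization F p (p - 1) < 0 := by
    simpa using (hmono (sub_one_lt p)).trans_eq linearization_self
  have hlam : |deriv F p ^ 2| < 1 := by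
    rw [abs_pow]
    exact pow_lt_one₀ (abs_nonneg _) ((hF.abs_deriv_le p).trans_lt hF.lt_one) two_ne_zero
  have htend : Tendsto (fun n : ℕ => (deriv F p ^ 2) ^ n * y) atTop (𝓝 0) := by
    simpa using (tendsto_pow_atTop_nhds_zero_of_abs_lt_one hlam).mul_const y
  obtain ⟨n, hlt, hgt⟩ :=
    ((htend.eventually_lt_const hright).and (htend.eventually_const_lt hleft)).exists
  have hpow : 0 < (deriv F p ^ 2) ^ n := by have := hF.deriv_ne_zero p; positivity
  obtain ⟨a, ha⟩ := hF.exists_linearization_eq_pow_mul hp (2 * n) (p + 1)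
  obtain ⟨b, hb⟩ := hF.exists_linearization_eq_pow_mul hp (2 * n) (p - 1)
  rw [ha, pow_mul] at hlt
  rw [hb, pow_mul] at hgt
  exact mem_range_of_exists_le_of_exists_ge
    (contDiff_of_incDiffeoAt (hF.incDiffeoAt_linearization hp)).continuous
    ⟨b, (lt_of_mul_lt_mul_left hgt hpow.le).le⟩ ⟨a, (lt_of_mul_lt_mul_left hlt hpow.le).le⟩

lemma sign_linearization (hF : LogLipContraction F θ C) (hp : F p = p) (a : ℝ) :
    SignType.sign (linearization F p a) = SignType.sign (a - p) := by
  have hmono := strictMono_of_incDiffeoAt (hF.incDiffeoAt_linearization hp)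
  rcases lt_trichotomy a p with h | rfl | h
  · rw [sign_neg (sub_neg.2 h), sign_neg ((hmono h).trans_eq linearization_self)]
  · simp [linearization_self]
  · rw [sign_pos (sub_pos.2 h), sign_pos (linearization_self.symm.trans_lt (hmono h))]

end LogLipContraction

lemma exists_pos_mul_eq_of_sign_eq {a b : ℝ} (h : SignType.sign a = SignType.sign b) :
    ∃ c > 0, c * a = b ∧ (a = 0 → c = 1) := by
  rcases eq_or_ne a 0 with rfl | ha
  · exact ⟨1, one_pos, by
      rw [mul_zero, sign_eq_zero_iff.1 (h.symm.trans sign_zero)], fun _ => rfl⟩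
  · refine ⟨b / a, ?_, div_mul_cancel₀ b ha, fun h0 => absurd h0 ha⟩
    rcases ha.lt_or_gt with ha | ha
    · rw [sign_neg ha, eq_comm, sign_eq_neg_one_iff] at h
      exact div_pos_of_neg_of_neg h ha
    · rw [sign_pos ha, eq_comm, sign_eq_one_iff] at h
      exact div_pos h ha

/-- Two contractions with the same multiplier have the same linear model; scaling this model
moves the image of a prescribed point `a` to any `b` on the matching side of the fixed point. -/
lemma LogLipContraction.exists_semiconj {F G : ℝ → ℝ} {θ θ' p q a b : ℝ} {C C' : ℝ≥0}
    (hF : LogLipContraction F θ C) (hG : LogLipContraction G θ' C') (hp : F p = p) (hq : G q = q)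
    (hmul : deriv F p = deriv G q) (hab : SignType.sign (a - p) = SignType.sign (b - q)) :
    ∃ h : ℝ → ℝ, (∀ x, IncDiffeoAt h x) ∧ Surjective h ∧ Semiconj h F G ∧ h p = q ∧ h a = b ∧
      (a = p → deriv h p = 1) := by
  obtain ⟨Ψinv, hleft, hright, hΨinv, hΨd⟩ := exists_inverse_of_incDiffeoAt
    (hG.incDiffeoAt_linearization hq) (hG.surjective_linearization hq)
  obtain ⟨c, hc, hcab, hc1⟩ := exists_pos_mul_eq_of_sign_eq
    ((hF.sign_linearization hp a).trans (hab.trans (hG.sign_linearization hq b).symm))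
  have hd : ∀ x, HasDerivAt (fun y => c * linearization F p y)
      (c * deriv (linearization F p) x) x := fun x =>
    (hF.incDiffeoAt_linearization hp x).hasDerivAt.const_mul c
  have hscaled : ∀ x, IncDiffeoAt (fun y => c * linearization F p y) x :=
    incDiffeoAt_of_hasDerivAt hd
      (continuous_const.mul
        (contDiff_of_incDiffeoAt (hF.incDiffeoAt_linearization hp)).continuous_deriv_one)
      fun x => mul_pos hc (hF.incDiffeoAt_linearization hp x).2
  have hp_to_q : Ψinv (c * linearization F p p) = q := by
    rw [linearization_self, mul_zero, ← linearization_self (F := G) (p := q), hleft]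
  refine ⟨fun x => Ψinv (c * linearization F p x), fun x => (hΨinv _).comp (hscaled x),
    hleft.surjective.comp fun y => ?_, fun x => ?_, hp_to_q,
    by simp only [hcab, hleft b], fun hap => ?_⟩
  · obtain ⟨x, hx⟩ := hF.surjective_linearization hp (y / c)
    exact ⟨x, by simp only [hx]; field_simp⟩
  · apply (strictMono_of_incDiffeoAt (hG.incDiffeoAt_linearization hq)).injective
    rw [hright, hG.linearization_map hq, hright, hF.linearization_map hp, hmul]
    ring
  · have hderiv := ((hΨinv _).hasDerivAt.comp p (hd p)).deriv
    refine hderiv.trans ?_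
    rw [hΨd, hp_to_q,
      hG.deriv_linearization_self hq, hF.deriv_linearization_self hp, hc1 (by
        rw [hap, linearization_self])]
    simp

/-! ### Gluing and inverting `C¹` maps -/

lemma hasDerivAt_of_left_of_right {h u v : ℝ → ℝ} {a c : ℝ} (hu : HasDerivAt u a c)
    (hv : HasDerivAt v a c) (hl : ∀ᶠ x in 𝓝 c, x ≤ c → h x = u x)
    (hr : ∀ᶠ x in 𝓝 c, c ≤ x → h x = v x) : HasDerivAt h a c := by
  have hleft : HasDerivWithinAt h a (Iic c) c :=
    hu.hasDerivWithinAt.congr_of_eventuallyEq (eventually_nhdsWithin_iff.2 hl)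
      (hl.self_of_nhds le_rfl)
  have hright : HasDerivWithinAt h a (Ici c) c :=
    hv.hasDerivWithinAt.congr_of_eventuallyEq (eventually_nhdsWithin_iff.2 hr)
      (hr.self_of_nhds le_rfl)
  simpa only [Iic_union_Ici, hasDerivWithinAt_univ] using hleft.union hright

lemma eventually_hasDerivAt_of_left_of_right {h u v : ℝ → ℝ} {c : ℝ} (hu : ContDiffAt ℝ 1 u c)
    (hv : ContDiffAt ℝ 1 v c) (hd : deriv u c = deriv v c)
    (hl : ∀ᶠ x in 𝓝 c, x ≤ c → h x = u x) (hr : ∀ᶠ x in 𝓝 c, c ≤ x → h x = v x) :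
    ∀ᶠ x in 𝓝 c, HasDerivAt h (deriv u (min x c) + deriv v (max x c) - deriv u c) x := by
  have hdiff {w : ℝ → ℝ} (hw : ContDiffAt ℝ 1 w c) : ∀ᶠ x in 𝓝 c, HasDerivAt w (deriv w x) x :=
    (hw.eventually (by simp)).mono fun x hx => (hx.differentiableAt one_ne_zero).hasDerivAt
  filter_upwards [hdiff hu, hdiff hv, hl.eventually_nhds, hr.eventually_nhds]
    with x hux hvx hlx hrx
  rcases lt_trichotomy x c with hxc | rfl | hxc
  · rw [min_eq_left hxc.le, max_eq_right hxc.le, hd, add_sub_cancel_right]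
    exact hux.congr_of_eventuallyEq (by
      filter_upwards [hlx, Iio_mem_nhds hxc] with y hy hyc using hy (le_of_lt hyc))
  · rw [min_self, max_self, add_sub_cancel_left]
    exact hasDerivAt_of_left_of_right (hd ▸ hux) hvx hlx hrx
  · rw [min_eq_right hxc.le, max_eq_left hxc.le, add_sub_cancel_left]
    exact hvx.congr_of_eventuallyEq (by
      filter_upwards [hrx, Ioi_mem_nhds hxc] with y hy hyc using hy (le_of_lt hyc))

lemma IncDiffeoAt.of_left_of_right {h u v : ℝ → ℝ} {c : ℝ} (hu : IncDiffeoAt u c)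
    (hv : IncDiffeoAt v c) (hd : deriv u c = deriv v c)
    (hl : ∀ᶠ x in 𝓝 c, x ≤ c → h x = u x) (hr : ∀ᶠ x in 𝓝 c, c ≤ x → h x = v x) :
    IncDiffeoAt h c := by
  have hderiv := eventually_hasDerivAt_of_left_of_right hu.1 hv.1 hd hl hr
  have hcont {w : ℝ → ℝ} (hw : ContDiffAt ℝ 1 w c) : ∀ᶠ x in 𝓝 c, ContinuousAt (deriv w) x :=
    (hw.eventually (by simp)).mono fun x hx => (hx.derivWithin (m := 0) (by simp)).continuousAt
  obtain ⟨ε, hε, hball⟩ := Metric.eventually_nhds_iff_ball.1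
    (hderiv.and ((hcont hu.1).and (hcont hv.1)))
  have hc : c ∈ Metric.ball c ε := Metric.mem_ball_self hε
  have hmin : ContinuousOn (fun x => deriv u (min x c)) (Metric.ball c ε) :=
    ContinuousOn.comp (t := Metric.ball c ε) (fun x hx => (hball x hx).2.1.continuousWithinAt)
      (by fun_prop) fun x hx => by rcases min_choice x c with h | h <;> rwa [h]
  have hmax : ContinuousOn (fun x => deriv v (max x c)) (Metric.ball c ε) :=
    ContinuousOn.comp (t := Metric.ball c ε) (fun x hx => (hball x hx).2.2.continuousWithinAt)
      (by fun_prop) fun x hx => by rcases max_choice x c with h | h <;> rwa [h]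
  refine ⟨contDiffAt_one_iff.2 ⟨fun x => ContinuousLinearMap.toSpanSingleton ℝ
      (deriv u (min x c) + deriv v (max x c) - deriv u c), _, Metric.ball_mem_nhds c hε, ?_,
    fun x hx => (hball x hx).1.hasFDerivAt⟩, ?_⟩
  · exact (ContinuousLinearMap.toSpanSingletonLE ℝ ℝ ℝ).toLinearMap.continuous_of_finiteDimensional
      |>.comp_continuousOn ((hmin.add hmax).sub continuousOn_const)
  · rw [(hball c hc).1.deriv, min_self, max_self, hd, add_sub_cancel_right]
    exact hv.2

lemma isDiffeoOn_of_incDiffeoAt {h : ℝ → ℝ} {U : Set ℝ} (hU : IsOpen U) (hinj : InjOn h U)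
    (hh : ∀ x ∈ U, IncDiffeoAt h x) : IsDiffeoOn h U (h '' U) := by
  refine ⟨hinj.bijOn_image, fun x hx => (hh x hx).1.contDiffWithinAt, invFunOn h U,
    ⟨hinj.leftInvOn_invFunOn, fun y hy => invFunOn_eq hy⟩, ?_⟩
  rintro _ ⟨x, hx, rfl⟩
  obtain ⟨hcd, hpos⟩ := hh x hx
  have hd := (hh x hx).hasDerivAt
  let e : OpenPartialHomeomorph ℝ ℝ := hcd.toOpenPartialHomeomorph h
    (f' := ContinuousLinearEquiv.unitsEquivAut ℝ (Units.mk0 _ hpos.ne'))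
    (hd.hasFDerivAt_equiv hpos.ne') one_ne_zero
  have hsource : x ∈ e.source := hcd.mem_toOpenPartialHomeomorph_source _ one_ne_zero
  have hsymm : e.symm (h x) = x := e.left_inv hsource
  have htarget : h x ∈ e.target := e.map_source hsource
  have hcdsymm : ContDiffAt ℝ 1 e.symm (h x) :=
    e.contDiffAt_symm_deriv hpos.ne' htarget (by rwa [hsymm]) (by rwa [hsymm])
  have hmem : ∀ᶠ y in 𝓝 (h x), e.symm y ∈ U :=
    e.continuousAt_symm htarget (by rw [hsymm]; exact hU.mem_nhds hx)
  refine (hcdsymm.congr_of_eventuallyEq ?_).contDiffWithinAt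
  filter_upwards [hmem, e.open_target.mem_nhds htarget] with y hyU hyt
  simpa only [show h (e.symm y) = y from e.right_inv hyt] using hinj.leftInvOn_invFunOn hyU

lemma hasDerivAt_symm_of_deriv_ne_zero (e : ℝ ≃ₜ ℝ) (he : ∀ x, deriv e x ≠ 0) (y : ℝ) :
    HasDerivAt e.symm (deriv e (e.symm y))⁻¹ y :=
  HasDerivAt.of_local_left_inverse e.symm.continuous.continuousAt
    (differentiableAt_of_deriv_ne_zero (he _)).hasDerivAt (he _)
    (Eventually.of_forall e.apply_symm_apply)

/-! ### Kinked homeomorphisms -/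

/-- A decreasing homeomorphism of the line that agrees with `left` on `(-∞, c]` and with `right`
on `[c, ∞)`, where both branches are decreasing `C¹` diffeomorphisms of the whole line. -/
structure KinkedHomeo (c : ℝ) extends ℝ ≃ₜ ℝ where
  left : ℝ ≃ₜ ℝ
  right : ℝ ≃ₜ ℝ
  eqOn_left : EqOn toFun left (Iic c)
  eqOn_right : EqOn toFun right (Ici c)
  contDiff_left : ContDiff ℝ 1 left
  contDiff_right : ContDiff ℝ 1 right
  deriv_left_neg : ∀ x, deriv left x < 0
  deriv_right_neg : ∀ x, deriv right x < 0

instance (c : ℝ) : CoeFun (KinkedHomeo c) fun _ => ℝ → ℝ :=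
  ⟨fun f => f.toHomeomorph⟩

/-- The one-sided slopes of `f` and `g` at the kink are in the same ratio, which is the
compatibility under which a conjugacy fixing `c` can be `C¹` there. -/
def SameKinkRatio {c : ℝ} (f g : KinkedHomeo c) : Prop :=
  deriv f.left c * deriv g.right c = deriv f.right c * deriv g.left c

namespace KinkedHomeo

variable {c : ℝ} (f g : KinkedHomeo c)

lemma apply_of_le {x : ℝ} (hx : x ≤ c) : f x = f.left x :=
  f.eqOn_left hx

lemma apply_of_ge {x : ℝ} (hx : c ≤ x) : f x = f.right x :=
  f.eqOn_right hx

lemma strictAnti : StrictAnti f :=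
  StrictAntiOn.Iic_union_Ici
    (((strictAnti_of_deriv_neg f.deriv_left_neg).strictAntiOn _).congr f.eqOn_left.symm)
    (((strictAnti_of_deriv_neg f.deriv_right_neg).strictAntiOn _).congr f.eqOn_right.symm)

lemma strictAnti_symm : StrictAnti f.toHomeomorph.symm := fun x y hxy =>
  f.strictAnti.lt_iff_gt.1 (by simpa using hxy)

lemma hasDerivAt_left (x : ℝ) : HasDerivAt f.left (deriv f.left x) x :=
  (f.contDiff_left.differentiable one_ne_zero x).hasDerivAt

lemma hasDerivAt_right (x : ℝ) : HasDerivAt f.right (deriv f.right x) x :=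
  (f.contDiff_right.differentiable one_ne_zero x).hasDerivAt

lemma hasDerivAt_left_symm (y : ℝ) :
    HasDerivAt f.left.symm (deriv f.left (f.left.symm y))⁻¹ y :=
  hasDerivAt_symm_of_deriv_ne_zero f.left (fun x => (f.deriv_left_neg x).ne) y

lemma hasDerivAt_right_symm (y : ℝ) :
    HasDerivAt f.right.symm (deriv f.right (f.right.symm y))⁻¹ y :=
  hasDerivAt_symm_of_deriv_ne_zero f.right (fun x => (f.deriv_right_neg x).ne) y

lemma deriv_of_lt {x : ℝ} (hx : x < c) : deriv f x = deriv f.left x :=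
  (f.eqOn_left.eventuallyEq_of_mem (Iic_mem_nhds hx)).deriv_eq

lemma deriv_of_gt {x : ℝ} (hx : c < x) : deriv f x = deriv f.right x :=
  (f.eqOn_right.eventuallyEq_of_mem (Ici_mem_nhds hx)).deriv_eq

/-- The inverse map, whose branches are the inverses of the branches in the opposite order. The
position `d` of its kink is a parameter, so that maps with equal values at `c` have inverses of
the same type. -/
def symm {d : ℝ} (hd : f c = d) : KinkedHomeo d where
  toHomeomorph := f.toHomeomorph.symm
  left := f.right.symm
  right := f.left.symm
  eqOn_left x hx := by
    have hcx : c ≤ f.toHomeomorph.symm x := by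
      simpa [← hd] using f.strictAnti_symm.antitone hx
    exact (f.right.eq_symm_apply).2 ((f.apply_of_ge hcx).symm.trans (f.apply_symm_apply x))
  eqOn_right x hx := by
    have hxc : f.toHomeomorph.symm x ≤ c := by
      simpa [← hd] using f.strictAnti_symm.antitone hx
    exact (f.left.eq_symm_apply).2 ((f.apply_of_le hxc).symm.trans (f.apply_symm_apply x))
  contDiff_left := f.right.contDiff_symm_deriv (fun x => (f.deriv_right_neg x).ne)
    f.hasDerivAt_right f.contDiff_right
  contDiff_right := f.left.contDiff_symm_deriv (fun x => (f.deriv_left_neg x).ne)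
    f.hasDerivAt_left f.contDiff_left
  deriv_left_neg x := by
    rw [(f.hasDerivAt_right_symm x).deriv]; exact inv_lt_zero.2 (f.deriv_right_neg _)
  deriv_right_neg x := by
    rw [(f.hasDerivAt_left_symm x).deriv]; exact inv_lt_zero.2 (f.deriv_left_neg _)

variable {f g}

lemma sameKinkRatio_symm {d : ℝ} (hfg : SameKinkRatio f g) (hf : f c = d) (hg : g c = d) :
    SameKinkRatio (f.symm hf) (g.symm hg) := by
  have hfl : f.left.symm d = c := by rw [← hf, f.apply_of_le le_rfl, f.left.symm_apply_apply]
  have hfr : f.right.symm d = c := by rw [← hf, f.apply_of_ge le_rfl, f.right.symm_apply_apply]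
  have hgl : g.left.symm d = c := by rw [← hg, g.apply_of_le le_rfl, g.left.symm_apply_apply]
  have hgr : g.right.symm d = c := by rw [← hg, g.apply_of_ge le_rfl, g.right.symm_apply_apply]
  simp only [SameKinkRatio, symm, (f.hasDerivAt_left_symm d).deriv,
    (f.hasDerivAt_right_symm d).deriv, (g.hasDerivAt_left_symm d).deriv,
    (g.hasDerivAt_right_symm d).deriv, hfl, hfr, hgl, hgr]
  rw [← mul_inv, ← mul_inv, hfg]

lemma incDiffeoAt_left_pullback {h : ℝ → ℝ} {y : ℝ} (hh : IncDiffeoAt h (f.left y)) :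
    IncDiffeoAt (g.left.symm ∘ h ∘ f.left) y ∧ deriv (g.left.symm ∘ h ∘ f.left) y =
      (deriv g.left (g.left.symm (h (f.left y))))⁻¹ * (deriv h (f.left y) * deriv f.left y) := by
  have hd := ((g.hasDerivAt_left_symm (h (f.left y))).comp y
    (hh.hasDerivAt.comp y (f.hasDerivAt_left y))).deriv
  refine ⟨⟨(g.symm rfl).contDiff_right.contDiffAt.comp y
    (hh.1.comp y f.contDiff_left.contDiffAt), ?_⟩, hd⟩
  rw [hd]
  exact mul_pos_of_neg_of_neg (inv_lt_zero.2 (g.deriv_left_neg _))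
    (mul_neg_of_pos_of_neg hh.2 (f.deriv_left_neg _))

lemma incDiffeoAt_right_pullback {h : ℝ → ℝ} {y : ℝ} (hh : IncDiffeoAt h (f.right y)) :
    IncDiffeoAt (g.right.symm ∘ h ∘ f.right) y ∧ deriv (g.right.symm ∘ h ∘ f.right) y =
      (deriv g.right (g.right.symm (h (f.right y))))⁻¹ *
        (deriv h (f.right y) * deriv f.right y) := by
  have hd := ((g.hasDerivAt_right_symm (h (f.right y))).comp y
    (hh.hasDerivAt.comp y (f.hasDerivAt_right y))).deriv
  refine ⟨⟨(g.symm rfl).contDiff_left.contDiffAt.comp y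
    (hh.1.comp y f.contDiff_right.contDiffAt), ?_⟩, hd⟩
  rw [hd]
  exact mul_pos_of_neg_of_neg (inv_lt_zero.2 (g.deriv_right_neg _))
    (mul_neg_of_pos_of_neg hh.2 (f.deriv_right_neg _))

-- Near `y`, the relation `h ∘ f = g ∘ h` exhibits `h` as `g⁻¹ ∘ h ∘ f` along the branches.
lemma incDiffeoAt_of_eventually_semiconj (hfg : SameKinkRatio f g) {h : ℝ → ℝ} {y : ℝ}
    (hconj : ∀ᶠ x in 𝓝 y, h (f x) = g (h x)) (hle : ∀ᶠ x in 𝓝 y, x ≤ c → h x ≤ c)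
    (hge : ∀ᶠ x in 𝓝 y, c ≤ x → c ≤ h x) (hh : IncDiffeoAt h (f y)) : IncDiffeoAt h y := by
  have hleft : ∀ᶠ x in 𝓝 y, x ≤ c → h x = (g.left.symm ∘ h ∘ f.left) x := by
    filter_upwards [hconj, hle] with x hx hxle hxc
    rw [comp_apply, comp_apply, g.left.eq_symm_apply, ← g.apply_of_le (hxle hxc),
      ← f.apply_of_le hxc, hx]
  have hright : ∀ᶠ x in 𝓝 y, c ≤ x → h x = (g.right.symm ∘ h ∘ f.right) x := by
    filter_upwards [hconj, hge] with x hx hxge hcx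
    rw [comp_apply, comp_apply, g.right.eq_symm_apply, ← g.apply_of_ge (hxge hcx),
      ← f.apply_of_ge hcx, hx]
  rcases lt_trichotomy y c with hy | rfl | hy
  · obtain ⟨hy', -⟩ := incDiffeoAt_left_pullback (g := g) (f.apply_of_le hy.le ▸ hh)
    refine hy'.congr_of_eventuallyEq ?_
    filter_upwards [hleft, Iio_mem_nhds hy] with x hx hxc using hx (le_of_lt hxc)
  · have hfix : h y = y := le_antisymm (hle.self_of_nhds le_rfl) (hge.self_of_nhds le_rfl)
    obtain ⟨hl, hld⟩ := incDiffeoAt_left_pullback (g := g) (f.apply_of_le le_rfl ▸ hh)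
    obtain ⟨hr, hrd⟩ := incDiffeoAt_right_pullback (g := g) (f.apply_of_ge le_rfl ▸ hh)
    refine hl.of_left_of_right hr ?_ hleft hright
    have hly : g.left.symm (h (f.left y)) = y := (hleft.self_of_nhds le_rfl).symm.trans hfix
    have hry : g.right.symm (h (f.right y)) = y := (hright.self_of_nhds le_rfl).symm.trans hfix
    rw [hld, hrd, hly, hry, ← f.apply_of_le le_rfl, ← f.apply_of_ge le_rfl]
    unfold SameKinkRatio at hfg
    have := (g.deriv_left_neg y).ne
    have := (g.deriv_right_neg y).ne
    field_simp
    linear_combination deriv h (f y) * hfg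
  · obtain ⟨hy', -⟩ := incDiffeoAt_right_pullback (g := g) (f.apply_of_ge hy.le ▸ hh)
    refine hy'.congr_of_eventuallyEq ?_
    filter_upwards [hright, Ioi_mem_nhds hy] with x hx hxc using hx (le_of_lt hxc)

end KinkedHomeo

/-! ### Extending conjugacies along backward orbits -/

/-- The points whose forward orbit under `f` meets `W`. -/
def orbitPreimage {α : Type*} (f : α → α) (W : Set α) : Set α :=
  {x | ∃ n, f^[n] x ∈ W}

lemma isOpen_orbitPreimage {α : Type*} [TopologicalSpace α] {f : α → α} (hf : Continuous f)
    {W : Set α} (hW : IsOpen W) : IsOpen (orbitPreimage f W) := by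
  rw [orbitPreimage, ofPred_exists]
  exact isOpen_iUnion fun n => hW.preimage (hf.iterate n)

lemma iterate_mem_of_le {α : Type*} {f : α → α} {W : Set α} (hW : MapsTo f W W) {x : α} {n m : ℕ}
    (hnm : n ≤ m) (hx : f^[n] x ∈ W) : f^[m] x ∈ W := by
  obtain ⟨j, rfl⟩ := Nat.exists_eq_add_of_le' hnm
  exact iterate_add_apply f j n x ▸ hW.iterate j hx

/-- `h` extends the conjugacy `h₀`, given on `W`, to `orbitPreimage f W` by
`h = g⁻ⁿ ∘ h₀ ∘ fⁿ`. -/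
def IsOrbitExtension {α β : Type*} (f : α → α) (g : β → β) (h₀ : α → β) (W : Set α)
    (h : α → β) : Prop :=
  ∀ x n, f^[n] x ∈ W → g^[n] (h x) = h₀ (f^[n] x)

lemma exists_isOrbitExtension {α β : Type*} [Nonempty β] {f : α → α} {g : β → β} {h₀ : α → β}
    {W : Set α} (hg : Surjective g) (hW : MapsTo f W W) (hconj : ∀ x ∈ W, h₀ (f x) = g (h₀ x)) :
    ∃ h, IsOrbitExtension f g h₀ W h := by
  classical
  have hiter : ∀ j, ∀ x ∈ W, h₀ (f^[j] x) = g^[j] (h₀ x) := by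
    intro j x hx
    induction j with
    | zero => rfl
    | succ j ih => rw [iterate_succ_apply', iterate_succ_apply', hconj _ (hW.iterate j hx), ih]
  have hpoint : ∀ x, ∃ y, ∀ n, f^[n] x ∈ W → g^[n] y = h₀ (f^[n] x) := by
    intro x
    by_cases hx : ∃ n, f^[n] x ∈ W
    · obtain ⟨y, hy⟩ := hg.iterate (Nat.find hx) (h₀ (f^[Nat.find hx] x))
      refine ⟨y, fun n hn => ?_⟩
      obtain ⟨j, hj⟩ := Nat.exists_eq_add_of_le' (Nat.find_min' hx hn)
      rw [hj, iterate_add_apply, iterate_add_apply, hy, hiter j _ (Nat.find_spec hx)]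
    · exact ⟨Classical.arbitrary β, fun n hn => absurd ⟨n, hn⟩ hx⟩
  exact Classical.skolem.1 hpoint

namespace IsOrbitExtension

variable {α β : Type*} {f : α → α} {g : β → β} {h₀ h : α → β} {W : Set α}

lemma eqOn (hh : IsOrbitExtension f g h₀ W h) : EqOn h h₀ W :=
  fun x hx => hh x 0 hx

lemma map_eq (hh : IsOrbitExtension f g h₀ W h) (hg : Injective g) (hW : MapsTo f W W) {x : α}
    (hx : x ∈ orbitPreimage f W) : h (f x) = g (h x) := by
  obtain ⟨n, hn⟩ := hx
  have hn' : f^[n + 1] x ∈ W := iterate_mem_of_le hW n.le_succ hn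
  exact hg.iterate n ((hh (f x) n hn').trans (hh x (n + 1) hn').symm)

lemma image_orbitPreimage (hh : IsOrbitExtension f g h₀ W h) (hf : Surjective f)
    (hg : Injective g) : h '' orbitPreimage f W = orbitPreimage g (h₀ '' W) := by
  ext y
  constructor
  · rintro ⟨x, ⟨n, hn⟩, rfl⟩
    exact ⟨n, f^[n] x, hn, (hh x n hn).symm⟩
  · rintro ⟨n, w, hw, hwy⟩
    obtain ⟨x, rfl⟩ := hf.iterate n w
    exact ⟨x, ⟨n, hw⟩, hg.iterate n ((hh x n hw).trans hwy)⟩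

end IsOrbitExtension

lemma iterate_strictMono_or_strictAnti {α β : Type*} [Preorder α] [Preorder β] {f : α → α}
    {g : β → β} (hf : StrictAnti f) (hg : StrictAnti g) (n : ℕ) :
    StrictMono f^[n] ∧ StrictMono g^[n] ∨ StrictAnti f^[n] ∧ StrictAnti g^[n] := by
  induction n with
  | zero => exact .inl ⟨strictMono_id, strictMono_id⟩
  | succ n ih =>
    rcases ih with ⟨hfn, hgn⟩ | ⟨hfn, hgn⟩
    · exact .inr ⟨hfn.comp_strictAnti hf, hgn.comp_strictAnti hg⟩
    · exact .inl ⟨hfn.comp hf, hgn.comp hg⟩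

lemma IsOrbitExtension.strictMonoOn {α β : Type*} [Preorder α] [LinearOrder β] {f : α → α}
    {g : β → β} {h₀ h : α → β} {W : Set α} (hh : IsOrbitExtension f g h₀ W h) (hf : StrictAnti f)
    (hg : StrictAnti g) (hW : MapsTo f W W) (hmono : StrictMonoOn h₀ W) :
    StrictMonoOn h (orbitPreimage f W) := by
  rintro x ⟨n, hn⟩ y ⟨m, hm⟩ hxy
  have hx := iterate_mem_of_le hW (le_max_left n m) hn
  have hy := iterate_mem_of_le hW (le_max_right n m) hm
  rcases iterate_strictMono_or_strictAnti hf hg (max n m) with ⟨hfn, hgn⟩ | ⟨hfn, hgn⟩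
  · rw [← hgn.lt_iff_lt, hh x _ hx, hh y _ hy]
    exact hmono hx hy (hfn hxy)
  · rw [← hgn.lt_iff_gt, hh x _ hx, hh y _ hy]
    exact hmono hy hx (hfn hxy)

lemma KinkedHomeo.exists_conj_extension {c : ℝ} {f g : KinkedHomeo c} (hfg : SameKinkRatio f g)
    {h₀ : ℝ → ℝ} {W : Set ℝ} (hWo : IsOpen W) (hW : MapsTo f W W)
    (hconj : ∀ x ∈ W, h₀ (f x) = g (h₀ x)) (hh₀ : ∀ x ∈ W, IncDiffeoAt h₀ x)
    (hmono : StrictMonoOn h₀ W) {n : ℕ} (hn : f^[n] c ∈ W) (hc : h₀ (f^[n] c) = g^[n] c) :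
    ∃ h : ℝ → ℝ, EqOn h h₀ W ∧ (∀ x ∈ orbitPreimage f W, h (f x) = g (h x)) ∧
      (∀ x ∈ orbitPreimage f W, IncDiffeoAt h x) ∧ StrictMonoOn h (orbitPreimage f W) ∧
      h c = c ∧ h '' orbitPreimage f W = orbitPreimage g (h₀ '' W) := by
  obtain ⟨h, hh⟩ := exists_isOrbitExtension g.surjective hW hconj
  have hmono' := hh.strictMonoOn f.strictAnti g.strictAnti hW hmono
  have hcc : h c = c := g.injective.iterate n ((hh c n hn).trans hc)
  have hopen := isOpen_orbitPreimage f.continuous hWo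
  refine ⟨h, hh.eqOn, fun x => hh.map_eq g.injective hW, ?_, hmono', hcc,
    hh.image_orbitPreimage f.surjective g.injective⟩
  rintro x ⟨m, hm⟩
  induction m generalizing x with
  | zero =>
    exact (hh₀ x hm).congr_of_eventuallyEq (hh.eqOn.eventuallyEq_of_mem (hWo.mem_nhds hm))
  | succ m ih =>
    have hnear := hopen.mem_nhds ⟨m + 1, hm⟩
    refine incDiffeoAt_of_eventually_semiconj hfg ?_ ?_ ?_ (ih (f x) hm)
    · filter_upwards [hnear] with y hy using hh.map_eq g.injective hW hy
    · filter_upwards [hnear] with y hy hyc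
      exact hcc ▸ hmono'.monotoneOn hy ⟨n, hn⟩ hyc
    · filter_upwards [hnear] with y hy hyc
      exact hcc ▸ hmono'.monotoneOn ⟨n, hn⟩ hy hyc

/-! ### Kinked homeomorphisms from their branches -/

lemma sub_le_neg_mul_sub_of_deriv_le {F : ℝ → ℝ} {ε : ℝ} (hF : Differentiable ℝ F)
    (hd : ∀ x, deriv F x ≤ -ε) {x y : ℝ} (hxy : x ≤ y) : F y - F x ≤ -ε * (y - x) :=
  convex_univ.image_sub_le_mul_sub_of_deriv_le hF.continuous.continuousOn hF.differentiableOn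
    (fun z _ => hd z) x (mem_univ x) y (mem_univ y) hxy

lemma tendsto_atTop_atBot_of_deriv_le {F : ℝ → ℝ} {ε : ℝ} (hε : 0 < ε) (hF : Differentiable ℝ F)
    (hd : ∀ x, deriv F x ≤ -ε) : Tendsto F atTop atBot := by
  refine tendsto_atBot_mono' atTop (f₁ := fun x => F 0 + -ε * x) ?_ <|
    tendsto_atBot_add_const_left _ _ (tendsto_id.const_mul_atTop_of_neg (neg_neg_of_pos hε))
  filter_upwards [eventually_ge_atTop 0] with x hx
  linarith [sub_le_neg_mul_sub_of_deriv_le hF hd hx]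

lemma tendsto_atBot_atTop_of_deriv_le {F : ℝ → ℝ} {ε : ℝ} (hε : 0 < ε) (hF : Differentiable ℝ F)
    (hd : ∀ x, deriv F x ≤ -ε) : Tendsto F atBot atTop := by
  refine tendsto_atTop_mono' atBot (f₁ := fun x => F 0 + -ε * x) ?_ <|
    tendsto_atTop_add_const_left _ _ (tendsto_id.const_mul_atBot_of_neg (neg_neg_of_pos hε))
  filter_upwards [eventually_le_atBot 0] with x hx
  linarith [sub_le_neg_mul_sub_of_deriv_le hF hd hx]

lemma exists_homeomorph_of_strictAnti {F : ℝ → ℝ} (hF : StrictAnti F) (hs : Surjective F) :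
    ∃ e : ℝ ≃ₜ ℝ, ⇑e = F :=
  ⟨(hF.dual_right.orderIsoOfSurjective (OrderDual.toDual ∘ F)
    (OrderDual.toDual.surjective.comp hs)).toHomeomorph, rfl⟩

lemma KinkedHomeo.exists_of_branches {c ε : ℝ} {FL FR : ℝ → ℝ} (hε : 0 < ε)
    (hL : ContDiff ℝ 1 FL) (hR : ContDiff ℝ 1 FR) (hLd : ∀ x, deriv FL x ≤ -ε)
    (hRd : ∀ x, deriv FR x ≤ -ε) (hc : FL c = FR c) :
    ∃ f : KinkedHomeo c, ⇑f.left = FL ∧ ⇑f.right = FR := by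
  have hLneg : ∀ x, deriv FL x < 0 := fun x => (hLd x).trans_lt (neg_neg_of_pos hε)
  have hRneg : ∀ x, deriv FR x < 0 := fun x => (hRd x).trans_lt (neg_neg_of_pos hε)
  have hLdiff := hL.differentiable one_ne_zero
  have hRdiff := hR.differentiable one_ne_zero
  have hLbot := tendsto_atBot_atTop_of_deriv_le hε hLdiff hLd
  have hRtop := tendsto_atTop_atBot_of_deriv_le hε hRdiff hRd
  obtain ⟨left, rfl⟩ := exists_homeomorph_of_strictAnti (strictAnti_of_deriv_neg hLneg)
    (hL.continuous.surjective' hLbot (tendsto_atTop_atBot_of_deriv_le hε hLdiff hLd))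
  obtain ⟨right, rfl⟩ := exists_homeomorph_of_strictAnti (strictAnti_of_deriv_neg hRneg)
    (hR.continuous.surjective' (tendsto_atBot_atTop_of_deriv_le hε hRdiff hRd) hRtop)
  let F : ℝ → ℝ := fun x => if x ≤ c then left x else right x
  have hFL : EqOn F left (Iic c) := fun x hx => if_pos hx
  have hFR : EqOn F right (Ici c) := fun x (hx : c ≤ x) => by
    rcases hx.eq_or_lt with rfl | hx
    · exact (if_pos le_rfl).trans hc
    · exact if_neg hx.not_ge
  have hF : StrictAnti F := StrictAntiOn.Iic_union_Ici
    (((strictAnti_of_deriv_neg hLneg).strictAntiOn _).congr hFL.symm)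
    (((strictAnti_of_deriv_neg hRneg).strictAntiOn _).congr hFR.symm)
  have hFcont : Continuous F := Continuous.if_le left.continuous right.continuous
    continuous_id continuous_const fun x hx => hx ▸ hc
  have hFbot : Tendsto F atBot atTop :=
    hLbot.congr' (hFL.symm.eventuallyEq_of_mem (Iic_mem_atBot c))
  have hFtop : Tendsto F atTop atBot :=
    hRtop.congr' (hFR.symm.eventuallyEq_of_mem (Ici_mem_atTop c))
  obtain ⟨e, he⟩ := exists_homeomorph_of_strictAnti hF (hFcont.surjective' hFbot hFtop)
  exact ⟨⟨e, left, right, fun x hx => (congrFun he x).trans (hFL hx),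
    fun x hx => (congrFun he x).trans (hFR hx), hL, hR, hLneg, hRneg⟩, rfl, rfl⟩

/-! ### Period-doubling maps -/

/-- Kinked homeomorphisms with the slope configuration of the theorem, uniformly on the line: the
left branch contracts, the right branch expands, and their composition contracts. Here `ν` is the
value at the kink, `θ` the contraction rate, `M` a bound for the slopes and `C` a Lipschitz constant
for the logarithmic slopes, so that estimates can be uniform over all such maps. -/
structure PDMap (ν θ M : ℝ) (C : ℝ≥0) extends KinkedHomeo 0 where
  toFun_zero : toFun 0 = ν
  lt_one : θ < 1
  lipschitzWith_left : LipschitzWith C (logSlope left)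
  lipschitzWith_right : LipschitzWith C (logSlope right)
  le_deriv_right : ∀ x, -M ≤ deriv right x
  deriv_right_le : ∀ x, deriv right x ≤ -θ⁻¹
  deriv_mul_deriv_le : ∀ x y, deriv left x * deriv right y ≤ θ

instance (ν θ M : ℝ) (C : ℝ≥0) : CoeFun (PDMap ν θ M C) fun _ => ℝ → ℝ :=
  ⟨fun f => f.toHomeomorph⟩

lemma logSlope_symm (e : ℝ ≃ₜ ℝ) (he : ∀ x, deriv e x ≠ 0) (y : ℝ) :
    logSlope e.symm y = -logSlope e (e.symm y) := by
  rw [logSlope, (hasDerivAt_symm_of_deriv_ne_zero e he y).deriv, Real.log_inv, logSlope]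

lemma logSlope_comp {F G : ℝ → ℝ} {x : ℝ} (hF : deriv F x ≠ 0) (hG : deriv G (F x) ≠ 0) :
    logSlope (G ∘ F) x = logSlope G (F x) + logSlope F x := by
  rw [logSlope, deriv_comp x (differentiableAt_of_deriv_ne_zero hG)
    (differentiableAt_of_deriv_ne_zero hF), Real.log_mul hG hF, logSlope, logSlope]

namespace PDMap

variable {ν θ M : ℝ} {C : ℝ≥0}

lemma pos (f : PDMap ν θ M C) : 0 < θ :=
  (mul_pos_of_neg_of_neg (f.deriv_left_neg 0) (f.deriv_right_neg 0)).trans_le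
    (f.deriv_mul_deriv_le 0 0)

lemma one_lt_inv (f : PDMap ν θ M C) : 1 < θ⁻¹ :=
  (one_lt_inv₀ f.pos).2 f.lt_one

lemma one_lt (f : PDMap ν θ M C) : 1 < M := by
  linarith [f.one_lt_inv, f.deriv_right_le 0, f.le_deriv_right 0]

variable (f : PDMap ν θ M C)

lemma map_zero : f 0 = ν :=
  f.toFun_zero

lemma left_zero : f.left 0 = ν :=
  (f.apply_of_le le_rfl).symm.trans f.map_zero

lemma right_zero : f.right 0 = ν :=
  (f.apply_of_ge le_rfl).symm.trans f.map_zero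

lemma strictAnti_left : StrictAnti f.left :=
  strictAnti_of_deriv_neg f.deriv_left_neg

lemma strictAnti_right : StrictAnti f.right :=
  strictAnti_of_deriv_neg f.deriv_right_neg

lemma neg_le_deriv_left (x : ℝ) : -θ ≤ deriv f.left x := by
  have := f.deriv_mul_deriv_le x 0
  nlinarith [f.deriv_right_le 0, f.one_lt_inv, f.deriv_left_neg x]

lemma logLipContraction_left : LogLipContraction f.left θ C where
  lt_one := f.lt_one
  differentiable := f.contDiff_left.differentiable one_ne_zero
  surjective := f.left.surjective
  deriv_ne_zero x := (f.deriv_left_neg x).ne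
  abs_deriv_le x := by
    rw [abs_of_neg (f.deriv_left_neg x)]; linarith [f.neg_le_deriv_left x]
  lipschitzWith := f.lipschitzWith_left

lemma deriv_comp_eq (x : ℝ) :
    deriv (f.right ∘ f.left) x = deriv f.right (f.left x) * deriv f.left x :=
  ((f.hasDerivAt_right _).comp x (f.hasDerivAt_left x)).deriv

lemma logLipContraction_comp : LogLipContraction (f.right ∘ f.left) θ (2 * C) where
  lt_one := f.lt_one
  differentiable x := ((f.hasDerivAt_right _).comp x (f.hasDerivAt_left x)).differentiableAt
  surjective := f.right.surjective.comp f.left.surjective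
  deriv_ne_zero x := by
    rw [deriv_comp_eq]
    exact mul_ne_zero (f.deriv_right_neg _).ne (f.deriv_left_neg _).ne
  abs_deriv_le x := by
    rw [deriv_comp_eq, abs_of_pos (mul_pos_of_neg_of_neg (f.deriv_right_neg _)
      (f.deriv_left_neg _)), mul_comm]
    exact f.deriv_mul_deriv_le _ _
  lipschitzWith := by
    have hslope : logSlope (f.right ∘ f.left) = (logSlope f.right ∘ f.left) + logSlope f.left :=
      funext fun x => logSlope_comp (f.deriv_left_neg x).ne (f.deriv_right_neg _).ne
    have hleft : LipschitzWith 1 f.left := lipschitzWith_of_nnnorm_deriv_le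
      (f.contDiff_left.differentiable one_ne_zero) fun x =>
        (f.logLipContraction_left.abs_deriv_le x).trans f.lt_one.le
    have hsum := (f.lipschitzWith_right.comp hleft).add f.lipschitzWith_left
    rw [mul_one, ← two_mul] at hsum
    rw [hslope]
    exact hsum

lemma abs_deriv_right_symm_le (y : ℝ) : |deriv f.right.symm y| ≤ θ := by
  rw [(f.hasDerivAt_right_symm y).deriv, abs_inv, abs_of_neg (f.deriv_right_neg _)]
  exact inv_le_of_inv_le₀ f.pos (by linarith [f.deriv_right_le (f.right.symm y)])

lemma logLipContraction_right_symm : LogLipContraction f.right.symm θ C where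
  lt_one := f.lt_one
  differentiable x := (f.hasDerivAt_right_symm x).differentiableAt
  surjective := f.right.symm.surjective
  deriv_ne_zero x := by
    rw [(f.hasDerivAt_right_symm x).deriv]
    exact inv_ne_zero (f.deriv_right_neg _).ne
  abs_deriv_le := f.abs_deriv_right_symm_le
  lipschitzWith := by
    have hslope : logSlope f.right.symm = -(logSlope f.right ∘ f.right.symm) :=
      funext fun y => logSlope_symm f.right (fun x => (f.deriv_right_neg x).ne) y
    have hsymm : LipschitzWith 1 f.right.symm := lipschitzWith_of_nnnorm_deriv_le
      (fun x => (f.hasDerivAt_right_symm x).differentiableAt) fun x =>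
        (f.abs_deriv_right_symm_le x).trans f.lt_one.le
    rw [hslope]
    simpa using (f.lipschitzWith_right.comp hsymm).neg

lemma dist_le_mul_dist_right (x y : ℝ) : dist x y ≤ θ * dist (f.right x) (f.right y) := by
  simpa using f.logLipContraction_right_symm.dist_le (f.right x) (f.right y)

lemma dist_right_le (x y : ℝ) : dist (f.right x) (f.right y) ≤ M * dist x y :=
  convex_univ.norm_image_sub_le_of_norm_deriv_le
    (fun z _ => (f.hasDerivAt_right z).differentiableAt)
    (fun z _ => by
      rw [Real.norm_eq_abs, abs_of_neg (f.deriv_right_neg z)]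
      exact neg_le.1 (f.le_deriv_right z)) (mem_univ y) (mem_univ x)

/-! ### Location of the fixed point and of the two-cycle -/

variable {f}

lemma fixedPt_left_mem_Icc (hν : ν ≤ 0) {x : ℝ} (hx : f.left x = x) : x ∈ Icc ν 0 := by
  have hx0 : x ≤ 0 := by
    by_contra! h
    linarith [f.strictAnti_left h, f.left_zero]
  exact ⟨by linarith [f.strictAnti_left.antitone hx0, f.left_zero], hx0⟩

lemma fixedPt_left_mem_Ioo (hν : ν < 0) {x : ℝ} (hx : f.left x = x) : x ∈ Ioo ν 0 := by
  have hx0 : x < 0 := (fixedPt_left_mem_Icc hν.le hx).2.lt_of_ne (by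
    rintro rfl
    exact hν.ne (f.left_zero.symm.trans hx))
  exact ⟨by linarith [f.strictAnti_left hx0, f.left_zero], hx0⟩

lemma fixedPt_right_mem_Ioo (hν : 0 < ν) {x : ℝ} (hx : f.right x = x) : x ∈ Ioo 0 ν := by
  have hx0 : 0 < x := by
    by_contra! h
    linarith [f.strictAnti_right.antitone h, f.right_zero]
  exact ⟨hx0, by linarith [f.strictAnti_right hx0, f.right_zero]⟩

lemma right_map_neg (hν : 0 < ν) : f.right ν < 0 := by
  have hdist := f.dist_le_mul_dist_right ν 0
  rw [f.right_zero, Real.dist_eq, Real.dist_eq, sub_zero, abs_of_pos hν] at hdist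
  by_contra! h
  have hlt : |f.right ν - ν| ≤ ν := by
    rw [abs_le]
    constructor <;> linarith [f.strictAnti_right hν, f.right_zero]
  nlinarith [f.lt_one, f.pos]

lemma twoCycle_left_neg (hν : 0 < ν) {u : ℝ} (hu : f.right (f.left u) = u) : u < 0 := by
  have hdist := f.logLipContraction_comp.dist_le u 0
  rw [comp_apply, comp_apply, hu, f.left_zero, Real.dist_eq, Real.dist_eq, sub_zero] at hdist
  by_contra! h
  rw [abs_of_nonneg h, abs_of_pos (by linarith [f.right_map_neg hν])] at hdist
  nlinarith [f.lt_one, f.right_map_neg hν]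

lemma lt_left_of_twoCycle (hν : 0 < ν) {u : ℝ} (hu : f.right (f.left u) = u) : ν < f.left u := by
  simpa only [f.left_zero] using f.strictAnti_left (f.twoCycle_left_neg hν hu)

lemma twoCycle_lt_right (hν : 0 < ν) {u : ℝ} (hu : f.right (f.left u) = u) : u < f.right ν :=
  hu.symm.trans_lt (f.strictAnti_right (f.lt_left_of_twoCycle hν hu))

lemma abs_twoCycle_mul_le (hν : 0 < ν) {u : ℝ} (hu : f.right (f.left u) = u) :
    |u| * (1 - θ) ≤ M * ν := by
  have hcontr := f.logLipContraction_comp.dist_le u 0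
  have hexp := f.dist_right_le ν 0
  rw [comp_apply, comp_apply, hu, f.left_zero, Real.dist_eq, Real.dist_eq, sub_zero] at hcontr
  rw [f.right_zero, Real.dist_eq, Real.dist_eq, sub_zero, abs_of_pos hν] at hexp
  have htri := abs_sub_abs_le_abs_sub u (f.right ν)
  have hright := f.right_map_neg hν
  rw [abs_of_neg hright] at htri
  linarith [neg_abs_le (f.right ν - ν)]

end PDMap

/-! ### Conjugacy when `ν ≤ 0` -/

lemma deriv_mul_deriv_of_eqOn_comp {h₀ h₁ F G : ℝ → ℝ} {s : Set ℝ} {x : ℝ}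
    (hs : UniqueDiffWithinAt ℝ s x) (hx : x ∈ s) (hconj : EqOn (h₁ ∘ F) (G ∘ h₀) s)
    (hh₀ : IncDiffeoAt h₀ x) (hh₁ : IncDiffeoAt h₁ (F x)) (hF : DifferentiableAt ℝ F x)
    (hG : DifferentiableAt ℝ G (h₀ x)) :
    deriv h₁ (F x) * deriv F x = deriv G (h₀ x) * deriv h₀ x :=
  hs.eq_deriv s (hh₁.hasDerivAt.comp x hF.hasDerivAt).hasDerivWithinAt <|
    (hG.hasDerivAt.comp x hh₀.hasDerivAt).hasDerivWithinAt.congr hconj (hconj hx)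

namespace PDMap

variable {ν θ M : ℝ} {C : ℝ≥0} {f g : PDMap ν θ M C}

-- The second return map is a contraction; `h₁` is `h₀` transported by one step along the left
-- branches.
lemma exists_branch_conj {p q : ℝ} (hp : f.right (f.left p) = p) (hq : g.right (g.left q) = q)
    (hmul : deriv f.left p * deriv f.right (f.left p) = deriv g.left q * deriv g.right (g.left q))
    (hsign : SignType.sign (0 - p) = SignType.sign (0 - q)) :
    ∃ h₀ h₁ : ℝ → ℝ, (∀ x, IncDiffeoAt h₀ x) ∧ (∀ x, IncDiffeoAt h₁ x) ∧
      Surjective h₀ ∧ Surjective h₁ ∧ (∀ x, h₁ (f.left x) = g.left (h₀ x)) ∧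
      (∀ x, h₀ (f.right x) = g.right (h₁ x)) ∧ h₀ 0 = 0 ∧ h₀ p = q ∧ (0 = p → deriv h₀ p = 1) := by
  obtain ⟨h₀, hh₀, hsurj, hconj, hpq, h0, hone⟩ :=
    f.logLipContraction_comp.exists_semiconj g.logLipContraction_comp hp hq
      (by rw [deriv_comp_eq, deriv_comp_eq, mul_comm, hmul, mul_comm]) hsign
  refine ⟨h₀, g.left ∘ h₀ ∘ f.left.symm, hh₀, fun x => ?_, hsurj,
    g.left.surjective.comp (hsurj.comp f.left.symm.surjective), fun x => by simp, fun x => ?_,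
    h0, hpq, hone⟩
  · exact (KinkedHomeo.incDiffeoAt_right_pullback (f := f.toKinkedHomeo.symm f.map_zero)
      (g := g.toKinkedHomeo.symm g.map_zero) (hh₀ _)).1
  · simpa using hconj (f.left.symm x)

lemma exists_conj_of_eq_zero {f g : PDMap 0 θ M C}
    (hfg : SameKinkRatio f.toKinkedHomeo g.toKinkedHomeo)
    (hmul : deriv f.left 0 = deriv g.left 0) :
    ∃ h : ℝ → ℝ, (∀ x, IncDiffeoAt h x) ∧ h 0 = 0 ∧ (∀ x, h (f x) = g (h x)) ∧ deriv h 0 = 1 := by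
  have hright : deriv g.right 0 = deriv f.right 0 := by
    refine mul_left_cancel₀ (f.deriv_left_neg 0).ne ?_
    rw [hfg, hmul, mul_comm]
  obtain ⟨h₀, h₁, hh₀, hh₁, -, -, hL, hR, h0, -, hone⟩ :=
    exists_branch_conj (f := f) (g := g) (p := 0) (q := 0) (by rw [f.left_zero, f.right_zero])
      (by rw [g.left_zero, g.right_zero]) (by rw [f.left_zero, g.left_zero, hmul, hright]) rfl
  have h10 : h₁ 0 = 0 := by simpa only [f.left_zero, h0, g.left_zero] using hL 0
  have hslope : deriv h₀ 0 = deriv h₁ 0 := by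
    have := deriv_mul_deriv_of_eqOn_comp uniqueDiffWithinAt_univ (mem_univ 0)
      (fun x _ => hL x) (hh₀ 0) (hh₁ _) (f.hasDerivAt_left 0).differentiableAt
      (g.hasDerivAt_left _).differentiableAt
    rw [f.left_zero, h0, hmul, mul_comm] at this
    exact (mul_left_cancel₀ (g.deriv_left_neg 0).ne this).symm
  let h : ℝ → ℝ := fun x => if x ≤ 0 then h₀ x else h₁ x
  have hleft : ∀ {x}, x ≤ 0 → h x = h₀ x := fun hx => if_pos hx
  have hright : ∀ {x}, 0 ≤ x → h x = h₁ x := fun {x} hx => by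
    rcases hx.eq_or_lt with rfl | hx
    · rw [hleft le_rfl, h0, h10]
    · exact if_neg hx.not_ge
  have hh : ∀ x, IncDiffeoAt h x := fun x => by
    rcases lt_trichotomy x 0 with hx | rfl | hx
    · exact (hh₀ x).congr_of_eventuallyEq <| by
        filter_upwards [Iio_mem_nhds hx] with y hy using hleft (le_of_lt hy)
    · exact .of_left_of_right (hh₀ 0) (hh₁ 0) hslope (.of_forall fun _ => hleft)
        (.of_forall fun _ => hright)
    · exact (hh₁ x).congr_of_eventuallyEq <| by
        filter_upwards [Ioi_mem_nhds hx] with y hy using hright (le_of_lt hy)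
  refine ⟨h, hh, (hleft le_rfl).trans h0, fun x => ?_, ?_⟩
  · rcases le_total x 0 with hx | hx
    · have hfx : 0 ≤ f.left x := by simpa only [f.left_zero] using f.strictAnti_left.antitone hx
      have hhx : h₀ x ≤ 0 := h0 ▸ (strictMono_of_incDiffeoAt hh₀).monotone hx
      rw [f.apply_of_le hx, hleft hx, g.apply_of_le hhx, hright hfx, hL]
    · have hfx : f.right x ≤ 0 := by simpa only [f.right_zero] using f.strictAnti_right.antitone hx
      have hhx : 0 ≤ h₁ x := h10 ▸ (strictMono_of_incDiffeoAt hh₁).monotone hx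
      rw [f.apply_of_ge hx, hright hx, g.apply_of_ge hhx, hleft hfx, hR]
  · rw [← hone rfl]
    exact (hasDerivAt_of_left_of_right (hh₀ 0).hasDerivAt (hslope ▸ (hh₁ 0).hasDerivAt)
      (.of_forall fun _ => hleft) (.of_forall fun _ => hright)).deriv

lemma left_map_neg (hν : ν < 0) : f.left ν < 0 := by
  have := (abs_le.1 (f.logLipContraction_left.dist_le ν 0)).2
  rw [f.left_zero, Real.dist_eq, sub_zero, abs_of_neg hν] at this
  nlinarith [f.lt_one]

lemma mapsTo_iterate_two_Iic (hν : ν ≤ 0) : MapsTo f^[2] (Iic 0) (Iic 0) := fun x hx => by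
  have hfx : ν ≤ f x := by simpa only [f.map_zero] using f.strictAnti.antitone hx
  have hfν : f ν ≤ 0 := by
    rw [f.apply_of_le hν]
    rcases hν.eq_or_lt with rfl | hν
    · exact f.left_zero.le
    · exact (left_map_neg hν).le
  exact (f.strictAnti.antitone hfx).trans hfν

-- If `f x > 0`, then `x < z < xs` for the zero `z` of the left branch: the second iterate contracts
-- `[x, z]` along right ∘ left and `[z, xs]` along left ∘ left.
lemma dist_iterate_two_le (hν : ν ≤ 0) {xs : ℝ} (hxs : f.left xs = xs) {x : ℝ} (hx : x ≤ 0) :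
    dist (f^[2] x) xs ≤ θ * dist x xs := by
  have hcontr (y : ℝ) : dist (f.left y) xs ≤ θ * dist y xs := by
    simpa only [hxs] using f.logLipContraction_left.dist_le y xs
  have hcontr₂ (y : ℝ) : dist (f.left (f.left y)) xs ≤ θ * dist y xs :=
    (hcontr _).trans (mul_le_mul_of_nonneg_left
      ((hcontr y).trans (mul_le_of_le_one_left dist_nonneg f.lt_one.le)) f.pos.le)
  rw [iterate_succ_apply, iterate_one, f.apply_of_le hx]
  rcases le_total (f.left x) 0 with hfx | hfx
  · rw [f.apply_of_le hfx]
    exact hcontr₂ x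
  · set z := f.left.symm 0
    have hz : f.left z = 0 := f.left.apply_symm_apply 0
    have hxz : x ≤ z := f.strictAnti_left.le_iff_ge.1 (hz.trans_le hfx)
    have hzxs : z ≤ xs := f.strictAnti_left.le_iff_ge.1 <| by
      rw [hz, hxs]; exact (fixedPt_left_mem_Icc hν hxs).2
    have hleft_right : f.left (f.left z) = f.right (f.left z) := by
      rw [hz, f.left_zero, f.right_zero]
    calc dist (f (f.left x)) xs
        ≤ dist (f.right (f.left x)) (f.right (f.left z)) + dist (f.left (f.left z)) xs := by
          rw [f.apply_of_ge hfx, hleft_right]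
          exact dist_triangle _ _ _
      _ ≤ θ * dist x z + θ * dist z xs :=
          add_le_add (f.logLipContraction_comp.dist_le x z) (hcontr₂ z)
      _ = θ * dist x xs := by
          rw [Real.dist_eq, Real.dist_eq, Real.dist_eq, abs_of_nonpos (by linarith),
            abs_of_nonpos (by linarith), abs_of_nonpos (by linarith)]
          ring

lemma left_symm_zero_lt (hν : ν < 0) : f.left.symm 0 < ν :=
  f.strictAnti_left.lt_iff_gt.1 <| by
    rw [f.left.apply_symm_apply]; exact left_map_neg hν

lemma mapsTo_Ioo_left_symm_zero (hν : ν < 0) :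
    MapsTo f (Ioo (f.left.symm 0) 0) (Ioo (f.left.symm 0) 0) := fun x hx => by
  rw [f.apply_of_le hx.2.le]
  refine ⟨(left_symm_zero_lt hν).trans ?_, ?_⟩
  · simpa only [f.left_zero] using f.strictAnti_left hx.2
  · simpa only [f.left.apply_symm_apply] using f.strictAnti_left hx.1

lemma orbitPreimage_Ioo_eq_univ (hν : ν < 0) {xs : ℝ} (hxs : f.left xs = xs) :
    orbitPreimage f (Ioo (f.left.symm 0) 0) = univ := by
  have hmem := fixedPt_left_mem_Ioo hν hxs
  have hneg : ∀ x ≤ 0, x ∈ orbitPreimage f (Ioo (f.left.symm 0) 0) := fun x hx => by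
    have hlim := tendsto_iterate_of_mapsTo f.pos.le f.lt_one (mapsTo_iterate_two_Iic hν.le)
      (fun y hy => dist_iterate_two_le hν.le hxs hy) hx
    obtain ⟨n, hn⟩ := (hlim.eventually
      (Ioo_mem_nhds ((left_symm_zero_lt hν).trans hmem.1) hmem.2)).exists
    exact ⟨2 * n, by rwa [iterate_mul]⟩
  refine eq_univ_of_forall fun x => ?_
  rcases le_total x 0 with hx | hx
  · exact hneg x hx
  · obtain ⟨n, hn⟩ := hneg (f x) <| by
      have : f x ≤ ν := by simpa only [f.map_zero] using f.strictAnti.antitone hx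
      exact this.trans hν.le
    exact ⟨n + 1, hn⟩

lemma exists_conj_of_neg (hν : ν < 0) (hfg : SameKinkRatio f.toKinkedHomeo g.toKinkedHomeo)
    {xs ys : ℝ} (hxs : f.left xs = xs) (hys : g.left ys = ys)
    (hmul : deriv f.left xs = deriv g.left ys) :
    ∃ h : ℝ → ℝ, (∀ x, IncDiffeoAt h x) ∧ h 0 = 0 ∧ h xs = ys ∧ ∀ x, h (f x) = g (h x) := by
  have hxs0 := fixedPt_left_mem_Ioo hν hxs
  have hys0 := fixedPt_left_mem_Ioo hν hys
  obtain ⟨h₀, hh₀, -, hconj, hxys, h0, -⟩ :=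
    f.logLipContraction_left.exists_semiconj g.logLipContraction_left hxs hys hmul
      (a := 0) (b := 0) (by rw [sign_pos (by linarith [hxs0.2]), sign_pos (by linarith [hys0.2])])
  have hmono := strictMono_of_incDiffeoAt hh₀
  have hνν : h₀ ν = ν := by simpa only [f.left_zero, h0, g.left_zero] using hconj 0
  obtain ⟨h, heq, hhconj, hh, -, hzero, -⟩ := KinkedHomeo.exists_conj_extension hfg
    (W := Ioo (f.left.symm 0) 0) (h₀ := h₀) (n := 1) isOpen_Ioo (mapsTo_Ioo_left_symm_zero hν)
    (fun x hx => by
      rw [f.apply_of_le hx.2.le, g.apply_of_le (h0 ▸ hmono.monotone hx.2.le)]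
      exact hconj x)
    (fun x _ => hh₀ x) (hmono.strictMonoOn _)
    (by rw [iterate_one, f.map_zero]; exact ⟨left_symm_zero_lt hν, hν⟩)
    (by rw [iterate_one, iterate_one, f.map_zero, g.map_zero, hνν])
  rw [orbitPreimage_Ioo_eq_univ hν hxs] at hhconj hh
  exact ⟨h, fun x => hh x trivial, hzero,
    (heq ⟨(left_symm_zero_lt hν).trans hxs0.1, hxs0.2⟩).trans hxys, fun x => hhconj x trivial⟩

end PDMap

/-! ### Conjugacies when `0 < ν` -/

namespace PDMap

variable {ν θ M : ℝ} {C : ℝ≥0} {f g : PDMap ν θ M C}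

lemma map_fixedPt_right (hν : 0 < ν) {x : ℝ} (hx : f.right x = x) : f x = x :=
  (f.apply_of_ge (fixedPt_right_mem_Ioo hν hx).1.le).trans hx

lemma map_twoCycle_left (hν : 0 < ν) {u : ℝ} (hu : f.right (f.left u) = u) : f u = f.left u :=
  f.apply_of_le (twoCycle_left_neg hν hu).le

lemma map_twoCycle_right (hν : 0 < ν) {u : ℝ} (hu : f.right (f.left u) = u) :
    f (f.left u) = u :=
  (f.apply_of_ge (hν.trans (lt_left_of_twoCycle hν hu)).le).trans hu

-- While an orbit stays in `[0, ν]`, its distance to the fixed point grows by `θ⁻¹` at every step.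
lemma orbitPreimage_Iio_union_Ioi (hν : 0 < ν) {xR : ℝ} (hxR : f.right xR = xR) :
    orbitPreimage f (Iio 0 ∪ Ioi ν) = {xR}ᶜ := by
  obtain ⟨hpos, hlt⟩ := fixedPt_right_mem_Ioo hν hxR
  ext x
  constructor
  · rintro ⟨n, hn⟩ rfl
    rw [iterate_fixed (map_fixedPt_right hν hxR)] at hn
    exact hn.elim (lt_asymm hpos) (lt_asymm hlt)
  · intro hne
    by_contra hstay
    have hmem : ∀ n, f^[n] x ∈ Icc 0 ν := fun n => by
      by_contra hn
      rw [← Ici_inter_Iic, ← mem_compl_iff, compl_inter, compl_Ici, compl_Iic] at hn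
      exact hstay ⟨n, hn⟩
    have hgrow : ∀ n, dist x xR ≤ θ ^ n * dist (f^[n] x) xR := fun n => by
      induction n with
      | zero => simp
      | succ n ih =>
        have hstep := f.dist_le_mul_dist_right (f^[n] x) xR
        rw [hxR, ← f.apply_of_ge (hmem n).1, ← iterate_succ_apply' f] at hstep
        refine ih.trans ?_
        rw [pow_succ, mul_assoc]
        exact mul_le_mul_of_nonneg_left hstep (pow_nonneg f.pos.le n)
    have hbound : ∀ n, dist x xR ≤ θ ^ n * ν := fun n =>
      (hgrow n).trans (mul_le_mul_of_nonneg_left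
        (abs_le.2 ⟨by linarith [(hmem n).1], by linarith [(hmem n).2]⟩) (pow_nonneg f.pos.le n))
    have hlim : Tendsto (fun n : ℕ => θ ^ n * ν) atTop (𝓝 0) := by
      simpa using (tendsto_pow_atTop_nhds_zero_of_lt_one f.pos.le f.lt_one).mul_const ν
    exact hne (dist_le_zero.1 (ge_of_tendsto' hlim hbound))

lemma lt_left_of_neg {x : ℝ} (hx : x < 0) : ν < f.left x := by
  simpa only [f.left_zero] using f.strictAnti_left hx

lemma right_neg_of_lt (hν : 0 < ν) {x : ℝ} (hx : ν < x) : f.right x < 0 :=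
  (f.strictAnti_right hx).trans (right_map_neg hν)

lemma mapsTo_Iio_union_Ioi (hν : 0 < ν) : MapsTo f (Iio 0 ∪ Ioi ν) (Iio 0 ∪ Ioi ν) := by
  rintro x (hx | hx)
  · exact .inr ((f.apply_of_le (le_of_lt hx)).symm ▸ lt_left_of_neg hx)
  · exact .inl ((f.apply_of_ge (hν.trans hx).le).symm ▸ right_neg_of_lt hν hx)

lemma exists_conj_Iio_union_Ioi (hν : 0 < ν) {h₀ h₁ : ℝ → ℝ} (hh₀ : ∀ x, IncDiffeoAt h₀ x)
    (hh₁ : ∀ x, IncDiffeoAt h₁ x) (hL : ∀ x, h₁ (f.left x) = g.left (h₀ x))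
    (hR : ∀ x, h₀ (f.right x) = g.right (h₁ x)) (h0 : h₀ 0 = 0) :
    ∃ h : ℝ → ℝ, EqOn h h₀ (Iio 0) ∧ EqOn h h₁ (Ioi ν) ∧
      (∀ x ∈ Iio 0 ∪ Ioi ν, h (f x) = g (h x)) ∧ (∀ x ∈ Iio 0 ∪ Ioi ν, IncDiffeoAt h x) ∧
      StrictMonoOn h (Iio 0 ∪ Ioi ν) := by
  have hνν : h₁ ν = ν := by simpa only [f.left_zero, h0, g.left_zero] using hL 0
  have hmono₀ := strictMono_of_incDiffeoAt hh₀
  have hmono₁ := strictMono_of_incDiffeoAt hh₁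
  have hneg : ∀ {x}, x < 0 → h₀ x < 0 := fun hx => h0 ▸ hmono₀ hx
  have hgt : ∀ {x}, ν < x → ν < h₁ x := fun hx => by simpa only [hνν] using hmono₁ hx
  let h : ℝ → ℝ := fun x => if x < 0 then h₀ x else h₁ x
  have hleft : EqOn h h₀ (Iio 0) := fun x hx => if_pos hx
  have hright : EqOn h h₁ (Ioi ν) := fun x hx => if_neg (hν.trans hx).not_gt
  refine ⟨h, hleft, hright, ?_, ?_, ?_⟩
  · rintro x (hx | hx)
    · rw [f.apply_of_le (le_of_lt hx), hright (lt_left_of_neg hx), hleft hx,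
        g.apply_of_le (hneg hx).le, hL]
    · rw [f.apply_of_ge (hν.trans hx).le, hleft (right_neg_of_lt hν hx), hright hx,
        g.apply_of_ge (hν.trans (hgt hx)).le, hR]
  · rintro x (hx | hx)
    · exact (hh₀ x).congr_of_eventuallyEq (hleft.eventuallyEq_of_mem (Iio_mem_nhds hx))
    · exact (hh₁ x).congr_of_eventuallyEq (hright.eventuallyEq_of_mem (Ioi_mem_nhds hx))
  · rintro x (hx | hx) y (hy | hy) hxy
    · rw [hleft hx, hleft hy]; exact hmono₀ hxy
    · rw [hleft hx, hright hy]; exact (hneg hx).trans (hν.trans (hgt hy))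
    · exact absurd (hν.trans (hx.trans (hxy.trans hy))) (lt_irrefl 0)
    · rw [hright hx, hright hy]; exact hmono₁ hxy

lemma exists_conj_compl_fixedPt (hν : 0 < ν)
    (hfg : SameKinkRatio f.toKinkedHomeo g.toKinkedHomeo) {u v xR yR : ℝ}
    (hu : f.right (f.left u) = u) (hv : g.right (g.left v) = v)
    (hmul : deriv f.left u * deriv f.right (f.left u) = deriv g.left v * deriv g.right (g.left v))
    (hxR : f.right xR = xR) (hyR : g.right yR = yR) :
    ∃ h₀ h : ℝ → ℝ, (∀ x, IncDiffeoAt h₀ x) ∧ h₀ 0 = 0 ∧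
      Semiconj h₀ (f.right ∘ f.left) (g.right ∘ g.left) ∧ EqOn h h₀ (Iio 0) ∧
      (∀ x ∈ ({xR}ᶜ : Set ℝ), h (f x) = g (h x)) ∧ (∀ x ∈ ({xR}ᶜ : Set ℝ), IncDiffeoAt h x) ∧
      StrictMonoOn h {xR}ᶜ ∧ h '' {xR}ᶜ = {yR}ᶜ := by
  obtain ⟨h₀, h₁, hh₀, hh₁, hs₀, hs₁, hL, hR, h0, -, -⟩ := exists_branch_conj hu hv hmul <| by
    rw [sign_pos (by linarith [twoCycle_left_neg hν hu]),
      sign_pos (by linarith [twoCycle_left_neg hν hv])]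
  obtain ⟨k, hk₀, hk₁, hkconj, hkinc, hkmono⟩ := exists_conj_Iio_union_Ioi hν hh₀ hh₁ hL hR h0
  have hνν : h₁ ν = ν := by simpa only [f.left_zero, h0, g.left_zero] using hL 0
  have hcomp : Semiconj h₀ (f.right ∘ f.left) (g.right ∘ g.left) := fun x => by
    simp only [comp_apply, hR, hL]
  have himage : k '' (Iio 0 ∪ Ioi ν) = Iio 0 ∪ Ioi ν := by
    have hIio := ((strictMono_of_incDiffeoAt hh₀).orderIsoOfSurjective h₀ hs₀).image_Iio 0
    have hIoi := ((strictMono_of_incDiffeoAt hh₁).orderIsoOfSurjective h₁ hs₁).image_Ioi ν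
    simp only [StrictMono.coe_orderIsoOfSurjective, h0, hνν] at hIio hIoi
    rw [image_union, hk₀.image_eq, hk₁.image_eq, hIio, hIoi]
  obtain ⟨h, heq, hconj, hinc, hmono, -, him⟩ := KinkedHomeo.exists_conj_extension hfg (n := 2)
    (isOpen_Iio.union isOpen_Ioi) (mapsTo_Iio_union_Ioi hν) hkconj hkinc hkmono
    (.inl (by simpa [f.map_zero, f.apply_of_ge hν.le] using right_map_neg hν))
    (by
      have hcomp0 : h₀ (f.right ν) = g.right ν := by rw [hR, hνν]
      simpa [f.map_zero, f.apply_of_ge hν.le, g.map_zero, g.apply_of_ge hν.le,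
        hk₀ (right_map_neg hν)] using hcomp0)
  rw [himage, orbitPreimage_Iio_union_Ioi hν hyR] at him
  rw [orbitPreimage_Iio_union_Ioi hν hxR] at hconj hinc hmono him
  exact ⟨h₀, h, hh₀, h0, hcomp, fun x hx => (heq (.inl hx)).trans (hk₀ hx), hconj, hinc, hmono, him⟩

/-- The inverse of a period-doubling map, with kink at `ν`. -/
def inverse (f : PDMap ν θ M C) : KinkedHomeo ν :=
  f.toKinkedHomeo.symm f.map_zero

lemma inverse_of_le {x : ℝ} (hx : x ≤ ν) : f.inverse x = f.right.symm x :=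
  f.inverse.apply_of_le hx

lemma map_inverse (x : ℝ) : f (f.inverse x) = x :=
  f.apply_symm_apply x

lemma inverse_eq_iff {x y : ℝ} : f.inverse x = y ↔ x = f y :=
  f.toHomeomorph.symm_apply_eq

lemma right_symm_mem_Ioo (hν : 0 < ν) {x : ℝ} (hx : x ∈ Ico 0 ν) : f.right.symm x ∈ Ioo 0 ν := by
  constructor
  · refine f.strictAnti_right.lt_iff_gt.1 ?_
    rw [f.right.apply_symm_apply, f.right_zero]
    exact hx.2
  · refine f.strictAnti_right.lt_iff_gt.1 ?_
    rw [f.right.apply_symm_apply]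
    exact (right_map_neg hν).trans_le hx.1

lemma mapsTo_inverse_Ioo (hν : 0 < ν) : MapsTo f.inverse (Ioo 0 ν) (Ioo 0 ν) := fun x hx => by
  rw [inverse_of_le hx.2.le]
  exact right_symm_mem_Ioo hν ⟨hx.1.le, hx.2⟩

lemma exists_conj_inverse (hν : 0 < ν) (hfg : SameKinkRatio f.toKinkedHomeo g.toKinkedHomeo)
    {xR yR : ℝ} (hxR : f.right xR = xR) (hyR : g.right yR = yR)
    (hmul : deriv f.right xR = deriv g.right yR) :
    ∃ h : ℝ → ℝ,
      (∀ x ∈ orbitPreimage f.inverse (Ioo 0 ν), h (f.inverse x) = g.inverse (h x)) ∧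
      (∀ x ∈ orbitPreimage f.inverse (Ioo 0 ν), IncDiffeoAt h x) ∧
      StrictMonoOn h (orbitPreimage f.inverse (Ioo 0 ν)) ∧
      h '' orbitPreimage f.inverse (Ioo 0 ν) = orbitPreimage g.inverse (Ioo 0 ν) := by
  have hxR' : f.right.symm xR = xR := by rw [f.right.symm_apply_eq, hxR]
  have hyR' : g.right.symm yR = yR := by rw [g.right.symm_apply_eq, hyR]
  obtain ⟨h₀, hh₀, hsurj, hconj, -, h0, -⟩ :=
    f.logLipContraction_right_symm.exists_semiconj g.logLipContraction_right_symm hxR' hyR'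
      (a := 0) (b := 0)
      (by rw [(f.hasDerivAt_right_symm _).deriv, (g.hasDerivAt_right_symm _).deriv, hxR', hyR',
        hmul])
      (by rw [sign_neg (by linarith [(fixedPt_right_mem_Ioo hν hxR).1]),
        sign_neg (by linarith [(fixedPt_right_mem_Ioo hν hyR).1])])
  have hmono := strictMono_of_incDiffeoAt hh₀
  have hf0 : f.right.symm ν = 0 := by rw [f.right.symm_apply_eq, f.right_zero]
  have hg0 : g.right.symm ν = 0 := by rw [g.right.symm_apply_eq, g.right_zero]
  have hνν : h₀ ν = ν := g.right.symm.injective (by rw [← hconj ν, hf0, hg0, h0])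
  have himage : h₀ '' Ioo 0 ν = Ioo 0 ν := by
    have := (hmono.orderIsoOfSurjective h₀ hsurj).image_Ioo 0 ν
    simpa only [StrictMono.coe_orderIsoOfSurjective, h0, hνν] using this
  have htwice (f : PDMap ν θ M C) : f.inverse^[2] ν = f.right.symm 0 := by
    rw [iterate_succ_apply, iterate_one, inverse_eq_iff.2 f.map_zero.symm, inverse_of_le hν.le]
  obtain ⟨h, -, hhconj, hinc, hhmono, -, him⟩ := KinkedHomeo.exists_conj_extension
    (KinkedHomeo.sameKinkRatio_symm hfg f.map_zero g.map_zero) (h₀ := h₀) (n := 2)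
    isOpen_Ioo (mapsTo_inverse_Ioo hν)
    (fun x hx => by
      have hle : h₀ x ≤ ν := hνν ▸ hmono.monotone hx.2.le
      exact (congrArg h₀ (inverse_of_le hx.2.le)).trans
        ((hconj x).trans (inverse_of_le hle).symm))
    (fun x _ => hh₀ x) (hmono.strictMonoOn _)
    (by rw [← inverse, htwice]; exact right_symm_mem_Ioo hν ⟨le_rfl, hν⟩)
    (by rw [← inverse, ← inverse, htwice, htwice, hconj 0, h0])
  rw [himage] at him
  exact ⟨h, hhconj, hinc, hhmono, him⟩

end PDMap

/-! ### Distortion estimates -/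

-- Summing the increments of `l` along the orbit of `x` gives a geometric series.
lemma dist_le_of_dist_map_le {X Y Z : Type*} [PseudoMetricSpace X] [PseudoMetricSpace Y]
    [PseudoMetricSpace Z] {F : X → X} {h : X → Y} {l : X → Z} {S : Set X} {p : X} {q : Y}
    {θ D : ℝ} (hθ : 0 ≤ θ) (hθ1 : θ < 1) (hD : 0 ≤ D) (hS : MapsTo F S S)
    (hF : ∀ x ∈ S, dist (F x) p ≤ θ * dist x p)
    (hh : ∀ x ∈ S, dist (h (F x)) q ≤ θ * dist (h x) q)
    (hl : ∀ x ∈ S, dist (l x) (l (F x)) ≤ D * (dist x p + dist (h x) q))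
    (hc : ContinuousAt l p) {x : X} (hx : x ∈ S) :
    dist (l x) (l p) ≤ D / (1 - θ) * (dist x p + dist (h x) q) := by
  have hθ' : 0 < 1 - θ := sub_pos.2 hθ1
  have hiter (n : ℕ) : ∀ x ∈ S,
      dist (l x) (l (F^[n] x)) ≤ D / (1 - θ) * (dist x p + dist (h x) q) := by
    induction n with
    | zero => intro x _; simp only [iterate_zero, id_eq, dist_self]; positivity
    | succ n ih =>
      intro x hx
      calc dist (l x) (l (F^[n] (F x)))
          ≤ dist (l x) (l (F x)) + dist (l (F x)) (l (F^[n] (F x))) := dist_triangle _ _ _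
        _ ≤ D * (dist x p + dist (h x) q) +
            D / (1 - θ) * (dist (F x) p + dist (h (F x)) q) :=
          add_le_add (hl x hx) (ih (F x) (hS hx))
        _ ≤ D * (dist x p + dist (h x) q) +
            D / (1 - θ) * (θ * dist x p + θ * dist (h x) q) := by
          gcongr
          exacts [hF x hx, hh x hx]
        _ = D / (1 - θ) * (dist x p + dist (h x) q) := by field_simp; ring
  exact le_of_tendsto
    (tendsto_const_nhds.dist (hc.tendsto.comp (tendsto_iterate_of_mapsTo hθ hθ1 hS hF hx)))
    (.of_forall fun n => hiter n x hx)

lemma continuous_logSlope {h : ℝ → ℝ} (hh : ∀ x, IncDiffeoAt h x) : Continuous (logSlope h) :=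
  (contDiff_of_incDiffeoAt hh).continuous_deriv_one.log fun x => (hh x).2.ne'

lemma logSlope_sub_logSlope_of_eqOn_comp {h F G : ℝ → ℝ} {s : Set ℝ} {x : ℝ}
    (hs : UniqueDiffWithinAt ℝ s x) (hx : x ∈ s) (hconj : EqOn (h ∘ F) (G ∘ h) s)
    (hh : ∀ x, IncDiffeoAt h x) (hF : deriv F x ≠ 0) (hG : deriv G (h x) ≠ 0) :
    logSlope h x - logSlope h (F x) = logSlope F x - logSlope G (h x) := by
  have hlog := congrArg Real.log <| deriv_mul_deriv_of_eqOn_comp hs hx hconj (hh x) (hh (F x))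
    (differentiableAt_of_deriv_ne_zero hF) (differentiableAt_of_deriv_ne_zero hG)
  rw [Real.log_mul (hh _).2.ne' hF, Real.log_mul hG (hh _).2.ne'] at hlog
  simp only [logSlope]
  linarith

lemma dist_logSlope_map_le {h F G : ℝ → ℝ} {s : Set ℝ} {x p q : ℝ} {C : ℝ≥0}
    (hs : UniqueDiffWithinAt ℝ s x) (hx : x ∈ s) (hconj : EqOn (h ∘ F) (G ∘ h) s)
    (hh : ∀ x, IncDiffeoAt h x) (hF : deriv F x ≠ 0) (hG : deriv G (h x) ≠ 0)
    (hFC : LipschitzWith C (logSlope F)) (hGC : LipschitzWith C (logSlope G))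
    (hpq : logSlope F p = logSlope G q) :
    dist (logSlope h x) (logSlope h (F x)) ≤ C * (dist x p + dist (h x) q) :=
  calc dist (logSlope h x) (logSlope h (F x))
      = dist (logSlope F x) (logSlope G (h x)) := by
        rw [Real.dist_eq, Real.dist_eq, logSlope_sub_logSlope_of_eqOn_comp hs hx hconj hh hF hG]
    _ ≤ dist (logSlope F x) (logSlope F p) + dist (logSlope G q) (logSlope G (h x)) :=
        hpq ▸ dist_triangle _ _ _
    _ ≤ C * (dist x p + dist (h x) q) := by
        rw [mul_add, dist_comm (h x) q]
        exact add_le_add (hFC.dist_le_mul x p) (hGC.dist_le_mul q (h x))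

lemma deriv_mem_Icc_exp_of_abs_logSlope_le {h : ℝ → ℝ} {x ε : ℝ} (hh : IncDiffeoAt h x)
    (hx : |logSlope h x| ≤ ε) : deriv h x ∈ Icc (Real.exp (-ε)) (Real.exp ε) :=
  ⟨(Real.le_log_iff_exp_le hh.2).1 (abs_le.1 hx).1, (Real.log_le_iff_le_exp hh.2).1 (abs_le.1 hx).2⟩

lemma exists_sub_eq_deriv_mul_sub {h : ℝ → ℝ} (hh : Differentiable ℝ h) {a b : ℝ} (hab : a < b) :
    ∃ ξ ∈ Ioo a b, h b - h a = deriv h ξ * (b - a) := by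
  obtain ⟨ξ, hξ, heq⟩ := exists_deriv_eq_slope h hab hh.continuous.continuousOn hh.differentiableOn
  exact ⟨ξ, hξ, by rw [heq, div_mul_cancel₀ _ (sub_pos.2 hab).ne']⟩

lemma sub_mem_Icc_exp_mul_of_abs_logSlope_le {h : ℝ → ℝ} (hh : ∀ x, IncDiffeoAt h x) {a b ε : ℝ}
    (hab : a < b) (hε : ∀ x ∈ Ioo a b, |logSlope h x| ≤ ε) :
    h b - h a ∈ Icc (Real.exp (-ε) * (b - a)) (Real.exp ε * (b - a)) := by
  obtain ⟨ξ, hξ, heq⟩ := exists_sub_eq_deriv_mul_sub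
    ((contDiff_of_incDiffeoAt hh).differentiable one_ne_zero) hab
  have hslope := deriv_mem_Icc_exp_of_abs_logSlope_le (hh ξ) (hε ξ hξ)
  have hab' := (sub_pos.2 hab).le
  rw [heq]
  exact ⟨mul_le_mul_of_nonneg_right hslope.1 hab', mul_le_mul_of_nonneg_right hslope.2 hab'⟩

-- Bootstrap: if `h` left `[-2P, 0]` before `x` reached `-P`, the a priori slope bound would hold up
-- to the exit point and bound the slope there by `exp ε < 2`.
lemma abs_le_of_abs_logSlope_le {h : ℝ → ℝ} (hh : ∀ x, IncDiffeoAt h x) (h0 : h 0 = 0) {P ε : ℝ}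
    (hP : 0 < P) (hε : ε < Real.log 2)
    (hslope : ∀ x ∈ Icc (-P) 0, |h x| ≤ 2 * P → |logSlope h x| ≤ ε) :
    ∀ x ∈ Icc (-P) 0, |h x| ≤ 2 * P := by
  have hmono := strictMono_of_incDiffeoAt hh
  suffices hexit : -(2 * P) ≤ h (-P) from fun x hx =>
    abs_le.2 ⟨hexit.trans (hmono.monotone hx.1), (hmono.monotone hx.2).trans (by linarith)⟩
  by_contra! hexit
  obtain ⟨y, hy, hyP⟩ := intermediate_value_Ioo (by linarith : -P ≤ 0)
    (contDiff_of_incDiffeoAt hh).continuous.continuousOn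
    (show -(2 * P) ∈ Ioo (h (-P)) (h 0) from ⟨hexit, by linarith⟩)
  have hincr := sub_mem_Icc_exp_mul_of_abs_logSlope_le hh hy.2 fun x hx =>
    hslope x ⟨by linarith [hy.1, hx.1], hx.2.le⟩ <|
      abs_le.2 ⟨hyP ▸ (hmono hx.1).le, (hmono hx.2).le.trans (by linarith)⟩
  have hexp : Real.exp ε < 2 := (Real.lt_log_iff_exp_lt two_pos).1 hε
  rw [h0, hyP] at hincr
  nlinarith [hincr.2, hy.1, hy.2]

lemma abs_logSlope_le_of_dist_le {h : ℝ → ℝ} (hh : ∀ x, IncDiffeoAt h x) (h0 : h 0 = 0)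
    {p q ξ D P : ℝ} (hP : 0 < P) (hD : 0 ≤ D) (hDP : 6 * D * P < Real.log 2)
    (hp : p ∈ Icc (-P) 0) (hq : q ∈ Icc (-P) 0) (hξ : ξ ∈ Icc (-P) 0) (hhξ : -P ≤ h ξ)
    (hnorm : |logSlope h ξ| ≤ D * P)
    (hdist : ∀ x ≤ 0, dist (logSlope h x) (logSlope h p) ≤ D * (dist x p + dist (h x) q)) :
    ∀ x ∈ Icc (-P) 0, |h x| ≤ 2 * P ∧ |logSlope h x| ≤ 6 * D * P := by
  have hmono := strictMono_of_incDiffeoAt hh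
  have hbound {x R : ℝ} (hx : x ∈ Icc (-P) 0) (hR : P ≤ R) (hhx : -R ≤ h x) :
      |logSlope h x - logSlope h p| ≤ D * (P + R) := by
    have hhx0 : h x ≤ 0 := h0 ▸ hmono.monotone hx.2
    have hxp : dist x p ≤ P := abs_le.2 ⟨by linarith [hx.1, hp.2], by linarith [hx.2, hp.1]⟩
    have hxq : dist (h x) q ≤ R := abs_le.2 ⟨by linarith [hq.2], by linarith [hq.1]⟩
    exact (hdist x hx.2).trans (by gcongr)
  have hslope : ∀ x ∈ Icc (-P) 0, |h x| ≤ 2 * P → |logSlope h x| ≤ 6 * D * P := fun x hx hhx => by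
    have hξp := hbound hξ le_rfl hhξ
    have hxp := hbound hx (by linarith) (abs_le.1 hhx).1
    rw [abs_le] at hξp hxp hnorm ⊢
    constructor <;> linarith [hξp.1, hξp.2, hxp.1, hxp.2, hnorm.1, hnorm.2]
  have habs := abs_le_of_abs_logSlope_le hh h0 hP hDP hslope
  exact fun x hx => ⟨habs x hx, hslope x hx (habs x hx)⟩

lemma abs_log_sub_one_sub_log_sub_one_le {θ a b : ℝ} (hθ : 0 < θ) (hθ1 : θ < 1) (ha : θ⁻¹ ≤ a)
    (hb : θ⁻¹ ≤ b) :
    |Real.log (b - 1) - Real.log (a - 1)| ≤ |Real.log b - Real.log a| / (1 - θ) := by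
  have hθ' : 0 < 1 - θ := sub_pos.2 hθ1
  have hexp {t : ℝ} (ht : Real.log θ⁻¹ ≤ t) : 1 ≤ θ * Real.exp t := by
    rwa [← inv_mul_le_iff₀ hθ, mul_one, ← Real.log_le_iff_le_exp (inv_pos.2 hθ)]
  have hpos {t : ℝ} (ht : Real.log θ⁻¹ ≤ t) : 0 < Real.exp t - 1 := by
    nlinarith [hexp ht, Real.exp_pos t]
  have hderiv : ∀ t ∈ Ici (Real.log θ⁻¹), HasDerivWithinAt (fun t => Real.log (Real.exp t - 1))
      (Real.exp t / (Real.exp t - 1)) (Ici (Real.log θ⁻¹)) t := fun t ht =>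
    (((Real.hasDerivAt_exp t).sub_const 1).log (hpos ht).ne').hasDerivWithinAt
  have hbound : ∀ t ∈ Ici (Real.log θ⁻¹), ‖Real.exp t / (Real.exp t - 1)‖ ≤ 1 / (1 - θ) :=
    fun t ht => by
      rw [Real.norm_of_nonneg (div_nonneg (Real.exp_pos t).le (hpos ht).le),
        div_le_div_iff₀ (hpos ht) hθ']
      linarith [hexp ht]
  have hmem {c : ℝ} (hc : θ⁻¹ ≤ c) : Real.log c ∈ Ici (Real.log θ⁻¹) :=
    Real.log_le_log (inv_pos.2 hθ) hc
  have hmvt := (convex_Ici _).norm_image_sub_le_of_norm_hasDerivWithin_le hderiv hbound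
    (hmem ha) (hmem hb)
  rwa [Real.exp_log ((inv_pos.2 hθ).trans_le ha), Real.exp_log ((inv_pos.2 hθ).trans_le hb),
    one_div_mul_eq_div] at hmvt

namespace PDMap

variable {ν θ M : ℝ} {C : ℝ≥0} {f g : PDMap ν θ M C}

/-! ### Slope of the conjugacy when `ν ≤ 0` -/

lemma logSlope_left_sub_logSlope_right (hfg : SameKinkRatio f.toKinkedHomeo g.toKinkedHomeo) :
    logSlope f.left 0 - logSlope g.left 0 = logSlope f.right 0 - logSlope g.right 0 := by
  have hlog := congrArg Real.log hfg
  rw [Real.log_mul (f.deriv_left_neg 0).ne (g.deriv_right_neg 0).ne,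
    Real.log_mul (f.deriv_right_neg 0).ne (g.deriv_left_neg 0).ne] at hlog
  simp only [logSlope]
  linarith

lemma dist_logSlope_right_le (hν : ν ≤ 0) (hfg : SameKinkRatio f.toKinkedHomeo g.toKinkedHomeo)
    {xs ys : ℝ} (hxs : f.left xs = xs) (hys : g.left ys = ys)
    (hmul : deriv f.left xs = deriv g.left ys) {x y : ℝ} (hx : 0 ≤ x) (hy : 0 ≤ y) :
    dist (logSlope f.right x) (logSlope g.right y) ≤ C * (dist x xs + dist y ys) := by
  have hxs0 := (fixedPt_left_mem_Icc hν hxs).2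
  have hys0 := (fixedPt_left_mem_Icc hν hys).2
  have hmul' : logSlope f.left xs = logSlope g.left ys := congrArg Real.log hmul
  have hsplit : logSlope f.right x - logSlope g.right y =
      (logSlope f.right x - logSlope f.right 0) + (logSlope f.left 0 - logSlope f.left xs) +
        ((logSlope g.left ys - logSlope g.left 0) + (logSlope g.right 0 - logSlope g.right y)) := by
    linarith [logSlope_left_sub_logSlope_right hfg]
  have hxdist : dist x 0 + dist 0 xs = dist x xs := by
    simp only [Real.dist_eq]
    rw [abs_of_nonneg (by linarith), abs_of_nonneg (by linarith), abs_of_nonneg (by linarith)]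
    ring
  have hydist : dist ys 0 + dist 0 y = dist y ys := by
    simp only [Real.dist_eq]
    rw [abs_of_nonpos (by linarith), abs_of_nonpos (by linarith), abs_of_nonneg (by linarith)]
    ring
  rw [Real.dist_eq, hsplit, ← hxdist, ← hydist, mul_add, mul_add, mul_add]
  refine (abs_add_le _ _).trans (add_le_add ((abs_add_le _ _).trans ?_) ((abs_add_le _ _).trans ?_))
  · exact add_le_add (f.lipschitzWith_right.dist_le_mul x 0) (f.lipschitzWith_left.dist_le_mul 0 xs)
  · exact add_le_add (g.lipschitzWith_left.dist_le_mul ys 0) (g.lipschitzWith_right.dist_le_mul 0 y)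

lemma dist_logSlope_conj_le (hν : ν ≤ 0) (hfg : SameKinkRatio f.toKinkedHomeo g.toKinkedHomeo)
    {xs ys : ℝ} (hxs : f.left xs = xs) (hys : g.left ys = ys)
    (hmul : deriv f.left xs = deriv g.left ys) {h : ℝ → ℝ} (hh : ∀ x, IncDiffeoAt h x)
    (h0 : h 0 = 0) (hconj : ∀ x, h (f x) = g (h x)) (x : ℝ) :
    dist (logSlope h x) (logSlope h (f x)) ≤ C * (dist x xs + dist (h x) ys) := by
  have hmono := (strictMono_of_incDiffeoAt hh).monotone
  rcases le_total x 0 with hx | hx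
  · have hleft : EqOn (h ∘ f.left) (g.left ∘ h) (Iic 0) := fun y hy => by
      simpa only [comp_apply, f.apply_of_le hy, g.apply_of_le (h0 ▸ hmono hy)] using hconj y
    rw [f.apply_of_le hx]
    exact dist_logSlope_map_le (uniqueDiffOn_Iic 0 x hx) hx hleft hh (f.deriv_left_neg x).ne
      (g.deriv_left_neg _).ne f.lipschitzWith_left g.lipschitzWith_left (congrArg Real.log hmul)
  · have hright : EqOn (h ∘ f.right) (g.right ∘ h) (Ici 0) := fun y hy => by
      simpa only [comp_apply, f.apply_of_ge hy, g.apply_of_ge (h0 ▸ hmono hy)] using hconj y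
    rw [f.apply_of_ge hx, Real.dist_eq, logSlope_sub_logSlope_of_eqOn_comp
      (uniqueDiffOn_Ici 0 x hx) hx hright hh (f.deriv_right_neg x).ne (g.deriv_right_neg _).ne]
    exact dist_logSlope_right_le hν hfg hxs hys hmul hx (h0 ▸ hmono hx)

lemma dist_left_fixedPt_le {xs : ℝ} (hxs : f.left xs = xs) (x : ℝ) :
    dist (f.left x) xs ≤ dist x xs := by
  have := f.logLipContraction_left.dist_le x xs
  rw [hxs] at this
  exact this.trans (mul_le_of_le_one_left dist_nonneg f.lt_one.le)

lemma dist_logSlope_conj_fixedPt_le (hν : ν ≤ 0)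
    (hfg : SameKinkRatio f.toKinkedHomeo g.toKinkedHomeo) {xs ys : ℝ} (hxs : f.left xs = xs)
    (hys : g.left ys = ys) (hmul : deriv f.left xs = deriv g.left ys) {h : ℝ → ℝ}
    (hh : ∀ x, IncDiffeoAt h x) (h0 : h 0 = 0) (hconj : ∀ x, h (f x) = g (h x)) {x : ℝ}
    (hx : x ≤ 0) : dist (logSlope h x) (logSlope h xs) ≤
      2 * C / (1 - θ) * (dist x xs + dist (h x) ys) := by
  have hneg : ∀ y ≤ 0, h y ≤ 0 := fun y hy => h0 ▸ (strictMono_of_incDiffeoAt hh).monotone hy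
  have hstep := dist_logSlope_conj_le hν hfg hxs hys hmul hh h0 hconj
  have hconj₂ (y : ℝ) : h (f^[2] y) = g^[2] (h y) :=
    (show Semiconj h f g from hconj).iterate_right 2 y
  refine dist_le_of_dist_map_le f.pos.le f.lt_one (by positivity) (mapsTo_iterate_two_Iic hν)
    (fun y hy => dist_iterate_two_le hν hxs hy)
    (fun y hy => hconj₂ y ▸ dist_iterate_two_le hν hys (hneg y hy))
    (fun y hy => ?_) (continuous_logSlope hh).continuousAt hx
  have hfy : dist (f y) xs ≤ dist y xs := f.apply_of_le hy ▸ dist_left_fixedPt_le hxs y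
  have hgy : dist (h (f y)) ys ≤ dist (h y) ys := by
    rw [hconj, g.apply_of_le (hneg y hy)]
    exact dist_left_fixedPt_le hys (h y)
  calc dist (logSlope h y) (logSlope h (f (f y)))
      ≤ dist (logSlope h y) (logSlope h (f y)) + dist (logSlope h (f y)) (logSlope h (f (f y))) :=
        dist_triangle _ _ _
    _ ≤ C * (dist y xs + dist (h y) ys) + C * (dist (f y) xs + dist (h (f y)) ys) :=
        add_le_add (hstep y) (hstep (f y))
    _ ≤ C * (dist y xs + dist (h y) ys) + C * (dist y xs + dist (h y) ys) := by gcongr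
    _ = 2 * C * (dist y xs + dist (h y) ys) := by ring

lemma conj_apply_map_zero {h : ℝ → ℝ} (h0 : h 0 = 0) (hconj : ∀ x, h (f x) = g (h x)) :
    h ν = ν := by
  simpa only [f.map_zero, h0, g.map_zero] using hconj 0

lemma abs_logSlope_conj_le (hν : ν ≤ 0) (hfg : SameKinkRatio f.toKinkedHomeo g.toKinkedHomeo)
    {xs ys : ℝ} (hxs : f.left xs = xs) (hys : g.left ys = ys)
    (hmul : deriv f.left xs = deriv g.left ys) {h : ℝ → ℝ} (hh : ∀ x, IncDiffeoAt h x)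
    (h0 : h 0 = 0) (hconj : ∀ x, h (f x) = g (h x)) (hone : ∃ ξ ∈ Icc ν 0, deriv h ξ = 1)
    {P : ℝ} (hP : 0 < P) (hνP : -ν ≤ P) (hCP : 12 * C / (1 - θ) * P < Real.log 2) :
    ∀ x ∈ Icc (-P) 0, |h x| ≤ 2 * P ∧ |logSlope h x| ≤ 12 * C / (1 - θ) * P := by
  obtain ⟨ξ, hξ, hξ1⟩ := hone
  have hIcc : Icc ν 0 ⊆ Icc (-P) 0 := Icc_subset_Icc_left (by linarith)
  have hD : 12 * C / (1 - θ) = 6 * (2 * C / (1 - θ)) := by ring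
  have hD0 : 0 ≤ 2 * C / (1 - θ) := div_nonneg (by positivity) (sub_pos.2 f.lt_one).le
  have hνξ : ν ≤ h ξ :=
    (conj_apply_map_zero h0 hconj).symm.trans_le ((strictMono_of_incDiffeoAt hh).monotone hξ.1)
  rw [hD] at hCP ⊢
  refine abs_logSlope_le_of_dist_le hh h0 hP hD0 hCP (hIcc (fixedPt_left_mem_Icc hν hxs))
    (hIcc (fixedPt_left_mem_Icc hν hys)) (hIcc hξ) (by linarith) ?_
    fun x hx => dist_logSlope_conj_fixedPt_le hν hfg hxs hys hmul hh h0 hconj hx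
  rw [logSlope, hξ1, Real.log_one, abs_zero]
  positivity

lemma map_mem_Icc_of_mem_Icc (hν : ν ≤ 0) {p P x : ℝ} (hpP : M * p - ν ≤ P) (hx : x ∈ Icc 0 p) :
    f x ∈ Icc (-P) 0 := by
  have hupper : f x ≤ ν := (f.strictAnti.antitone hx.1).trans_eq f.map_zero
  have hlower := f.dist_right_le x 0
  rw [f.right_zero, ← f.apply_of_ge hx.1, Real.dist_eq, Real.dist_eq, sub_zero, abs_of_nonneg hx.1]
    at hlower
  have hM : M * x ≤ M * p := mul_le_mul_of_nonneg_left hx.2 (zero_lt_one.trans f.one_lt).le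
  exact ⟨by linarith [(abs_le.1 hlower).1], hupper.trans hν⟩

lemma conj_pos_le (hν : ν ≤ 0) {h : ℝ → ℝ} (hh : ∀ x, IncDiffeoAt h x)
    (h0 : h 0 = 0) (hconj : ∀ x, h (f x) = g (h x)) {p P : ℝ} (hp : 0 ≤ p)
    (hhfp : |h (f p)| ≤ 2 * P) : h p ≤ 2 * P := by
  have hhp : 0 ≤ h p := h0 ▸ (strictMono_of_incDiffeoAt hh).monotone hp
  have hexpand := sub_le_neg_mul_sub_of_deriv_le (fun x => (g.hasDerivAt_right x).differentiableAt)
    g.deriv_right_le hhp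
  rw [hconj, g.apply_of_ge hhp] at hhfp
  rw [g.right_zero] at hexpand
  nlinarith [(abs_le.1 hhfp).1, g.one_lt_inv]

lemma conj_mem_Icc_exp_mul (hν : ν ≤ 0) (hfg : SameKinkRatio f.toKinkedHomeo g.toKinkedHomeo)
    {xs ys : ℝ} (hxs : f.left xs = xs) (hys : g.left ys = ys)
    (hmul : deriv f.left xs = deriv g.left ys) {h : ℝ → ℝ} (hh : ∀ x, IncDiffeoAt h x)
    (h0 : h 0 = 0) (hconj : ∀ x, h (f x) = g (h x)) {P p ε : ℝ} (hp : 0 < p) (hpP : p ≤ P)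
    (hνP : M * p - ν ≤ P)
    (hbound : ∀ x ∈ Icc (-P) 0, |h x| ≤ 2 * P ∧ |logSlope h x| ≤ ε) :
    h p ∈ Icc (Real.exp (-(ε + 5 * C * P)) * p) (Real.exp (ε + 5 * C * P) * p) := by
  have hmono := strictMono_of_incDiffeoAt hh
  have hmap : ∀ x ∈ Icc 0 p, f x ∈ Icc (-P) 0 := fun x => map_mem_Icc_of_mem_Icc hν hνP
  have hhp : h p ≤ 2 * P := conj_pos_le hν hh h0 hconj hp.le (hbound _ (hmap p ⟨hp.le, le_rfl⟩)).1
  have hνP' : -ν ≤ P := by nlinarith [f.one_lt]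
  have hxs0 := fixedPt_left_mem_Icc hν hxs
  have hys0 := fixedPt_left_mem_Icc hν hys
  suffices hslope : ∀ x ∈ Ioo 0 p, |logSlope h x| ≤ ε + 5 * C * P by
    simpa only [h0, sub_zero] using sub_mem_Icc_exp_mul_of_abs_logSlope_le hh hp hslope
  intro x hx
  have hfx := (hbound _ (hmap x (Ioo_subset_Icc_self hx))).2
  have hhx : 0 < h x := h0 ▸ hmono hx.1
  have hdist : dist x xs + dist (h x) ys ≤ 5 * P := by
    rw [Real.dist_eq, Real.dist_eq, abs_of_nonneg (by linarith [hx.1, hxs0.2]),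
      abs_of_nonneg (by linarith [hys0.2])]
    linarith [hx.2, hmono hx.2, hxs0.1, hys0.1]
  have hstep := (dist_logSlope_conj_le hν hfg hxs hys hmul hh h0 hconj x).trans
    (mul_le_mul_of_nonneg_left hdist C.coe_nonneg)
  rw [Real.dist_eq] at hstep
  linarith [abs_sub_abs_le_abs_sub (logSlope h x) (logSlope h (f x))]

/-! ### Slope of the conjugacy when `0 < ν` -/

lemma dist_logSlope_conj_twoCycle_le {u v : ℝ} (hu : f.right (f.left u) = u)
    (hv : g.right (g.left v) = v)
    (hmul : deriv f.left u * deriv f.right (f.left u) = deriv g.left v * deriv g.right (g.left v))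
    {h : ℝ → ℝ} (hh : ∀ x, IncDiffeoAt h x)
    (hconj : Semiconj h (f.right ∘ f.left) (g.right ∘ g.left)) (x : ℝ) :
    dist (logSlope h x) (logSlope h u) ≤ 2 * C / (1 - θ) * (dist x u + dist (h x) v) := by
  have hF := f.logLipContraction_comp
  have hG := g.logLipContraction_comp
  have hmul' : logSlope (f.right ∘ f.left) u = logSlope (g.right ∘ g.left) v := by
    rw [logSlope, logSlope, deriv_comp_eq, deriv_comp_eq, mul_comm, hmul, mul_comm]
  refine dist_le_of_dist_map_le (F := f.right ∘ f.left) f.pos.le f.lt_one (by positivity)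
    (mapsTo_univ _ _) (fun y _ => ?_) (fun y _ => ?_) (fun y _ => ?_)
    (continuous_logSlope hh).continuousAt (mem_univ x)
  · simpa only [comp_apply, hu] using hF.dist_le y u
  · rw [hconj y]
    simpa only [comp_apply, hv] using hG.dist_le (h y) v
  · simpa using dist_logSlope_map_le (F := f.right ∘ f.left) (G := g.right ∘ g.left)
      uniqueDiffWithinAt_univ (mem_univ y) (fun z _ => hconj z) hh (hF.deriv_ne_zero y)
      (hG.deriv_ne_zero (h y)) hF.lipschitzWith hG.lipschitzWith hmul'

lemma exists_right_map_eq (hν : 0 < ν) :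
    ∃ η ∈ Ioo 0 ν, -f.right ν = (-deriv f.right η - 1) * ν := by
  obtain ⟨η, hη, heq⟩ := exists_sub_eq_deriv_mul_sub
    (fun x => (f.hasDerivAt_right x).differentiableAt) hν
  rw [f.right_zero, sub_zero] at heq
  exact ⟨η, hη, by linarith⟩

lemma dist_logSlope_right_le_of_pos (hν : 0 < ν) {xR yR : ℝ} (hxR : f.right xR = xR)
    (hyR : g.right yR = yR) (hmul : deriv f.right xR = deriv g.right yR) {x y : ℝ}
    (hx : x ∈ Ioo 0 ν) (hy : y ∈ Ioo 0 ν) :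
    dist (logSlope g.right y) (logSlope f.right x) ≤ 2 * C * ν := by
  have hxR0 := fixedPt_right_mem_Ioo hν hxR
  have hyR0 := fixedPt_right_mem_Ioo hν hyR
  have hmul' : logSlope f.right xR = logSlope g.right yR := congrArg Real.log hmul
  calc dist (logSlope g.right y) (logSlope f.right x)
      ≤ dist (logSlope g.right y) (logSlope g.right yR) +
          dist (logSlope f.right xR) (logSlope f.right x) := hmul' ▸ dist_triangle _ _ _
    _ ≤ C * dist y yR + C * dist xR x :=
        add_le_add (g.lipschitzWith_right.dist_le_mul _ _) (f.lipschitzWith_right.dist_le_mul _ _)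
    _ ≤ C * (ν - 0) + C * (ν - 0) := by
        gcongr
        · exact Real.dist_le_of_mem_Icc (Ioo_subset_Icc_self hy) (Ioo_subset_Icc_self hyR0)
        · exact Real.dist_le_of_mem_Icc (Ioo_subset_Icc_self hxR0) (Ioo_subset_Icc_self hx)
    _ = 2 * C * ν := by ring

-- `h` maps `[f.right ν, 0]` onto `[g.right ν, 0]`, and the lengths of these intervals are
-- comparable because the right branches have equal multipliers at their fixed points.
lemma exists_abs_logSlope_conj_le (hν : 0 < ν) {xR yR : ℝ} (hxR : f.right xR = xR)
    (hyR : g.right yR = yR) (hmul : deriv f.right xR = deriv g.right yR)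
    {h : ℝ → ℝ} (hh : ∀ x, IncDiffeoAt h x) (h0 : h 0 = 0)
    (hconj : Semiconj h (f.right ∘ f.left) (g.right ∘ g.left)) :
    ∃ ξ ∈ Ioo (f.right ν) 0, g.right ν < h ξ ∧ |logSlope h ξ| ≤ 2 * C / (1 - θ) * ν := by
  have hθ' : 0 < 1 - θ := sub_pos.2 f.lt_one
  have hmap : h (f.right ν) = g.right ν := by
    simpa only [comp_apply, f.left_zero, h0, g.left_zero] using hconj 0
  obtain ⟨ξ, hξ, hξeq⟩ := exists_sub_eq_deriv_mul_sub
    ((contDiff_of_incDiffeoAt hh).differentiable one_ne_zero) (f.right_map_neg hν)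
  obtain ⟨x, hx, hxeq⟩ := exists_right_map_eq (f := f) hν
  obtain ⟨y, hy, hyeq⟩ := exists_right_map_eq (f := g) hν
  have hfx : θ⁻¹ ≤ -deriv f.right x := le_neg_of_le_neg (f.deriv_right_le x)
  have hgy : θ⁻¹ ≤ -deriv g.right y := le_neg_of_le_neg (g.deriv_right_le y)
  have hfx1 : 0 < -deriv f.right x - 1 := by linarith [f.one_lt_inv]
  have hgy1 : 0 < -deriv g.right y - 1 := by linarith [f.one_lt_inv]
  have hslope : deriv h ξ = (-deriv g.right y - 1) / (-deriv f.right x - 1) := by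
    rw [h0, hmap, zero_sub, zero_sub, hxeq, hyeq, ← mul_assoc] at hξeq
    rw [eq_div_iff hfx1.ne', mul_right_cancel₀ hν.ne' hξeq]
  refine ⟨ξ, hξ, hmap ▸ strictMono_of_incDiffeoAt hh hξ.1, ?_⟩
  rw [logSlope, hslope, Real.log_div hgy1.ne' hfx1.ne']
  refine (abs_log_sub_one_sub_log_sub_one_le f.pos f.lt_one hfx hgy).trans ?_
  rw [Real.log_neg_eq_log, Real.log_neg_eq_log, div_mul_eq_mul_div]
  gcongr
  exact dist_logSlope_right_le_of_pos hν hxR hyR hmul hx hy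

lemma abs_logSlope_conj_le_of_pos (hν : 0 < ν) {u v xR yR : ℝ} (hu : f.right (f.left u) = u)
    (hv : g.right (g.left v) = v) (hxR : f.right xR = xR) (hyR : g.right yR = yR)
    (hmulR : deriv f.right xR = deriv g.right yR)
    (hmul : deriv f.left u * deriv f.right (f.left u) = deriv g.left v * deriv g.right (g.left v))
    {h : ℝ → ℝ} (hh : ∀ x, IncDiffeoAt h x) (h0 : h 0 = 0)
    (hconj : Semiconj h (f.right ∘ f.left) (g.right ∘ g.left)) {P : ℝ} (hP : 0 < P)
    (hνP : M * ν ≤ (1 - θ) * P) (hCP : 12 * C / (1 - θ) * P < Real.log 2) :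
    ∀ x ∈ Icc (-P) 0, |h x| ≤ 2 * P ∧ |logSlope h x| ≤ 12 * C / (1 - θ) * P := by
  have hθ' : 0 < 1 - θ := sub_pos.2 f.lt_one
  have hD : 12 * C / (1 - θ) = 6 * (2 * C / (1 - θ)) := by ring
  have hD0 : 0 ≤ 2 * C / (1 - θ) := by positivity
  have hνP' : ν ≤ P := by nlinarith [f.one_lt, f.pos]
  have hcycle {f : PDMap ν θ M C} {u : ℝ} (hu : f.right (f.left u) = u) : u ∈ Icc (-P) 0 := by
    have hu0 := twoCycle_left_neg hν hu
    have habs := (abs_twoCycle_mul_le hν hu).trans hνP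
    rw [abs_of_neg hu0, mul_comm] at habs
    exact ⟨by linarith [le_of_mul_le_mul_left habs hθ'], hu0.le⟩
  obtain ⟨ξ, hξ, hhξ, hnorm⟩ := exists_abs_logSlope_conj_le hν hxR hyR hmulR hh h0 hconj
  have hu' := hcycle hu
  have hv' := hcycle hv
  rw [hD] at hCP ⊢
  exact abs_logSlope_le_of_dist_le hh h0 hP hD0 hCP hu' hv'
    ⟨by linarith [hu'.1, twoCycle_lt_right hν hu, hξ.1], hξ.2.le⟩
    (by linarith [hv'.1, twoCycle_lt_right hν hv]) (hnorm.trans (by gcongr))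
    fun x _ => dist_logSlope_conj_twoCycle_le hu hv hmul hh hconj x

end PDMap

/-! ### Basins -/

/-- Inside `N`, the map `f` has an unstable fixed point `x > 0` and a stable period-two solution
`{u, w}` with `u < 0` and `x < w`. -/
structure PeriodDoublingPortrait (f : ℝ → ℝ) (N : Set ℝ) (x u w : ℝ) : Prop where
  fixedPt_pos : 0 < x
  fixedPt_mem : x ∈ N
  map_fixedPt : f x = x
  unstable : 1 < |deriv f x|
  neg : u < 0
  fixedPt_lt : x < w
  left_mem : u ∈ N
  right_mem : w ∈ N
  map_left : f u = w
  map_right : f w = u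
  stable : |deriv f u * deriv f w| < 1

lemma PeriodDoublingPortrait.left_ne_right {f : ℝ → ℝ} {N : Set ℝ} {x u w : ℝ}
    (h : PeriodDoublingPortrait f N x u w) : u ≠ w :=
  (h.neg.trans (h.fixedPt_pos.trans h.fixedPt_lt)).ne

/-- The conclusion for `μ > 0`: `f` on `N` and `g` on `N'` both have an unstable fixed point and a
stable period-two solution, and are differentiably conjugate on the corresponding basins. -/
def PeriodDoublingConj (f g : ℝ → ℝ) (N N' : Set ℝ) : Prop :=
  ∃ x u w y v z : ℝ, PeriodDoublingPortrait f N x u w ∧ PeriodDoublingPortrait g N' y v z ∧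
    DiffConjOn f g (basinRep f N x) (basinRep g N' y) ∧
    DiffConjOn f g (basinAttr2 f N u w) (basinAttr2 g N' v z)

lemma tendsto_iterate_two_mul_of_tendsto {X : Type*} [TopologicalSpace X] {f : X → X} {x l : X}
    (n : ℕ) (h : Tendsto (fun j => f^[2 * j] (f^[2 * n] x)) atTop (𝓝 l)) :
    Tendsto (fun j => f^[2 * j] x) atTop (𝓝 l) := by
  rw [← tendsto_add_atTop_iff_nat n]
  simpa only [mul_add, iterate_add_apply] using h

namespace PDMap

variable {ν θ M : ℝ} {C : ℝ≥0} {f g : PDMap ν θ M C} {u v xR yR : ℝ}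

lemma iterate_two_of_neg (hν : 0 < ν) {x : ℝ} (hx : x < 0) : f^[2] x = f.right (f.left x) := by
  rw [iterate_succ_apply, iterate_one, f.apply_of_le hx.le,
    f.apply_of_ge (hν.trans (lt_left_of_neg hx)).le]

lemma dist_iterate_two_twoCycle_le (hν : 0 < ν) (hu : f.right (f.left u) = u) {x : ℝ}
    (hx : x < 0) : dist (f^[2] x) u ≤ θ * dist x u := by
  simpa only [iterate_two_of_neg hν hx, comp_apply, hu] using
    f.logLipContraction_comp.dist_le x u

lemma tendsto_iterate_of_neg (hν : 0 < ν) (hu : f.right (f.left u) = u) {x : ℝ} (hx : x < 0) :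
    Tendsto (fun n => f^[2 * n] x) atTop (𝓝 u) := by
  have hmaps : MapsTo f^[2] (Iio 0) (Iio 0) := fun y hy => by
    rw [iterate_two_of_neg hν hy]
    exact right_neg_of_lt hν (lt_left_of_neg hy)
  simpa only [iterate_mul] using tendsto_iterate_of_mapsTo f.pos.le f.lt_one hmaps
    (fun y hy => dist_iterate_two_twoCycle_le hν hu hy) hx

lemma tendsto_iterate_of_gt (hν : 0 < ν) (hu : f.right (f.left u) = u) {x : ℝ} (hx : ν < x) :
    Tendsto (fun n => f^[2 * n] x) atTop (𝓝 (f.left u)) := by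
  obtain ⟨y, rfl⟩ := f.left.surjective x
  have hy : y < 0 := f.strictAnti_left.lt_iff_gt.1 (f.left_zero.trans_lt hx)
  have hlim := (f.toHomeomorph.continuous.tendsto u).comp (tendsto_iterate_of_neg hν hu hy)
  rw [map_twoCycle_left hν hu] at hlim
  refine hlim.congr fun n => ?_
  rw [comp_apply, ← iterate_succ_apply' f, iterate_succ_apply, f.apply_of_le hy.le]

lemma tendsto_iterate_twoCycle (hν : 0 < ν) (hu : f.right (f.left u) = u)
    (hxR : f.right xR = xR) {x : ℝ} (hx : x ≠ xR) :
    Tendsto (fun n => f^[2 * n] x) atTop (𝓝 u) ∨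
      Tendsto (fun n => f^[2 * n] x) atTop (𝓝 (f.left u)) := by
  obtain ⟨n, hn⟩ : x ∈ orbitPreimage f (Iio 0 ∪ Ioi ν) :=
    (orbitPreimage_Iio_union_Ioi hν hxR).symm ▸ hx
  exact (iterate_mem_of_le (mapsTo_Iio_union_Ioi hν) (by lia : n ≤ 2 * n) hn).imp
    (fun h => tendsto_iterate_two_mul_of_tendsto n (tendsto_iterate_of_neg hν hu h))
    (fun h => tendsto_iterate_two_mul_of_tendsto n (tendsto_iterate_of_gt hν hu h))

lemma lt_iterate_two_of_lt_twoCycle (hν : 0 < ν) (hu : f.right (f.left u) = u) {q : ℝ}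
    (hq : q < u) : q < f^[2] q := by
  have hdist := dist_iterate_two_twoCycle_le hν hu (hq.trans (twoCycle_left_neg hν hu))
  rw [Real.dist_eq, Real.dist_eq, abs_of_neg (sub_neg.2 hq)] at hdist
  nlinarith [neg_abs_le (f^[2] q - u), f.lt_one]

lemma lt_iterate_of_lt (hν : 0 < ν) (hu : f.right (f.left u) = u) {q x : ℝ} (hq : q < u)
    (hx : q < x) (hfx : q < f x) (n : ℕ) : q < f^[n] x ∧ q < f (f^[n] x) := by
  induction n with
  | zero => exact ⟨hx, hfx⟩
  | succ n ih =>
    rw [iterate_succ_apply']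
    exact ⟨ih.2, (lt_iterate_two_of_lt_twoCycle hν hu hq).trans
      (f.strictAnti (f.strictAnti ih.1))⟩

lemma basinAttr2_eq (hν : 0 < ν) (hu : f.right (f.left u) = u) (hxR : f.right xR = xR)
    {qm qp : ℝ} (hqm : qm < u) (hqp : f qp ≤ qm) :
    basinAttr2 f (Ioo qm qp) u (f.left u) = {xR}ᶜ ∩ (Ioi qm ∩ f ⁻¹' Ioi qm) := by
  ext x
  constructor
  · rintro ⟨hx, horbit, hlim⟩
    refine ⟨?_, hx.1, (horbit 1).1⟩
    rintro rfl
    simp only [iterate_fixed (map_fixedPt_right hν hxR), tendsto_const_nhds_iff] at hlim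
    obtain ⟨hpos, hlt⟩ := fixedPt_right_mem_Ioo hν hxR
    exact hlim.elim ((twoCycle_left_neg hν hu).trans hpos).ne'
      (hlt.trans (lt_left_of_twoCycle hν hu)).ne
  · rintro ⟨hne, hx, hfx⟩
    have horbit (n : ℕ) : f^[n] x ∈ Ioo qm qp :=
      ⟨(lt_iterate_of_lt hν hu hqm hx hfx n).1,
        f.strictAnti.lt_iff_gt.1 (hqp.trans_lt (lt_iterate_of_lt hν hu hqm hx hfx n).2)⟩
    exact ⟨horbit 0, horbit, tendsto_iterate_twoCycle hν hu hxR hne⟩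

lemma mapsTo_Icc_twoCycle (hν : 0 < ν) (hu : f.right (f.left u) = u) :
    MapsTo f (Icc u (f.left u)) (Icc u (f.left u)) := fun _ hx =>
  ⟨(map_twoCycle_right hν hu).symm.trans_le (f.strictAnti.antitone hx.2),
    (f.strictAnti.antitone hx.1).trans_eq (map_twoCycle_left hν hu)⟩

lemma mapsTo_inverse_Icc_twoCycle (hν : 0 < ν) (hu : f.right (f.left u) = u) :
    MapsTo f.inverse (Icc u (f.left u)) (Icc u (f.left u)) := fun _ hx =>
  ⟨(inverse_eq_iff.2 (map_twoCycle_left hν hu).symm).symm.trans_le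
      (f.inverse.strictAnti.antitone hx.2),
    (f.inverse.strictAnti.antitone hx.1).trans_eq
      (inverse_eq_iff.2 (map_twoCycle_right hν hu).symm)⟩

lemma tendsto_iterate_inverse (hν : 0 < ν) (hxR : f.right xR = xR) {x : ℝ}
    (hx : x ∈ orbitPreimage f.inverse (Ioo 0 ν)) :
    Tendsto (fun n => f.inverse^[n] x) atTop (𝓝 xR) := by
  obtain ⟨n, hn⟩ := hx
  have hcontr : ∀ y ∈ Ioo 0 ν, dist (f.inverse y) xR ≤ θ * dist y xR := fun y hy => by
    have hdist := f.logLipContraction_right_symm.dist_le y xR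
    rwa [f.right.symm_apply_eq.2 hxR.symm, ← inverse_of_le hy.2.le] at hdist
  rw [← tendsto_add_atTop_iff_nat n]
  simpa only [iterate_add_apply] using
    tendsto_iterate_of_mapsTo f.pos.le f.lt_one (mapsTo_inverse_Ioo hν) hcontr hn

lemma orbitPreimage_inverse_subset_Icc (hν : 0 < ν) (hu : f.right (f.left u) = u) :
    orbitPreimage f.inverse (Ioo 0 ν) ⊆ Icc u (f.left u) := by
  rintro x ⟨n, hn⟩
  rw [← LeftInverse.iterate (g := f) map_inverse n x]
  exact (mapsTo_Icc_twoCycle hν hu).iterate n ⟨((twoCycle_left_neg hν hu).trans hn.1).le,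
    (hn.2.trans (lt_left_of_twoCycle hν hu)).le⟩

lemma basinRep_eq (hν : 0 < ν) (hu : f.right (f.left u) = u) (hxR : f.right xR = xR) {N : Set ℝ}
    (hN : Icc u (f.left u) ⊆ N) :
    basinRep f N xR = orbitPreimage f.inverse (Ioo 0 ν) := by
  ext x
  constructor
  · rintro ⟨-, s, hs0, -, hstep, hlim⟩
    have hs (n : ℕ) : s n = f.inverse^[n] x := by
      induction n with
      | zero => exact hs0
      | succ n ih => rw [iterate_succ_apply', ← ih, eq_comm, inverse_eq_iff, hstep]
    obtain ⟨hpos, hlt⟩ := fixedPt_right_mem_Ioo hν hxR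
    obtain ⟨n, hn⟩ := (hlim.eventually (Ioo_mem_nhds hpos hlt)).exists
    exact ⟨n, hs n ▸ hn⟩
  · intro hx
    have horbit (n : ℕ) : f.inverse^[n] x ∈ N :=
      hN ((mapsTo_inverse_Icc_twoCycle hν hu).iterate n (orbitPreimage_inverse_subset_Icc hν hu hx))
    exact ⟨horbit 0, _, rfl, horbit, fun n => by rw [iterate_succ_apply', map_inverse],
      tendsto_iterate_inverse hν hxR hx⟩

lemma periodDoublingPortrait (hν : 0 < ν) (hu : f.right (f.left u) = u) (hxR : f.right xR = xR)
    {N : Set ℝ} (hN : Icc u (f.left u) ⊆ N) :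
    PeriodDoublingPortrait f N xR u (f.left u) := by
  have hu0 := twoCycle_left_neg hν hu
  obtain ⟨hpos, hlt⟩ := fixedPt_right_mem_Ioo hν hxR
  have hνu := lt_left_of_twoCycle hν hu
  refine ⟨hpos, hN ⟨(hu0.trans hpos).le, (hlt.trans hνu).le⟩, map_fixedPt_right hν hxR, ?_, hu0,
    hlt.trans hνu, hN (left_mem_Icc.2 (hu0.trans (hν.trans hνu)).le),
    hN (right_mem_Icc.2 (hu0.trans (hν.trans hνu)).le), map_twoCycle_left hν hu,
    map_twoCycle_right hν hu, ?_⟩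
  · rw [f.deriv_of_gt hpos, abs_of_neg (f.deriv_right_neg _)]
    linarith [f.deriv_right_le xR, f.one_lt_inv]
  · rw [f.deriv_of_lt hu0, f.deriv_of_gt (hν.trans hνu),
      abs_of_pos (mul_pos_of_neg_of_neg (f.deriv_left_neg _) (f.deriv_right_neg _))]
    exact (f.deriv_mul_deriv_le _ _).trans_lt f.lt_one

lemma diffConjOn_orbitPreimage_inverse (hν : 0 < ν)
    (hfg : SameKinkRatio f.toKinkedHomeo g.toKinkedHomeo)
    (hxR : f.right xR = xR) (hyR : g.right yR = yR)
    (hmul : deriv f.right xR = deriv g.right yR) :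
    DiffConjOn f g (orbitPreimage f.inverse (Ioo 0 ν)) (orbitPreimage g.inverse (Ioo 0 ν)) := by
  obtain ⟨h, hconj, hinc, hmono, himage⟩ := exists_conj_inverse hν hfg hxR hyR hmul
  refine ⟨h, himage ▸ isDiffeoOn_of_incDiffeoAt
    (isOpen_orbitPreimage f.inverse.continuous isOpen_Ioo) hmono.injOn hinc, fun x _ hfx => ?_⟩
  rw [← inverse_eq_iff, ← hconj _ hfx, inverse_eq_iff.2 rfl]

lemma diffConjOn_compl_fixedPt (hxR : f xR = xR) {q : ℝ} (hq : q ≠ xR) {h : ℝ → ℝ}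
    (hconj : ∀ x ∈ ({xR}ᶜ : Set ℝ), h (f x) = g (h x))
    (hinc : ∀ x ∈ ({xR}ᶜ : Set ℝ), IncDiffeoAt h x) (hmono : StrictMonoOn h {xR}ᶜ)
    (himage : h '' {xR}ᶜ = {yR}ᶜ) :
    DiffConjOn f g ({xR}ᶜ ∩ (Ioi q ∩ f ⁻¹' Ioi q))
      ({yR}ᶜ ∩ (Ioi (h q) ∩ g ⁻¹' Ioi (h q))) := by
  have hne : ∀ x ∈ ({xR}ᶜ : Set ℝ), f x ∈ ({xR}ᶜ : Set ℝ) := fun x hx hfx =>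
    hx (f.toHomeomorph.injective (Eq.trans hfx hxR.symm))
  have hpre : {xR}ᶜ ∩ (Ioi q ∩ f ⁻¹' Ioi q) =
      {xR}ᶜ ∩ h ⁻¹' (Ioi (h q) ∩ g ⁻¹' Ioi (h q)) := by
    ext x
    refine and_congr_right fun hx => and_congr (hmono.lt_iff_lt hq hx).symm ?_
    rw [mem_preimage, mem_preimage, ← hconj x hx]
    exact (hmono.lt_iff_lt hq (hne x hx)).symm
  have hopen : IsOpen ({xR}ᶜ ∩ (Ioi q ∩ f ⁻¹' Ioi q)) := isOpen_compl_singleton.inter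
    (isOpen_Ioi.inter (isOpen_Ioi.preimage f.toHomeomorph.continuous))
  refine ⟨h, ?_, fun x hx _ => hconj x hx.1⟩
  have hdiffeo := isDiffeoOn_of_incDiffeoAt hopen (hmono.injOn.mono inter_subset_left)
    fun x hx => hinc x hx.1
  rwa [hpre, image_inter_preimage, himage, ← hpre] at hdiffeo

end PDMap

/-! ### Conjugacies on intervals of controlled length -/

/-- Both endpoints of `(qm, qp) ∋ 0` lie at distance between `(1 - δ) p` and `(1 + δ) p` from the
origin. -/
structure NearlySymmetric (δ p qm qp : ℝ) : Prop where
  left_neg : qm < 0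
  right_pos : 0 < qp
  lt_abs_left : (1 - δ) * p < |qm|
  abs_left_lt : |qm| < (1 + δ) * p
  lt_abs_right : (1 - δ) * p < |qp|
  abs_right_lt : |qp| < (1 + δ) * p

lemma NearlySymmetric.of_mem_Icc {δ ε p qm qp : ℝ} (hp : 0 < p) (hε : Real.exp ε < 1 + δ)
    (hε' : 1 - δ < Real.exp (-ε)) (hqm : -qm ∈ Icc (Real.exp (-ε) * p) (Real.exp ε * p))
    (hqp : qp ∈ Icc (Real.exp (-ε) * p) (Real.exp ε * p)) : NearlySymmetric δ p qm qp := by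
  have hexp : 0 < Real.exp (-ε) * p := by positivity
  have hlow : (1 - δ) * p < Real.exp (-ε) * p := by gcongr
  have hup : Real.exp ε * p < (1 + δ) * p := by gcongr
  have hqm0 : qm < 0 := by linarith [hqm.1]
  have hqp0 : 0 < qp := by linarith [hqp.1]
  rw [← abs_of_neg hqm0] at hqm
  rw [← abs_of_pos hqp0] at hqp
  exact ⟨hqm0, hqp0, hlow.trans_le hqm.1, hqm.2.trans_lt hup, hlow.trans_le hqp.1,
    hqp.2.trans_lt hup⟩

lemma exists_pos_exp_lt {θ δ : ℝ} (hθ : θ < 1) (hδ : 0 < δ) :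
    ∃ ε > 0, ε < Real.log 2 ∧ Real.exp ε < 1 + δ ∧ 1 - δ < Real.exp (-ε) ∧ θ < Real.exp (-ε) := by
  have hlog : ∀ᶠ ε in 𝓝[>] (0 : ℝ), ε < Real.log 2 :=
    nhdsWithin_le_nhds (Iio_mem_nhds (Real.log_pos one_lt_two))
  have hexp : ∀ᶠ ε in 𝓝[>] (0 : ℝ), Real.exp ε < 1 + δ := nhdsWithin_le_nhds
    (Real.continuous_exp.continuousAt.eventually_lt_const (by simpa using hδ))
  have hexpneg {a : ℝ} (ha : a < 1) : ∀ᶠ ε in 𝓝[>] (0 : ℝ), a < Real.exp (-ε) :=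
    nhdsWithin_le_nhds ((Real.continuous_exp.comp continuous_neg).continuousAt.eventually_const_lt
      (by simpa using ha))
  obtain ⟨ε, hε, h⟩ := (eventually_mem_nhdsWithin.and <| hlog.and <| hexp.and <|
    (hexpneg (by linarith : 1 - δ < 1)).and (hexpneg hθ)).exists
  exact ⟨ε, hε, h⟩

lemma neg_map_neg_mem_Icc_exp_mul {h : ℝ → ℝ} (hh : ∀ x, IncDiffeoAt h x) (h0 : h 0 = 0)
    {ε p : ℝ} (hp : 0 < p) (hε : ∀ x ∈ Icc (-p) 0, |logSlope h x| ≤ ε) :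
    -h (-p) ∈ Icc (Real.exp (-ε) * p) (Real.exp ε * p) := by
  simpa [h0] using sub_mem_Icc_exp_mul_of_abs_logSlope_le hh (neg_lt_zero.2 hp)
    fun x hx => hε x ⟨hx.1.le, hx.2.le⟩

lemma Icc_exp_mul_subset {a ε p : ℝ} (hp : 0 < p) (ha : a ≤ ε) :
    Icc (Real.exp (-a) * p) (Real.exp a * p) ⊆ Icc (Real.exp (-ε) * p) (Real.exp ε * p) :=
  Icc_subset_Icc (by gcongr) (by gcongr)

lemma diffConjOn_Ioo {f g h : ℝ → ℝ} (hh : ∀ x, IncDiffeoAt h x) (hconj : ∀ x, h (f x) = g (h x))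
    {a b : ℝ} (hab : a ≤ b) : DiffConjOn f g (Ioo a b) (Ioo (h a) (h b)) := by
  have hmono := strictMono_of_incDiffeoAt hh
  have himage : h '' Ioo a b = Ioo (h a) (h b) :=
    Subset.antisymm (image_subset_iff.2 fun x hx => ⟨hmono hx.1, hmono hx.2⟩) <|
      intermediate_value_Ioo hab (contDiff_of_incDiffeoAt hh).continuous.continuousOn
  exact ⟨h, himage ▸ isDiffeoOn_of_incDiffeoAt isOpen_Ioo hmono.injective.injOn fun x _ => hh x,
    fun x _ _ => hconj x⟩

namespace PDMap

variable {ν θ M δ ε p : ℝ} {C : ℝ≥0} {f g : PDMap ν θ M C}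

lemma exists_conj_of_nonpos (hν : ν ≤ 0) (hfg : SameKinkRatio f.toKinkedHomeo g.toKinkedHomeo)
    {xs ys : ℝ} (hxs : f.left xs = xs) (hys : g.left ys = ys)
    (hmul : deriv f.left xs = deriv g.left ys) :
    ∃ h : ℝ → ℝ, (∀ x, IncDiffeoAt h x) ∧ h 0 = 0 ∧ (∀ x, h (f x) = g (h x)) ∧
      ∃ ξ ∈ Icc ν 0, deriv h ξ = 1 := by
  rcases hν.eq_or_lt with rfl | hν
  · obtain rfl : xs = 0 := by simpa using fixedPt_left_mem_Icc le_rfl hxs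
    obtain rfl : ys = 0 := by simpa using fixedPt_left_mem_Icc le_rfl hys
    obtain ⟨h, hh, h0, hconj, hone⟩ := exists_conj_of_eq_zero hfg hmul
    exact ⟨h, hh, h0, hconj, 0, by simp, hone⟩
  · obtain ⟨h, hh, h0, -, hconj⟩ := exists_conj_of_neg hν hfg hxs hys hmul
    obtain ⟨ξ, hξ, heq⟩ := exists_sub_eq_deriv_mul_sub
      ((contDiff_of_incDiffeoAt hh).differentiable one_ne_zero) hν
    rw [h0, conj_apply_map_zero h0 hconj] at heq
    exact ⟨h, hh, h0, hconj, ξ, Ioo_subset_Icc_self hξ,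
      mul_right_cancel₀ (sub_pos.2 hν).ne' (by rw [← heq, one_mul])⟩

lemma exists_diffConjOn_of_nonpos (hν : ν ≤ 0)
    (hfg : SameKinkRatio f.toKinkedHomeo g.toKinkedHomeo)
    {xs ys : ℝ} (hxs : f.left xs = xs) (hys : g.left ys = ys)
    (hmul : deriv f.left xs = deriv g.left ys) (hp : 0 < p) (hνp : -ν ≤ p)
    (hε : ε < Real.log 2) (hεδ : Real.exp ε < 1 + δ) (hεδ' : 1 - δ < Real.exp (-ε))
    (hCp : (12 * C / (1 - θ) + 5 * C) * (2 * M * p) ≤ ε) :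
    ∃ qm qp, NearlySymmetric δ p qm qp ∧ DiffConjOn f g (Ioo (-p) p) (Ioo qm qp) := by
  have hM := f.one_lt
  have hP : 0 < 2 * M * p := by positivity
  have hpP : p ≤ 2 * M * p := by nlinarith
  have hCP : 12 * C / (1 - θ) * (2 * M * p) + 5 * C * (2 * M * p) ≤ ε := by rwa [← add_mul]
  have hCP' : 12 * C / (1 - θ) * (2 * M * p) ≤ ε :=
    le_of_add_le_of_nonneg_left hCP (by positivity)
  obtain ⟨h, hh, h0, hconj, hone⟩ := exists_conj_of_nonpos hν hfg hxs hys hmul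
  have hbound := abs_logSlope_conj_le hν hfg hxs hys hmul hh h0 hconj hone hP (hνp.trans hpP)
    (hCP'.trans_lt hε)
  have hleft := neg_map_neg_mem_Icc_exp_mul hh h0 hp fun x hx =>
    (hbound x ⟨by linarith [hx.1], hx.2⟩).2
  have hright := conj_mem_Icc_exp_mul hν hfg hxs hys hmul hh h0 hconj hp hpP
    (by nlinarith) hbound
  exact ⟨h (-p), h p, .of_mem_Icc hp hεδ hεδ' (Icc_exp_mul_subset hp hCP' hleft)
    (Icc_exp_mul_subset hp hCP hright), diffConjOn_Ioo hh hconj (by linarith)⟩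

lemma twoCycle_mem_Ioc (hν : 0 < ν) {u : ℝ} (hu : f.right (f.left u) = u) (hp : 0 < p)
    (hνp : M * ν ≤ (1 - θ) * (θ / 2 * p)) : -(θ / 2 * p) ≤ u ∧ f.left u < p := by
  have hu0 := twoCycle_left_neg hν hu
  have hcycle := abs_twoCycle_mul_le hν hu
  rw [abs_of_neg hu0] at hcycle
  have hlow : -(θ / 2 * p) ≤ u := by nlinarith [f.lt_one]
  have hdist := f.logLipContraction_left.dist_le u 0
  rw [f.left_zero, Real.dist_eq, Real.dist_eq, sub_zero, abs_of_neg hu0] at hdist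
  have hνp' : ν ≤ (1 - θ) * (θ / 2 * p) := by nlinarith [f.one_lt]
  have hθp : θ / 2 * p < p / 2 := by nlinarith [f.lt_one]
  refine ⟨hlow, ?_⟩
  nlinarith [le_abs_self (f.left u - ν), f.lt_one, f.pos]

lemma map_le_neg_mul (hp : 0 ≤ p) {a : ℝ} (hνp : ν ≤ (θ⁻¹ - a) * p) : f p ≤ -(a * p) := by
  have hexp := sub_le_neg_mul_sub_of_deriv_le
    (f.contDiff_right.differentiable one_ne_zero) f.deriv_right_le hp
  rw [f.right_zero, ← f.apply_of_ge hp] at hexp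
  linarith

lemma exists_periodDoublingConj (hν : 0 < ν) (hfg : SameKinkRatio f.toKinkedHomeo g.toKinkedHomeo)
    {u v xR yR : ℝ} (hu : f.right (f.left u) = u) (hv : g.right (g.left v) = v)
    (hxR : f.right xR = xR) (hyR : g.right yR = yR)
    (hmulR : deriv f.right xR = deriv g.right yR)
    (hmul : deriv f.left u * deriv f.right (f.left u) = deriv g.left v * deriv g.right (g.left v))
    (hp : 0 < p) (hνp : M * ν ≤ (1 - θ) * (θ / 2 * p)) (hνp' : ν ≤ (θ⁻¹ - Real.exp ε) * p)
    (hε0 : 0 ≤ ε) (hε : ε < Real.log 2) (hεδ : Real.exp ε < 1 + δ) (hεδ' : 1 - δ < Real.exp (-ε))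
    (hεθ : θ < Real.exp (-ε)) (hCp : 12 * C / (1 - θ) * (2 * M * p) ≤ ε) :
    ∃ qm qp, NearlySymmetric δ p qm qp ∧ PeriodDoublingConj f g (Ioo (-p) p) (Ioo qm qp) := by
  have hθ := f.pos
  have hP : 0 < 2 * M * p := by nlinarith [f.one_lt]
  have hpP : p ≤ 2 * M * p := by nlinarith [f.one_lt]
  have hexp : 1 ≤ Real.exp ε := Real.one_le_exp hε0
  obtain ⟨h₀, h, hh₀, h0, hcomp, heq, hconj, hinc, hmono, himage⟩ :=
    exists_conj_compl_fixedPt hν hfg hu hv hmul hxR hyR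
  have hbound := abs_logSlope_conj_le_of_pos hν hu hv hxR hyR hmulR hmul hh₀ h0 hcomp hP
    (hνp.trans (mul_le_mul_of_nonneg_left (by nlinarith [f.lt_one]) (by linarith [f.lt_one])))
    (hCp.trans_lt hε)
  have hleft := Icc_exp_mul_subset hp hCp <| neg_map_neg_mem_Icc_exp_mul hh₀ h0 hp fun x hx =>
    (hbound x ⟨by linarith [hx.1], hx.2⟩).2
  rw [← heq (neg_lt_zero.2 hp)] at hleft
  obtain ⟨hup, hfup⟩ := twoCycle_mem_Ioc hν hu hp hνp
  obtain ⟨hvp, hgvp⟩ := twoCycle_mem_Ioc hν hv hp hνp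
  have hpu : -p < u := by nlinarith [f.lt_one]
  have hqv : h (-p) < v := by nlinarith [hleft.1]
  have hfp : f p ≤ -p := (map_le_neg_mul hp.le hνp').trans (by nlinarith)
  have hgp : g p ≤ h (-p) := (map_le_neg_mul hp.le hνp').trans (by linarith [hleft.2])
  have hfN : Icc u (f.left u) ⊆ Ioo (-p) p := fun x hx => ⟨hpu.trans_le hx.1, hx.2.trans_lt hfup⟩
  have hgN : Icc v (g.left v) ⊆ Ioo (h (-p)) p := fun x hx =>
    ⟨hqv.trans_le hx.1, hx.2.trans_lt hgvp⟩
  refine ⟨h (-p), p, .of_mem_Icc hp hεδ hεδ' hleft ?_, xR, u, f.left u, yR, v, g.left v,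
    periodDoublingPortrait hν hu hxR hfN, periodDoublingPortrait hν hv hyR hgN, ?_, ?_⟩
  · simpa using Icc_exp_mul_subset hp hε0
  · rw [basinRep_eq hν hu hxR hfN, basinRep_eq hν hv hyR hgN]
    exact diffConjOn_orbitPreimage_inverse hν hfg hxR hyR hmulR
  · rw [basinAttr2_eq hν hu hxR hpu hfp, basinAttr2_eq hν hv hyR hqv hgp]
    exact diffConjOn_compl_fixedPt (map_fixedPt_right hν hxR)
      (by linarith [(fixedPt_right_mem_Ioo hν hxR).1]) hconj hinc hmono himage

theorem exists_uniform_conj (C : ℝ≥0) (hθ : 0 < θ) (hθ1 : θ < 1) (hM : 0 < M) (hδ : 0 < δ) :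
    ∃ p₀ > 0, ∃ c > 0, ∀ p ∈ Ioc 0 p₀, ∀ (ν : ℝ) (f g : PDMap ν θ M C), |ν| ≤ c * p →
      SameKinkRatio f.toKinkedHomeo g.toKinkedHomeo →
      (ν ≤ 0 → ∀ xs ys, f.left xs = xs → g.left ys = ys → deriv f.left xs = deriv g.left ys →
        ∃ qm qp, NearlySymmetric δ p qm qp ∧ DiffConjOn f g (Ioo (-p) p) (Ioo qm qp)) ∧
      (0 < ν → ∀ u v xR yR, f.right (f.left u) = u → g.right (g.left v) = v →
        f.right xR = xR → g.right yR = yR → deriv f.right xR = deriv g.right yR →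
        deriv f.left u * deriv f.right (f.left u) = deriv g.left v * deriv g.right (g.left v) →
        ∃ qm qp, NearlySymmetric δ p qm qp ∧ PeriodDoublingConj f g (Ioo (-p) p) (Ioo qm qp)) := by
  obtain ⟨ε, hε0, hε, hεδ, hεδ', hεθ⟩ := exists_pos_exp_lt hθ1 hδ
  have hθ' : 0 < 1 - θ := sub_pos.2 hθ1
  have hεθ' : Real.exp ε < θ⁻¹ := by
    rw [Real.exp_neg] at hεθ
    exact (lt_inv_comm₀ (Real.exp_pos _) hθ).2 hεθ
  set K : ℝ := 12 * C / (1 - θ) + 5 * C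
  have : 0 ≤ K := by positivity
  refine ⟨ε / ((K + 1) * (2 * M)), by positivity,
    min ((1 - θ) * θ / (2 * M)) (min (θ⁻¹ - Real.exp ε) 1),
    lt_min (by positivity) (lt_min (sub_pos.2 hεθ') one_pos), fun p ⟨hp, hpp⟩ ν f g hν hfg => ?_⟩
  rw [le_div_iff₀ (by positivity)] at hpp
  have hCp : K * (2 * M * p) ≤ ε := by nlinarith [mul_pos hM hp]
  have hCp' : 12 * C / (1 - θ) * (2 * M * p) ≤ ε :=
    (le_add_of_nonneg_right (by positivity : 0 ≤ 5 * C * (2 * M * p))).trans (by rwa [← add_mul])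
  have hνle {a : ℝ} (ha : min ((1 - θ) * θ / (2 * M)) (min (θ⁻¹ - Real.exp ε) 1) ≤ a) :
      |ν| ≤ a * p := hν.trans (mul_le_mul_of_nonneg_right ha hp.le)
  have hνM : |ν| ≤ (1 - θ) * θ / (2 * M) * p := hνle (min_le_left _ _)
  have hνexp : |ν| ≤ (θ⁻¹ - Real.exp ε) * p := hνle ((min_le_right _ _).trans (min_le_left _ _))
  have hνp : |ν| ≤ 1 * p := hνle ((min_le_right _ _).trans (min_le_right _ _))
  refine ⟨fun hν0 xs ys hxs hys hmul => ?_, fun hν0 u v xR yR hu hv hxR hyR hmulR hmul => ?_⟩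
  · rw [abs_of_nonpos hν0, one_mul] at hνp
    exact exists_diffConjOn_of_nonpos hν0 hfg hxs hys hmul hp hνp hε hεδ hεδ' hCp
  · rw [abs_of_pos hν0] at hνM hνexp
    refine exists_periodDoublingConj hν0 hfg hu hv hxR hyR hmulR hmul hp ?_ hνexp hε0.le hε hεδ
      hεδ' hεθ hCp'
    calc M * ν ≤ M * ((1 - θ) * θ / (2 * M) * p) := by gcongr
      _ = (1 - θ) * (θ / 2 * p) := by field_simp

end PDMap

/-! ### Localization -/

lemma DiffConjOn.congr {f f' g g' : ℝ → ℝ} {U V : Set ℝ} (hf : EqOn f f' U) (hg : EqOn g g' V)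
    (hfg : DiffConjOn f g U V) : DiffConjOn f' g' U V := by
  obtain ⟨h, hdiffeo, hconj⟩ := hfg
  refine ⟨h, hdiffeo, fun x hx hfx => ?_⟩
  rw [← hf hx] at hfx ⊢
  rw [← hg (hdiffeo.1.mapsTo hx)]
  exact hconj x hx hfx

lemma basinRep_subset_of_eqOn {f f' : ℝ → ℝ} {N : Set ℝ} (hf : EqOn f f' N) (p : ℝ) :
    basinRep f N p ⊆ basinRep f' N p := by
  rintro x ⟨hx, orbit, hzero, hmem, hstep, hlim⟩
  exact ⟨hx, orbit, hzero, hmem, fun n => (hf (hmem _)).symm.trans (hstep n), hlim⟩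

lemma basinRep_congr {f f' : ℝ → ℝ} {N : Set ℝ} (hf : EqOn f f' N) (p : ℝ) :
    basinRep f N p = basinRep f' N p :=
  (basinRep_subset_of_eqOn hf p).antisymm (basinRep_subset_of_eqOn hf.symm p)

lemma iterate_eq_of_eqOn {X : Type*} {f f' : X → X} {s : Set X} (hf : EqOn f f' s) {x : X}
    (hx : ∀ n, f^[n] x ∈ s) (n : ℕ) : f'^[n] x = f^[n] x := by
  induction n with
  | zero => rfl
  | succ n ih => rw [iterate_succ_apply', iterate_succ_apply', ih, hf (hx n)]

lemma basinAttr2_subset_of_eqOn {f f' : ℝ → ℝ} {N : Set ℝ} (hf : EqOn f f' N) (p q : ℝ) :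
    basinAttr2 f N p q ⊆ basinAttr2 f' N p q := by
  rintro x ⟨hx, hmem, hlim⟩
  have hiter := iterate_eq_of_eqOn hf hmem
  exact ⟨hx, fun n => hiter n ▸ hmem n, by simpa only [hiter] using hlim⟩

lemma basinAttr2_congr {f f' : ℝ → ℝ} {N : Set ℝ} (hf : EqOn f f' N) (p q : ℝ) :
    basinAttr2 f N p q = basinAttr2 f' N p q :=
  (basinAttr2_subset_of_eqOn hf p q).antisymm (basinAttr2_subset_of_eqOn hf.symm p q)

lemma PeriodDoublingPortrait.congr {f f' : ℝ → ℝ} {N : Set ℝ} (hN : IsOpen N) (hf : EqOn f f' N)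
    {x u w : ℝ} (h : PeriodDoublingPortrait f N x u w) : PeriodDoublingPortrait f' N x u w where
  fixedPt_pos := h.fixedPt_pos
  fixedPt_mem := h.fixedPt_mem
  map_fixedPt := (hf h.fixedPt_mem).symm.trans h.map_fixedPt
  unstable := by
    rw [← hf.deriv hN h.fixedPt_mem]
    exact h.unstable
  neg := h.neg
  fixedPt_lt := h.fixedPt_lt
  left_mem := h.left_mem
  right_mem := h.right_mem
  map_left := (hf h.left_mem).symm.trans h.map_left
  map_right := (hf h.right_mem).symm.trans h.map_right
  stable := by
    rw [← hf.deriv hN h.left_mem, ← hf.deriv hN h.right_mem]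
    exact h.stable

lemma PeriodDoublingConj.congr {f f' g g' : ℝ → ℝ} {N N' : Set ℝ} (hN : IsOpen N) (hN' : IsOpen N')
    (hf : EqOn f f' N) (hg : EqOn g g' N') (h : PeriodDoublingConj f g N N') :
    PeriodDoublingConj f' g' N N' := by
  obtain ⟨x, u, w, y, v, z, hportrait, hportrait', hrep, hattr⟩ := h
  refine ⟨x, u, w, y, v, z, hportrait.congr hN hf, hportrait'.congr hN' hg, ?_, ?_⟩
  · rw [← basinRep_congr hf, ← basinRep_congr hg]
    exact hrep.congr (hf.mono (sep_subset _ _)) (hg.mono (sep_subset _ _))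
  · rw [← basinAttr2_congr hf, ← basinAttr2_congr hg]
    exact hattr.congr (hf.mono (sep_subset _ _)) (hg.mono (sep_subset _ _))

lemma lipschitzOnWith_log_Iic_neg {a : ℝ} (ha : 0 < a) :
    LipschitzOnWith a⁻¹.toNNReal Real.log (Iic (-a)) := by
  have hneg {x : ℝ} (hx : x ∈ Iic (-a)) : x < 0 := hx.trans_lt (neg_neg_of_pos ha)
  refine (convex_Iic _).lipschitzOnWith_of_nnnorm_hasDerivWithin_le
    (fun x hx => (Real.hasDerivAt_log (hneg hx).ne).hasDerivWithinAt) fun x hx => ?_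
  rw [← NNReal.coe_le_coe, Real.coe_toNNReal _ (inv_pos.2 ha).le, coe_nnnorm, norm_inv,
    Real.norm_eq_abs, abs_of_neg (hneg hx)]
  exact inv_anti₀ ha (le_neg.1 hx)

/-- On `[-r, r]`, the function `F` is differentiable, its slopes lie in `[-b, -a]` and its
derivative is `L`-Lipschitz. -/
structure DecreasingBranch (F : ℝ → ℝ) (r : ℝ) (L : ℝ≥0) (a b : ℝ) : Prop where
  differentiableAt : ∀ x ∈ Icc (-r) r, DifferentiableAt ℝ F x
  deriv_mem : ∀ x ∈ Icc (-r) r, deriv F x ∈ Icc (-b) (-a)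
  lipschitzOnWith : LipschitzOnWith L (deriv F) (Icc (-r) r)

-- The extension is the primitive of the slope frozen at its boundary values outside `[-r, r]`.
lemma DecreasingBranch.exists_extension {F : ℝ → ℝ} {r a b : ℝ} {L : ℝ≥0} (hr : 0 ≤ r) (ha : 0 < a)
    (hF : DecreasingBranch F r L a b) :
    ∃ G : ℝ → ℝ, ContDiff ℝ 1 G ∧ EqOn G F (Icc (-r) r) ∧ EqOn (deriv G) (deriv F) (Icc (-r) r) ∧
      (∀ x, deriv G x ∈ Icc (-b) (-a)) ∧ LipschitzWith (a⁻¹.toNNReal * L) (logSlope G) := by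
  have hrr : -r ≤ r := by linarith
  let D : ℝ → ℝ := IccExtend hrr ((Icc (-r) r).domRestrict (deriv F))
  have hDlip : LipschitzWith L D :=
    (hF.lipschitzOnWith.to_restrict.comp (LipschitzWith.projIcc hrr)).weaken (mul_one L).le
  have hDeq : EqOn D (deriv F) (Icc (-r) r) := fun x hx => IccExtend_of_mem hrr _ hx
  have hDmem (x : ℝ) : D x ∈ Icc (-b) (-a) := hF.deriv_mem _ (projIcc (-r) r hrr x).2
  let G : ℝ → ℝ := fun x => F 0 + ∫ s in (0 : ℝ)..x, D s
  have hGderiv (x : ℝ) : HasDerivAt G (D x) x :=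
    (intervalIntegral.integral_hasDerivAt_right (hDlip.continuous.intervalIntegrable _ _)
      (hDlip.continuous.stronglyMeasurableAtFilter _ _) hDlip.continuous.continuousAt).const_add _
  have hGD : deriv G = D := funext fun x => (hGderiv x).deriv
  refine ⟨G, contDiff_one_iff_deriv.2 ⟨fun x => (hGderiv x).differentiableAt, hGD ▸
    hDlip.continuous⟩, fun x hx => ?_, hGD ▸ hDeq, hGD ▸ hDmem, ?_⟩
  · have hsub : uIcc 0 x ⊆ Icc (-r) r := uIcc_subset_Icc ⟨by linarith, hr⟩ hx
    have hint : ∫ s in (0 : ℝ)..x, D s = F x - F 0 :=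
      intervalIntegral.integral_eq_sub_of_hasDerivAt (fun s hs => hDeq (hsub hs) ▸
        (hF.differentiableAt s (hsub hs)).hasDerivAt) (hDlip.continuous.intervalIntegrable _ _)
    simp only [G, hint, add_sub_cancel]
  · have hlog := (lipschitzOnWith_log_Iic_neg ha).comp (hDlip.lipschitzOnWith (s := univ))
      fun x _ => (hDmem x).2
    rw [← hGD, lipschitzOnWith_univ] at hlog
    exact hlog

/-- Two decreasing branches on `[-r, r]` with common value `ν` at the origin. -/
structure BranchPair (FL FR : ℝ → ℝ) (ν r : ℝ) (L : ℝ≥0) (aL bL aR bR : ℝ) : Prop where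
  left : DecreasingBranch FL r L aL bL
  right : DecreasingBranch FR r L aR bR
  left_zero : FL 0 = ν
  right_zero : FR 0 = ν

/-- On `s`, the branches of `f` and their slopes are those of `FL` and `FR`. -/
structure PDMap.Extends {ν θ M : ℝ} {C : ℝ≥0} (f : PDMap ν θ M C) (FL FR : ℝ → ℝ) (s : Set ℝ) :
    Prop where
  left : EqOn f.left FL s
  right : EqOn f.right FR s
  deriv_left : EqOn (deriv f.left) (deriv FL) s
  deriv_right : EqOn (deriv f.right) (deriv FR) s

lemma PDMap.Extends.eqOn_piecewise {ν θ M : ℝ} {C : ℝ≥0} {f : PDMap ν θ M C} {FL FR : ℝ → ℝ}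
    {s : Set ℝ} (h : f.Extends FL FR s) : EqOn f ((Iic 0).piecewise FL FR) s := fun x hx => by
  rcases le_or_gt x 0 with hx0 | hx0
  · rw [piecewise_eq_of_mem _ _ _ (mem_Iic.2 hx0), f.apply_of_le hx0, h.left hx]
  · rw [piecewise_eq_of_notMem _ _ _ (notMem_Iic.2 hx0), f.apply_of_ge hx0.le, h.right hx]

lemma BranchPair.exists_pdMap {FL FR : ℝ → ℝ} {ν r aL bL aR bR : ℝ} {L : ℝ≥0} (hr : 0 ≤ r)
    (haL : 0 < aL) (haR : 1 < aR) (hb : bL * bR < 1) (h : BranchPair FL FR ν r L aL bL aR bR) :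
    ∃ f : PDMap ν (max aR⁻¹ (bL * bR)) (max 1 bR) (aL⁻¹.toNNReal * L),
      f.Extends FL FR (Icc (-r) r) := by
  have h0 : (0 : ℝ) ∈ Icc (-r) r := ⟨by linarith, hr⟩
  have haR0 : 0 < aR := zero_lt_one.trans haR
  have habL : aL ≤ bL := neg_le_neg_iff.1 (nonempty_Icc.1 ⟨_, h.left.deriv_mem 0 h0⟩)
  have habR : aR ≤ bR := neg_le_neg_iff.1 (nonempty_Icc.1 ⟨_, h.right.deriv_mem 0 h0⟩)
  have haLR : aL ≤ aR := by nlinarith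
  obtain ⟨JL, hJL, hL, hderivL, hmemL, hlipL⟩ := h.left.exists_extension hr haL
  obtain ⟨JR, hJR, hR, hderivR, hmemR, hlipR⟩ := h.right.exists_extension hr haR0
  obtain ⟨f, hfL, hfR⟩ := KinkedHomeo.exists_of_branches haL hJL hJR (fun x => (hmemL x).2)
    (fun x => (hmemR x).2.trans (by linarith)) <| by
      rw [hL h0, hR h0, h.left_zero, h.right_zero]
  refine ⟨{ toKinkedHomeo := f
            toFun_zero := ?_
            lt_one := max_lt (inv_lt_one_of_one_lt₀ haR) hb
            lipschitzWith_left := hfL ▸ hlipL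
            lipschitzWith_right := hfR ▸ hlipR.weaken ?_
            le_deriv_right := fun x => hfR ▸ (neg_le_neg (le_max_right _ _)).trans (hmemR x).1
            deriv_right_le := fun x => hfR ▸ (hmemR x).2.trans (neg_le_neg ?_)
            deriv_mul_deriv_le := fun x y => ?_ }, hfL ▸ hL, hfR ▸ hR, hfL ▸ hderivL,
          hfR ▸ hderivR⟩
  · exact (f.eqOn_left self_mem_Iic).trans (by rw [hfL, hL h0, h.left_zero])
  · gcongr
  · exact inv_le_of_inv_le₀ haR0 (le_max_left _ _)
  · rw [hfL, hfR]
    refine le_max_of_le_right ?_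
    nlinarith [(hmemL x).1, (hmemL x).2, (hmemR y).1, (hmemR y).2]

/-- `F` and `G` have fixed points in `s` with equal multipliers. -/
def MatchedFixedPt (F G : ℝ → ℝ) (s : Set ℝ) : Prop :=
  ∃ x ∈ s, ∃ y ∈ s, F x = x ∧ G y = y ∧ deriv F x = deriv G y

/-- The pairs of branches `(FL, FR)` and `(JL, JR)` have period-two orbits in `s`, alternating
between the branches, with equal multipliers. -/
def MatchedTwoCycle (FL FR JL JR : ℝ → ℝ) (s : Set ℝ) : Prop :=
  ∃ u ∈ s, ∃ v ∈ s, FL u ∈ s ∧ JL v ∈ s ∧ FR (FL u) = u ∧ JR (JL v) = v ∧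
    deriv FL u * deriv FR (FL u) = deriv JL v * deriv JR (JL v)

lemma NearlySymmetric.Ioo_subset_Icc {δ p r qm qp : ℝ} (h : NearlySymmetric δ p qm qp)
    (hpr : (1 + δ) * p ≤ r) : Ioo qm qp ⊆ Icc (-r) r := fun x hx =>
  ⟨by linarith [hx.1, neg_abs_le qm, h.abs_left_lt],
    by linarith [hx.2, le_abs_self qp, h.abs_right_lt]⟩

lemma PDMap.Extends.sameKinkRatio {ν θ M r : ℝ} {C : ℝ≥0} {f g : PDMap ν θ M C}
    {FL FR JL JR : ℝ → ℝ} (hr : 0 ≤ r) (hf : f.Extends FL FR (Icc (-r) r))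
    (hg : g.Extends JL JR (Icc (-r) r))
    (hkink : deriv FL 0 * deriv JR 0 = deriv FR 0 * deriv JL 0) :
    SameKinkRatio f.toKinkedHomeo g.toKinkedHomeo := by
  have h0 : (0 : ℝ) ∈ Icc (-r) r := ⟨by linarith, hr⟩
  rw [SameKinkRatio, hf.deriv_left h0, hf.deriv_right h0, hg.deriv_left h0, hg.deriv_right h0,
    hkink]

theorem BranchPair.exists_uniform_conj {r aL bL aR bR δ : ℝ} (L : ℝ≥0) (hr : 0 < r) (haL : 0 < aL)
    (haR : 1 < aR) (hb : bL * bR < 1) (hδ : 0 < δ) :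
    ∃ p₀ > 0, ∃ c > 0, ∀ p ∈ Ioc 0 p₀, ∀ (ν : ℝ) (FL FR JL JR : ℝ → ℝ),
      BranchPair FL FR ν r L aL bL aR bR → BranchPair JL JR ν r L aL bL aR bR → |ν| ≤ c * p →
      deriv FL 0 * deriv JR 0 = deriv FR 0 * deriv JL 0 →
      (ν ≤ 0 → MatchedFixedPt FL JL (Icc (-r) r) → ∃ qm qp, NearlySymmetric δ p qm qp ∧
        DiffConjOn ((Iic 0).piecewise FL FR) ((Iic 0).piecewise JL JR) (Ioo (-p) p) (Ioo qm qp)) ∧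
      (0 < ν → MatchedFixedPt FR JR (Icc (-r) r) → MatchedTwoCycle FL FR JL JR (Icc (-r) r) →
        ∃ qm qp, NearlySymmetric δ p qm qp ∧ PeriodDoublingConj ((Iic 0).piecewise FL FR)
          ((Iic 0).piecewise JL JR) (Ioo (-p) p) (Ioo qm qp)) := by
  have haR0 : 0 < aR := zero_lt_one.trans haR
  obtain ⟨p₀, hp₀, c, hc, hconj⟩ := PDMap.exists_uniform_conj (M := max 1 bR)
    (aL⁻¹.toNNReal * L) (lt_max_of_lt_left (inv_pos.2 haR0))
    (max_lt (inv_lt_one_of_one_lt₀ haR) hb) (lt_max_of_lt_left one_pos) hδ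
  refine ⟨min p₀ (r / (1 + δ)), by positivity, c, hc, fun p hp ν FL FR JL JR hF hG hν hkink => ?_⟩
  have hpr : (1 + δ) * p ≤ r := by
    rw [mul_comm, ← le_div_iff₀ (by positivity)]
    exact hp.2.trans (min_le_right _ _)
  have hN : Ioo (-p) p ⊆ Icc (-r) r := fun x hx =>
    ⟨by nlinarith [hx.1, hp.1], by nlinarith [hx.2, hp.1]⟩
  obtain ⟨f, hf⟩ := hF.exists_pdMap hr.le haL haR hb
  obtain ⟨g, hg⟩ := hG.exists_pdMap hr.le haL haR hb
  obtain ⟨hneg, hpos⟩ := hconj p ⟨hp.1, hp.2.trans (min_le_left _ _)⟩ ν f g hν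
    (hf.sameKinkRatio hr.le hg hkink)
  constructor
  · rintro hν0 ⟨x, hx, y, hy, hfx, hgy, hmul⟩
    obtain ⟨qm, qp, hq, h⟩ := hneg hν0 x y ((hf.left hx).trans hfx) ((hg.left hy).trans hgy)
      ((hf.deriv_left hx).trans (hmul.trans (hg.deriv_left hy).symm))
    exact ⟨qm, qp, hq, h.congr (hf.eqOn_piecewise.mono hN)
      (hg.eqOn_piecewise.mono (hq.Ioo_subset_Icc hpr))⟩
  · rintro hν0 ⟨x, hx, y, hy, hfx, hgy, hmul⟩ ⟨u, hu, v, hv, hFu, hGv, hfu, hgv, hmul₂⟩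
    obtain ⟨qm, qp, hq, h⟩ := hpos hν0 u v x y (by rw [hf.left hu, hf.right hFu, hfu])
      (by rw [hg.left hv, hg.right hGv, hgv]) ((hf.right hx).trans hfx)
      ((hg.right hy).trans hgy) (by rw [hf.deriv_right hx, hg.deriv_right hy, hmul])
      (by rw [hf.left hu, hg.left hv, hf.deriv_left hu, hf.deriv_right hFu, hg.deriv_left hv,
        hg.deriv_right hGv, hmul₂])
    exact ⟨qm, qp, hq, h.congr isOpen_Ioo isOpen_Ioo (hf.eqOn_piecewise.mono hN)
      (hg.eqOn_piecewise.mono (hq.Ioo_subset_Icc hpr))⟩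

/-! ### Families of branches -/

/-- The partial derivative of `φ` in its first variable. -/
noncomputable def partialFst (φ : ℝ → ℝ → ℝ) (x μ : ℝ) : ℝ := deriv (fun x => φ x μ) x

/-- Near the origin, `φ (·, μ)` is differentiable, with slope tending to `a` and `L`-Lipschitz
in `x`. -/
structure RegularBranch (φ : ℝ → ℝ → ℝ) (a : ℝ) (L : ℝ≥0) : Prop where
  differentiableAt : ∀ᶠ p : ℝ × ℝ in 𝓝 (0, 0), DifferentiableAt ℝ (fun x => φ x p.2) p.1
  tendsto : Tendsto (uncurry (partialFst φ)) (𝓝 (0, 0)) (𝓝 a)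
  lipschitzOnWith : ∃ s ∈ 𝓝 ((0 : ℝ), (0 : ℝ)), ∀ μ,
    LipschitzOnWith L (fun x => partialFst φ x μ) {x | (x, μ) ∈ s}

lemma eventually_forall_mem_Icc {P : ℝ × ℝ → Prop} (h : ∀ᶠ p in 𝓝 (0, 0), P p) :
    ∀ᶠ r in 𝓝[>] 0, ∀ᶠ μ in 𝓝 0, ∀ x ∈ Icc (-r) r, P (x, μ) := by
  obtain ⟨ε, hε, hball⟩ := Metric.eventually_nhds_iff.1 h
  filter_upwards [Ioo_mem_nhdsGT hε] with r hr
  filter_upwards [Metric.ball_mem_nhds 0 hε] with μ hμ x hx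
  refine hball (max_lt ?_ hμ)
  rw [Real.dist_0_eq_abs]
  exact (abs_le.2 hx).trans_lt hr.2

namespace RegularBranch

variable {φ : ℝ → ℝ → ℝ} {a : ℝ} {L L' : ℝ≥0}

lemma mono (h : RegularBranch φ a L) (hL : L ≤ L') : RegularBranch φ a L' where
  differentiableAt := h.differentiableAt
  tendsto := h.tendsto
  lipschitzOnWith := h.lipschitzOnWith.imp fun _ hs => ⟨hs.1, fun μ => (hs.2 μ).weaken hL⟩

lemma eventually_decreasingBranch (h : RegularBranch φ a L) {η : ℝ} (hη : 0 < η) :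
    ∀ᶠ r in 𝓝[>] 0, ∀ᶠ μ in 𝓝 0, DecreasingBranch (fun x => φ x μ) r L (-a - η) (-a + η) := by
  obtain ⟨s, hs, hlip⟩ := h.lipschitzOnWith
  have hslope : ∀ᶠ p in 𝓝 (0, 0), uncurry (partialFst φ) p ∈ Icc (a - η) (a + η) :=
    h.tendsto (Icc_mem_nhds (by linarith) (by linarith))
  filter_upwards [eventually_forall_mem_Icc (h.differentiableAt.and (hslope.and hs))] with r hr
  filter_upwards [hr] with μ hμ
  refine ⟨fun x hx => (hμ x hx).1, fun x hx => ?_, (hlip μ).mono fun x hx => (hμ x hx).2.2⟩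
  rw [neg_add, neg_sub', neg_neg, sub_neg_eq_add]
  exact (hμ x hx).2.1

end RegularBranch

/-- A function of the parameter that is `C¹` near `0` and equal to `a` at `0`. -/
structure SmoothCurve (ξ : ℝ → ℝ) (a : ℝ) : Prop where
  contDiffAt : ContDiffAt ℝ 1 ξ 0
  map_zero : ξ 0 = a

/-- A branch of class `C²` near the origin with value `0` and slope `a` there. -/
structure SmoothBranch (φ : ℝ → ℝ → ℝ) (a : ℝ) : Prop where
  contDiffAt : ContDiffAt ℝ 2 (uncurry φ) (0, 0)
  map_zero : φ 0 0 = 0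
  deriv_zero : deriv (fun x => φ x 0) 0 = a

namespace SmoothBranch

variable {φ ψ : ℝ → ℝ → ℝ} {a b : ℝ}

lemma contDiffAt_one (h : SmoothBranch φ a) : ContDiffAt ℝ 1 (uncurry φ) (0, 0) :=
  h.contDiffAt.of_le one_le_two

lemma eventually_hasDerivAt (h : SmoothBranch φ a) : ∀ᶠ p : ℝ × ℝ in 𝓝 (0, 0),
    HasDerivAt (fun x => φ x p.2) (fderiv ℝ (uncurry φ) p (1, 0)) p.1 := by
  filter_upwards [h.contDiffAt.eventually (by simp)] with p hp
  have hline : HasDerivAt (fun x : ℝ => (x, p.2)) (1, 0) p.1 :=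
    (hasDerivAt_id _).prodMk (hasDerivAt_const _ _)
  exact (hp.differentiableAt two_ne_zero).hasFDerivAt.comp_hasDerivAt p.1 hline

lemma contDiffAt_partialFst (h : SmoothBranch φ a) :
    ContDiffAt ℝ 1 (uncurry (partialFst φ)) (0, 0) := by
  have hfderiv : ContDiffAt ℝ 1 (fun p => fderiv ℝ (uncurry φ) p (1, 0)) (0, 0) :=
    (h.contDiffAt.fderiv_right (m := 1) (by norm_num)).clm_apply contDiffAt_const
  exact hfderiv.congr_of_eventuallyEq (h.eventually_hasDerivAt.mono fun p hp => hp.deriv)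

lemma hasDerivAt_zero (h : SmoothBranch φ a) : HasDerivAt (fun x => φ x 0) a 0 :=
  h.deriv_zero ▸ h.eventually_hasDerivAt.self_of_nhds.differentiableAt.hasDerivAt

lemma smoothCurve_apply (h : SmoothBranch φ a) {ξ : ℝ → ℝ} (hξ : SmoothCurve ξ 0) :
    SmoothCurve (fun μ => φ (ξ μ) μ) 0 where
  contDiffAt := by
    have hφ : ContDiffAt ℝ 1 (uncurry φ) (ξ 0, 0) := hξ.map_zero.symm ▸ h.contDiffAt_one
    exact hφ.comp₂ hξ.contDiffAt contDiffAt_id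
  map_zero := by rw [hξ.map_zero, h.map_zero]

lemma smoothCurve_partialFst (h : SmoothBranch φ a) {ξ : ℝ → ℝ} (hξ : SmoothCurve ξ 0) :
    SmoothCurve (fun μ => partialFst φ (ξ μ) μ) a where
  contDiffAt := by
    have hφ : ContDiffAt ℝ 1 (uncurry (partialFst φ)) (ξ 0, 0) :=
      hξ.map_zero.symm ▸ h.contDiffAt_partialFst
    exact hφ.comp₂ hξ.contDiffAt contDiffAt_id
  map_zero := by rw [hξ.map_zero, partialFst, h.deriv_zero]

lemma exists_regularBranch (h : SmoothBranch φ a) : ∃ L, RegularBranch φ a L := by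
  obtain ⟨L, s, hs, hlip⟩ := h.contDiffAt_partialFst.exists_lipschitzOnWith
  refine ⟨L, h.eventually_hasDerivAt.mono fun p hp => hp.differentiableAt,
    h.deriv_zero ▸ h.contDiffAt_partialFst.continuousAt.tendsto, s, hs, fun μ => ?_⟩
  have hline : LipschitzWith 1 fun x : ℝ => (x, μ) := LipschitzWith.prodMk_right μ
  exact (hlip.comp (hline.lipschitzOnWith (s := {x | (x, μ) ∈ s})) fun x hx => hx).weaken
    (mul_one L).le

lemma comp (hψ : SmoothBranch ψ b) (hφ : SmoothBranch φ a) :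
    SmoothBranch (fun x μ => ψ (φ x μ) μ) (b * a) where
  contDiffAt := by
    have hψ' : ContDiffAt ℝ 2 (uncurry ψ) (φ 0 0, 0) := hφ.map_zero.symm ▸ hψ.contDiffAt
    exact hψ'.comp ((0 : ℝ), (0 : ℝ)) (hφ.contDiffAt.prodMk contDiffAt_snd)
  map_zero := by rw [hφ.map_zero, hψ.map_zero]
  deriv_zero := by
    have hψ' : HasDerivAt (fun x => ψ x 0) b (φ 0 0) := hφ.map_zero.symm ▸ hψ.hasDerivAt_zero
    exact (HasDerivAt.comp (0 : ℝ) (h₂ := fun x => ψ x 0) (h := fun x => φ x 0) hψ'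
      hφ.hasDerivAt_zero).deriv

end SmoothBranch

lemma exists_implicit_curve {Ψ : ℝ × ℝ → ℝ} (hΨ : ContDiffAt ℝ 1 Ψ (0, 0)) (h0 : Ψ (0, 0) = 0)
    {d : ℝ} (hd : HasDerivAt (fun x => Ψ (0, x)) d 0) (hne : d ≠ 0) :
    ∃ ξ, SmoothCurve ξ 0 ∧ ∀ᶠ μ in 𝓝 0, Ψ (μ, ξ μ) = 0 := by
  have hpartial : (fderiv ℝ Ψ (0, 0) ∘L .inr ℝ ℝ ℝ) 1 = d := by
    have hline : HasDerivAt (fun x : ℝ => ((0 : ℝ), x)) (0, 1) 0 :=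
      (hasDerivAt_const _ _).prodMk (hasDerivAt_id _)
    exact ((hΨ.differentiableAt one_ne_zero).hasFDerivAt.comp_hasDerivAt (0 : ℝ) hline).unique hd
  have hinv : (fderiv ℝ Ψ (0, 0) ∘L .inr ℝ ℝ ℝ).IsInvertible := by
    refine ⟨ContinuousLinearEquiv.unitsEquivAut ℝ (Units.mk0 d hne), ?_⟩
    ext
    rw [hpartial]
    simp
  refine ⟨hΨ.implicitFunction one_ne_zero hinv,
    ⟨hΨ.contDiffAt_implicitFunction one_ne_zero hinv,
      hΨ.implicitFunction_apply_self one_ne_zero hinv⟩, ?_⟩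
  simpa only [h0] using hΨ.eventually_apply_implicitFunction one_ne_zero hinv

lemma SmoothBranch.exists_fixedPt {φ : ℝ → ℝ → ℝ} {a : ℝ} (h : SmoothBranch φ a) (ha : a ≠ 1) :
    ∃ x, SmoothCurve x 0 ∧ ∀ᶠ μ in 𝓝 0, φ (x μ) μ = x μ := by
  have hswap : ContDiffAt ℝ 1 (fun p : ℝ × ℝ => φ p.2 p.1 - p.2) (0, 0) :=
    (ContDiffAt.comp₂ (x := ((0 : ℝ), (0 : ℝ))) h.contDiffAt_one contDiffAt_snd
      contDiffAt_fst).sub contDiffAt_snd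
  obtain ⟨x, hx, hfix⟩ := exists_implicit_curve hswap (by simp [h.map_zero])
    (h.hasDerivAt_zero.sub (hasDerivAt_id 0)) (sub_ne_zero.2 ha)
  exact ⟨x, hx, hfix.mono fun μ hμ => sub_eq_zero.1 hμ⟩

/-- Two families of branches with slopes `aL` and `aR` at the bifurcation and common value `ν μ` at
the border. -/
structure RegularPair (φL φR : ℝ → ℝ → ℝ) (ν : ℝ → ℝ) (aL aR : ℝ) (L : ℝ≥0) : Prop where
  left : RegularBranch φL aL L
  right : RegularBranch φR aR L
  left_zero : ∀ᶠ μ in 𝓝 0, φL 0 μ = ν μ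
  right_zero : ∀ᶠ μ in 𝓝 0, φR 0 μ = ν μ

lemma RegularPair.mono {φL φR : ℝ → ℝ → ℝ} {ν : ℝ → ℝ} {aL aR : ℝ} {L L' : ℝ≥0}
    (h : RegularPair φL φR ν aL aR L) (hL : L ≤ L') : RegularPair φL φR ν aL aR L' :=
  ⟨h.left.mono hL, h.right.mono hL, h.left_zero, h.right_zero⟩

lemma RegularPair.eventually_branchPair {φL φR : ℝ → ℝ → ℝ} {ν : ℝ → ℝ} {aL aR η : ℝ} {L : ℝ≥0}
    (h : RegularPair φL φR ν aL aR L) (hη : 0 < η) : ∀ᶠ r in 𝓝[>] 0, ∀ᶠ μ in 𝓝 0,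
      BranchPair (fun x => φL x μ) (fun x => φR x μ) (ν μ) r L (-aL - η) (-aL + η) (-aR - η)
        (-aR + η) := by
  filter_upwards [h.left.eventually_decreasingBranch hη, h.right.eventually_decreasingBranch hη]
    with r hL hR
  filter_upwards [hL, hR, h.left_zero, h.right_zero] with μ hL hR hL0 hR0 using ⟨hL, hR, hL0, hR0⟩

/-- For parameters near `0`, the invariants of a differentiable conjugacy agree: the ratio of the
one-sided slopes at the border, and the multipliers of the left fixed point for `μ ≤ 0` and of the
right fixed point and the period-two solution for `μ > 0`. -/
structure MatchedInvariants (φL φR γL γR : ℝ → ℝ → ℝ) : Prop where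
  kink : ∀ᶠ μ in 𝓝 0,
    partialFst φL 0 μ * partialFst γR 0 μ = partialFst φR 0 μ * partialFst γL 0 μ
  fixedPt_left : ∀ r > 0, ∀ᶠ μ in 𝓝 0, μ ≤ 0 →
    MatchedFixedPt (fun x => φL x μ) (fun x => γL x μ) (Icc (-r) r)
  fixedPt_right : ∀ r > 0, ∀ᶠ μ in 𝓝 0, 0 < μ →
    MatchedFixedPt (fun x => φR x μ) (fun x => γR x μ) (Icc (-r) r)
  twoCycle : ∀ r > 0, ∀ᶠ μ in 𝓝 0, 0 < μ →
    MatchedTwoCycle (fun x => φL x μ) (fun x => φR x μ) (fun x => γL x μ) (fun x => γR x μ)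
      (Icc (-r) r)

lemma exists_pos_slope_margin {aL aR : ℝ} (haR : aR < -1) (haLR : aL * aR < 1) (haL : aL < 0) :
    ∃ η > 0, 0 < -aL - η ∧ 1 < -aR - η ∧ (-aL + η) * (-aR + η) < 1 := by
  have hL : ∀ᶠ η in 𝓝[>] (0 : ℝ), 0 < -aL - η := nhdsWithin_le_nhds
    ((by fun_prop : Continuous fun η => -aL - η).continuousAt.eventually_const_lt (by simpa))
  have hR : ∀ᶠ η in 𝓝[>] (0 : ℝ), 1 < -aR - η := nhdsWithin_le_nhds
    ((by fun_prop : Continuous fun η => -aR - η).continuousAt.eventually_const_lt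
      (by simpa using lt_neg.1 haR))
  have hLR : ∀ᶠ η in 𝓝[>] (0 : ℝ), (-aL + η) * (-aR + η) < 1 := nhdsWithin_le_nhds
    ((by fun_prop : Continuous fun η => (-aL + η) * (-aR + η)).continuousAt.eventually_lt_const
      (by simpa))
  exact (eventually_mem_nhdsWithin.and (hL.and (hR.and hLR))).exists

theorem MatchedInvariants.exists_eventually_conj {φL φR γL γR : ℝ → ℝ → ℝ} {ν : ℝ → ℝ}
    {aL aR δ ρ : ℝ} {L : ℝ≥0} (haR : aR < -1) (haLR : aL * aR < 1) (haL : aL < 0)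
    (hφ : RegularPair φL φR ν aL aR L) (hγ : RegularPair γL γR ν aL aR L)
    (hν : Tendsto ν (𝓝 0) (𝓝 0)) (hsign : ∀ᶠ μ in 𝓝 0, (ν μ ≤ 0 ↔ μ ≤ 0))
    (h : MatchedInvariants φL φR γL γR) (hδ : 0 < δ) (hρ : 0 < ρ) :
    ∃ p ∈ Ioc 0 ρ, ∀ᶠ μ in 𝓝 0, ∃ qm qp, NearlySymmetric δ p qm qp ∧
      (μ ≤ 0 → DiffConjOn ((Iic 0).piecewise (fun x => φL x μ) fun x => φR x μ)
        ((Iic 0).piecewise (fun x => γL x μ) fun x => γR x μ) (Ioo (-p) p) (Ioo qm qp)) ∧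
      (0 < μ → PeriodDoublingConj ((Iic 0).piecewise (fun x => φL x μ) fun x => φR x μ)
        ((Iic 0).piecewise (fun x => γL x μ) fun x => γR x μ) (Ioo (-p) p) (Ioo qm qp)) := by
  obtain ⟨η, hη, hηL, hηR, hηLR⟩ := exists_pos_slope_margin haR haLR haL
  obtain ⟨r, hr, hrφ, hrγ⟩ := (eventually_mem_nhdsWithin.and
    ((hφ.eventually_branchPair hη).and (hγ.eventually_branchPair hη))).exists
  obtain ⟨p₀, hp₀, c, hc, hconj⟩ := BranchPair.exists_uniform_conj L hr hηL hηR hηLR hδ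
  have hp : 0 < min p₀ ρ := lt_min hp₀ hρ
  refine ⟨min p₀ ρ, ⟨hp, min_le_right _ _⟩, ?_⟩
  have hνsmall : ∀ᶠ μ in 𝓝 0, |ν μ| < c * min p₀ ρ :=
    (hν.abs).eventually_lt_const (by rw [abs_zero]; positivity)
  filter_upwards [hrφ, hrγ, hνsmall, hsign, h.kink, h.fixedPt_left r hr, h.fixedPt_right r hr,
    h.twoCycle r hr] with μ hμφ hμγ hμν hμsign hkink hleft hright hcycle
  obtain ⟨hneg, hpos⟩ := hconj _ ⟨hp, min_le_left _ _⟩ (ν μ) _ _ _ _ hμφ hμγ hμν.le hkink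
  rcases le_or_gt μ 0 with hμ | hμ
  · obtain ⟨qm, qp, hq, h⟩ := hneg (hμsign.2 hμ) (hleft hμ)
    exact ⟨qm, qp, hq, fun _ => h, fun hμ' => absurd hμ hμ'.not_ge⟩
  · obtain ⟨qm, qp, hq, h⟩ := hpos (not_le.1 (hμsign.not.2 hμ.not_ge)) (hright hμ) (hcycle hμ)
    exact ⟨qm, qp, hq, fun hμ' => absurd hμ' hμ.not_ge, fun _ => h⟩

/-! ### Parameters of the normal form -/

namespace SmoothCurve

variable {ξ η : ℝ → ℝ} {a b : ℝ}

lemma const (a : ℝ) : SmoothCurve (fun _ => a) a := ⟨contDiffAt_const, rfl⟩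

lemma add (hξ : SmoothCurve ξ a) (hη : SmoothCurve η b) :
    SmoothCurve (fun μ => ξ μ + η μ) (a + b) :=
  ⟨hξ.contDiffAt.add hη.contDiffAt, by rw [hξ.map_zero, hη.map_zero]⟩

lemma sub (hξ : SmoothCurve ξ a) (hη : SmoothCurve η b) :
    SmoothCurve (fun μ => ξ μ - η μ) (a - b) :=
  ⟨hξ.contDiffAt.sub hη.contDiffAt, by rw [hξ.map_zero, hη.map_zero]⟩

lemma mul (hξ : SmoothCurve ξ a) (hη : SmoothCurve η b) :
    SmoothCurve (fun μ => ξ μ * η μ) (a * b) :=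
  ⟨hξ.contDiffAt.mul hη.contDiffAt, by rw [hξ.map_zero, hη.map_zero]⟩

lemma div (hξ : SmoothCurve ξ a) (hη : SmoothCurve η b) (hb : b ≠ 0) :
    SmoothCurve (fun μ => ξ μ / η μ) (a / b) :=
  ⟨hξ.contDiffAt.div hη.contDiffAt (by rwa [hη.map_zero]), by rw [hξ.map_zero, hη.map_zero]⟩

lemma tendsto (h : SmoothCurve ξ a) : Tendsto ξ (𝓝 0) (𝓝 a) :=
  h.map_zero ▸ h.contDiffAt.continuousAt.tendsto

lemma eventually_ne (h : SmoothCurve ξ a) (hab : a ≠ b) : ∀ᶠ μ in 𝓝 0, ξ μ ≠ b :=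
  h.tendsto.eventually_ne hab

lemma eventually_continuousAt (h : SmoothCurve ξ a) : ∀ᶠ μ in 𝓝 0, ContinuousAt ξ μ :=
  (h.contDiffAt.eventually (by simp)).mono fun _ hμ => hμ.continuousAt

lemma isBigO_sub (h : SmoothCurve ξ a) : (fun μ => ξ μ - a) =O[𝓝 0] fun μ => μ := by
  simpa only [h.map_zero, sub_zero] using (h.contDiffAt.differentiableAt one_ne_zero).isBigO_sub

lemma eventually_continuousAt_dslope (h : SmoothCurve ξ a) :
    ∀ᶠ μ in 𝓝 0, ContinuousAt (dslope ξ 0) μ := by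
  filter_upwards [h.eventually_continuousAt] with μ hμ
  rcases eq_or_ne μ 0 with rfl | hne
  · exact continuousAt_dslope_same.2 (h.contDiffAt.differentiableAt one_ne_zero)
  · exact (continuousAt_dslope_of_ne hne).2 hμ

lemma mul_dslope (h : SmoothCurve ξ 0) (μ : ℝ) : μ * dslope ξ 0 μ = ξ μ := by
  simpa only [h.map_zero, sub_zero, smul_eq_mul] using sub_smul_dslope ξ 0 μ

lemma eventually_nonpos_iff (h : SmoothCurve ξ 0) (hpos : 0 < deriv ξ 0) :
    ∀ᶠ μ in 𝓝 0, (ξ μ ≤ 0 ↔ μ ≤ 0) := by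
  have hslope : ∀ᶠ μ in 𝓝 0, 0 < dslope ξ 0 μ :=
    h.eventually_continuousAt_dslope.self_of_nhds.eventually_const_lt (by rwa [dslope_same])
  filter_upwards [hslope] with μ hμ
  rw [← h.mul_dslope μ, ← smul_eq_mul, smul_nonpos_iff_nonpos_of_pos_right hμ]

lemma exists_continuous_quotient (hξ : SmoothCurve ξ 0) (hη : SmoothCurve η 0)
    (hne : deriv η 0 ≠ 0) :
    ∃ τ : ℝ → ℝ, (∀ᶠ μ in 𝓝 0, ContinuousAt τ μ) ∧ ∀ᶠ μ in 𝓝 0, τ μ * η μ = ξ μ := by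
  have hslope : ∀ᶠ μ in 𝓝 0, dslope η 0 μ ≠ 0 :=
    hη.eventually_continuousAt_dslope.self_of_nhds.eventually_ne (by rwa [dslope_same])
  refine ⟨fun μ => dslope ξ 0 μ / dslope η 0 μ, ?_, ?_⟩
  · filter_upwards [hξ.eventually_continuousAt_dslope, hη.eventually_continuousAt_dslope, hslope]
      with μ hμξ hμη hμ using hμξ.div hμη hμ
  · filter_upwards [hslope] with μ hμ
    rw [← hξ.mul_dslope, ← hη.mul_dslope]
    field_simp

lemma deriv_mul_ne_zero (hξ : SmoothCurve ξ 0) (hη : SmoothCurve η b) (hne : deriv ξ 0 ≠ 0)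
    (hb : b ≠ 0) : deriv (fun μ => ξ μ * η μ) 0 ≠ 0 := by
  rw [deriv_fun_mul (hξ.contDiffAt.differentiableAt one_ne_zero)
    (hη.contDiffAt.differentiableAt one_ne_zero), hξ.map_zero, hη.map_zero, zero_mul, add_zero]
  exact mul_ne_zero hne hb

lemma exists_proportional {s : ℝ → ℝ} (hξ : SmoothCurve ξ a) (hη : SmoothCurve η b)
    (hs : SmoothCurve s a) (ha : a ≠ 0) :
    ∃ s', SmoothCurve s' b ∧ ∀ᶠ μ in 𝓝 0, ξ μ * s' μ = η μ * s μ := by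
  refine ⟨fun μ => η μ * s μ / ξ μ, ?_, ?_⟩
  · simpa only [mul_div_cancel_right₀ _ ha] using (hη.mul hs).div hξ ha
  · filter_upwards [hξ.eventually_ne ha] with μ hμ using mul_div_cancel₀ _ hμ

end SmoothCurve

/-- The family of quadratic maps `y ↦ ν μ + s μ * y + t μ * y ^ 2`, whose members are the branches
of the extended normal form (with `t = 0` on the right). -/
def quadFamily (ν s t : ℝ → ℝ) (y μ : ℝ) : ℝ := ν μ + s μ * y + t μ * y ^ 2

section quadFamily

variable {ν s t : ℝ → ℝ} {a T : ℝ}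

lemma hasDerivAt_quadFamily (y μ : ℝ) :
    HasDerivAt (fun y => quadFamily ν s t y μ) (s μ + 2 * t μ * y) y := by
  have h := (((hasDerivAt_id y).const_mul (s μ)).const_add (ν μ)).add
    ((hasDerivAt_pow 2 y).const_mul (t μ))
  exact h.congr_deriv (by push_cast; ring)

lemma partialFst_quadFamily (y μ : ℝ) : partialFst (quadFamily ν s t) y μ = s μ + 2 * t μ * y :=
  (hasDerivAt_quadFamily y μ).deriv

lemma quadFamily_zero_left (μ : ℝ) : quadFamily ν s t 0 μ = ν μ := by simp [quadFamily]

lemma regularBranch_quadFamily (hs : Tendsto s (𝓝 0) (𝓝 a)) (ht : Tendsto t (𝓝 0) (𝓝 T)) :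
    RegularBranch (quadFamily ν s t) a (2 * (‖T‖₊ + 1)) where
  differentiableAt := .of_forall fun p => (hasDerivAt_quadFamily p.1 p.2).differentiableAt
  tendsto := by
    have hsnd : Tendsto (Prod.snd : ℝ × ℝ → ℝ) (𝓝 (0, 0)) (𝓝 0) := continuousAt_snd
    have hfst : Tendsto (Prod.fst : ℝ × ℝ → ℝ) (𝓝 (0, 0)) (𝓝 0) := continuousAt_fst
    have hlim := (hs.comp hsnd).add (((ht.comp hsnd).const_mul 2).mul hfst)
    rw [mul_zero, add_zero] at hlim
    exact hlim.congr fun p => (partialFst_quadFamily p.1 p.2).symm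
  lipschitzOnWith := by
    have hbound : ∀ᶠ p : ℝ × ℝ in 𝓝 (0, 0), ‖t p.2‖ < ‖T‖ + 1 :=
      (ht.comp continuousAt_snd.tendsto).norm.eventually_lt_const (lt_add_one _)
    refine ⟨_, hbound, fun μ => LipschitzOnWith.of_dist_le_mul fun x hx y _ => ?_⟩
    calc dist (partialFst (quadFamily ν s t) x μ) (partialFst (quadFamily ν s t) y μ)
        = 2 * ‖t μ‖ * dist x y := by
          rw [partialFst_quadFamily, partialFst_quadFamily, dist_add_left, dist_eq_norm,
            ← mul_sub, norm_mul, norm_mul, Real.norm_ofNat, dist_eq_norm]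
      _ ≤ 2 * (‖T‖ + 1) * dist x y := by gcongr; exact hx.le

end quadFamily

lemma eventually_matchedFixedPt {φ γ : ℝ → ℝ → ℝ} {x y : ℝ → ℝ} (hx : SmoothCurve x 0)
    (hy : SmoothCurve y 0) (hφ : ∀ᶠ μ in 𝓝 0, φ (x μ) μ = x μ)
    (hγ : ∀ᶠ μ in 𝓝 0, γ (y μ) μ = y μ ∧ partialFst φ (x μ) μ = partialFst γ (y μ) μ)
    {r : ℝ} (hr : 0 < r) :
    ∀ᶠ μ in 𝓝 0, MatchedFixedPt (fun x => φ x μ) (fun y => γ y μ) (Icc (-r) r) := by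
  have hr' : Icc (-r) r ∈ 𝓝 (0 : ℝ) := Icc_mem_nhds (neg_lt_zero.2 hr) hr
  filter_upwards [hx.tendsto hr', hy.tendsto hr', hφ, hγ] with μ hμx hμy hφ ⟨hγ, hslope⟩
    using ⟨x μ, hμx, y μ, hμy, hφ, hγ, hslope⟩

-- With `q = 1 - m + e * ν`, the choices `s = m - 2 * e * ν` and `t = e * q` reduce both equations
-- to `q * y = ν`, and `e` is determined by the value `T` of `t` at `0`.
lemma exists_quadFamily_fixedPt {ν m : ℝ → ℝ} {a : ℝ} (hν : SmoothCurve ν 0)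
    (hm : SmoothCurve m a) (ha : a ≠ 1) (T : ℝ) :
    ∃ s t y, SmoothCurve s a ∧ SmoothCurve t T ∧ SmoothCurve y 0 ∧ ∀ᶠ μ in 𝓝 0,
      quadFamily ν s t (y μ) μ = y μ ∧ m μ = partialFst (quadFamily ν s t) (y μ) μ := by
  have ha' : 1 - a ≠ 0 := sub_ne_zero.2 ha.symm
  obtain ⟨e, he⟩ : ∃ e, e * (1 - a) = T := ⟨T / (1 - a), div_mul_cancel₀ _ ha'⟩
  have hs : SmoothCurve (fun μ => m μ - 2 * e * ν μ) a := by
    simpa using hm.sub ((SmoothCurve.const (2 * e)).mul hν)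
  have hq : SmoothCurve (fun μ => 1 - m μ + e * ν μ) (1 - a) := by
    simpa using ((SmoothCurve.const 1).sub hm).add ((SmoothCurve.const e).mul hν)
  have ht : SmoothCurve (fun μ => e * (1 - m μ + e * ν μ)) T :=
    he ▸ (SmoothCurve.const e).mul hq
  have hy : SmoothCurve (fun μ => ν μ / (1 - m μ + e * ν μ)) 0 := by
    simpa using hν.div hq ha'
  refine ⟨_, _, _, hs, ht, hy, ?_⟩
  filter_upwards [hq.eventually_ne ha'] with μ hμ
  have hqy := mul_div_cancel₀ (ν μ) hμ
  rw [partialFst_quadFamily, quadFamily]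
  set y := ν μ / (1 - m μ + e * ν μ)
  constructor
  · linear_combination (e * y - 1) * hqy
  · linear_combination -2 * e * hqy

-- Once `2 * t * v = σ - sL`, the period-two equation is linear in `v`; as `σ - sL` vanishes at `0`
-- and `v` has a simple zero there, the quotient `t` is continuous.
lemma exists_quadFamily_twoCycle {ν sL sR σ : ℝ → ℝ} {aL aR : ℝ} (hν : SmoothCurve ν 0)
    (hν' : deriv ν 0 ≠ 0) (hsL : SmoothCurve sL aL) (hσ : SmoothCurve σ aL)
    (hsR : SmoothCurve sR aR) (haR : aR ≠ -1) (haLR : aL * aR ≠ 1) :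
    ∃ t v, (∀ᶠ μ in 𝓝 0, ContinuousAt t μ) ∧ SmoothCurve v 0 ∧ ∀ᶠ μ in 𝓝 0,
      quadFamily ν sR 0 (quadFamily ν sL t (v μ) μ) μ = v μ ∧
        partialFst (quadFamily ν sL t) (v μ) μ = σ μ := by
  have hd0 : 1 - aL * aR ≠ 0 := sub_ne_zero.2 haLR.symm
  have hk0 : (1 + aR) / (1 - aL * aR) ≠ 0 :=
    div_ne_zero (fun h => haR (eq_neg_of_add_eq_zero_right h)) hd0
  have hd : SmoothCurve (fun μ => 1 - (sL μ + σ μ) / 2 * sR μ) (1 - aL * aR) := by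
    simpa using (SmoothCurve.const 1).sub
      (((hsL.add hσ).div (SmoothCurve.const 2) two_ne_zero).mul hsR)
  have hk := ((SmoothCurve.const 1).add hsR).div hd hd0
  have hv := hν.mul hk
  rw [zero_mul] at hv
  have hσs := hσ.sub hsL
  rw [sub_self] at hσs
  obtain ⟨τ, hτ, hτv⟩ := hσs.exists_continuous_quotient hv (hν.deriv_mul_ne_zero hk hν' hk0)
  refine ⟨fun μ => τ μ / 2, _, hτ.mono fun μ hμ => hμ.div_const 2, hv, ?_⟩
  filter_upwards [hτv, hd.eventually_ne hd0] with μ hτv hμ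
  have hdv : (1 - (sL μ + σ μ) / 2 * sR μ) *
      (ν μ * ((1 + sR μ) / (1 - (sL μ + σ μ) / 2 * sR μ))) = ν μ * (1 + sR μ) := by
    rw [mul_left_comm, mul_div_cancel₀ _ hμ]
  rw [partialFst_quadFamily, quadFamily, quadFamily]
  set v := ν μ * ((1 + sR μ) / (1 - (sL μ + σ μ) / 2 * sR μ))
  constructor
  · simp only [Pi.zero_apply]
    linear_combination sR μ * v / 2 * hτv - hdv
  · linear_combination hτv

section Parameters

variable {φL φR : ℝ → ℝ → ℝ} {ν : ℝ → ℝ} {aL aR : ℝ}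

lemma exists_fixedPt_parameters (hL : SmoothBranch φL aL) (hR : SmoothBranch φR aR)
    (hν : SmoothCurve ν 0) (haL : aL ≠ 0) (haL' : aL ≠ 1) (T : ℝ) :
    ∃ sL sR t, SmoothCurve sL aL ∧ SmoothCurve sR aR ∧ SmoothCurve t T ∧
      (∀ᶠ μ in 𝓝 0, partialFst φL 0 μ * sR μ = partialFst φR 0 μ * sL μ) ∧
      ∀ r > 0, ∀ᶠ μ in 𝓝 0,
        MatchedFixedPt (fun x => φL x μ) (fun y => quadFamily ν sL t y μ) (Icc (-r) r) := by
  obtain ⟨x, hx, hfix⟩ := hL.exists_fixedPt haL'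
  obtain ⟨sL, t, y, hsL, ht, hy, hquad⟩ :=
    exists_quadFamily_fixedPt hν (hL.smoothCurve_partialFst hx) haL' T
  obtain ⟨sR, hsR, hkink⟩ := (hL.smoothCurve_partialFst (.const 0)).exists_proportional
    (hR.smoothCurve_partialFst (.const 0)) hsL haL
  exact ⟨sL, sR, t, hsL, hsR, ht, hkink, fun r hr => eventually_matchedFixedPt hx hy hfix hquad hr⟩

lemma exists_linear_fixedPt (hφ : SmoothBranch φR aR) (hν : SmoothCurve ν 0) (haR : aR ≠ 1) :
    ∃ sR, SmoothCurve sR aR ∧ ∀ r > 0, ∀ᶠ μ in 𝓝 0,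
      MatchedFixedPt (fun x => φR x μ) (fun y => quadFamily ν sR 0 y μ) (Icc (-r) r) := by
  obtain ⟨x, hx, hfix⟩ := hφ.exists_fixedPt haR
  have hs := hφ.smoothCurve_partialFst hx
  have hd0 : 1 - aR ≠ 0 := sub_ne_zero.2 haR.symm
  have hd := (SmoothCurve.const 1).sub hs
  have hy := hν.div hd hd0
  rw [zero_div] at hy
  refine ⟨_, hs, fun r hr => eventually_matchedFixedPt hx hy hfix ?_ hr⟩
  filter_upwards [hd.eventually_ne hd0] with μ hμ
  have hdiv := mul_div_cancel₀ (ν μ) hμ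
  rw [partialFst_quadFamily, quadFamily, Pi.zero_apply]
  exact ⟨by linear_combination -hdiv, by ring⟩

lemma eventually_matchedTwoCycle {u v sL sR t : ℝ → ℝ} (hL : SmoothBranch φL aL)
    (hν : SmoothCurve ν 0) (hu : SmoothCurve u 0) (hv : SmoothCurve v 0) (hsL : SmoothCurve sL aL)
    (ht : ContinuousAt t 0) (hφ : ∀ᶠ μ in 𝓝 0, φR (φL (u μ) μ) μ = u μ)
    (hγ : ∀ᶠ μ in 𝓝 0, quadFamily ν sR 0 (quadFamily ν sL t (v μ) μ) μ = v μ)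
    (hmult : ∀ᶠ μ in 𝓝 0, partialFst φL (u μ) μ * partialFst φR (φL (u μ) μ) μ =
      partialFst (quadFamily ν sL t) (v μ) μ * sR μ) {r : ℝ} (hr : 0 < r) :
    ∀ᶠ μ in 𝓝 0, MatchedTwoCycle (fun x => φL x μ) (fun x => φR x μ)
      (fun y => quadFamily ν sL t y μ) (fun y => quadFamily ν sR 0 y μ) (Icc (-r) r) := by
  have hr' : Icc (-r) r ∈ 𝓝 (0 : ℝ) := Icc_mem_nhds (neg_lt_zero.2 hr) hr
  have hquad : Tendsto (fun μ => quadFamily ν sL t (v μ) μ) (𝓝 0) (𝓝 0) := by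
    simpa [quadFamily] using
      (hν.tendsto.add (hsL.tendsto.mul hv.tendsto)).add (ht.tendsto.mul (hv.tendsto.pow 2))
  filter_upwards [hu.tendsto hr', hv.tendsto hr', (hL.smoothCurve_apply hu).tendsto hr',
    hquad hr', hφ, hγ, hmult] with μ hμu hμv hμφ hμγ hφ hγ hmult
  refine ⟨u μ, hμu, v μ, hμv, hμφ, hμγ, hφ, hγ, hmult.trans ?_⟩
  congr 1
  exact ((partialFst_quadFamily _ μ).trans (by simp)).symm

lemma exists_twoCycle_parameters (hL : SmoothBranch φL aL) (hR : SmoothBranch φR aR)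
    (hν : SmoothCurve ν 0) (hν' : deriv ν 0 ≠ 0) (haR : aR < -1) (haLR : aL * aR ≠ 1) :
    ∃ sL sR t, SmoothCurve sL aL ∧ SmoothCurve sR aR ∧ (∀ᶠ μ in 𝓝 0, ContinuousAt t μ) ∧
      (∀ᶠ μ in 𝓝 0, partialFst φL 0 μ * sR μ = partialFst φR 0 μ * sL μ) ∧
      ∀ r > 0, ∀ᶠ μ in 𝓝 0,
        MatchedFixedPt (fun x => φR x μ) (fun y => quadFamily ν sR 0 y μ) (Icc (-r) r) ∧
        MatchedTwoCycle (fun x => φL x μ) (fun x => φR x μ) (fun y => quadFamily ν sL t y μ)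
          (fun y => quadFamily ν sR 0 y μ) (Icc (-r) r) := by
  have haR0 : aR ≠ 0 := by linarith
  obtain ⟨sR, hsR, hright⟩ := exists_linear_fixedPt hR hν (by linarith : aR ≠ 1)
  obtain ⟨sL, hsL, hkink⟩ := (hR.smoothCurve_partialFst (.const 0)).exists_proportional
    (hL.smoothCurve_partialFst (.const 0)) hsR haR0
  obtain ⟨u, hu, hcycle⟩ := (hR.comp hL).exists_fixedPt (mul_comm aL aR ▸ haLR)
  have hσ := ((hL.smoothCurve_partialFst hu).mul
    (hR.smoothCurve_partialFst (hL.smoothCurve_apply hu))).div hsR haR0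
  rw [mul_div_cancel_right₀ _ haR0] at hσ
  obtain ⟨t, v, ht, hv, hquad⟩ := exists_quadFamily_twoCycle hν hν' hsL hσ hsR haR.ne haLR
  have hmult : ∀ᶠ μ in 𝓝 0, partialFst φL (u μ) μ * partialFst φR (φL (u μ) μ) μ =
      partialFst (quadFamily ν sL t) (v μ) μ * sR μ := by
    filter_upwards [hquad, hsR.eventually_ne haR0] with μ hμ hμR
    rw [hμ.2, div_mul_cancel₀ _ hμR]
  exact ⟨sL, sR, t, hsL, hsR, ht, hkink.mono fun μ hμ => hμ.symm, fun r hr => (hright r hr).and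
    (eventually_matchedTwoCycle hL hν hu hv hsL ht.self_of_nhds hcycle
      (hquad.mono fun μ hμ => hμ.1) hmult hr)⟩

end Parameters

section Gluing

variable {ξ η : ℝ → ℝ} {a : ℝ}

lemma eventually_continuousAt_piecewise_Iic (hξ : ∀ᶠ μ in 𝓝 0, ContinuousAt ξ μ)
    (hη : ∀ᶠ μ in 𝓝 0, ContinuousAt η μ) (h0 : ξ 0 = η 0) :
    ∀ᶠ μ in 𝓝 0, ContinuousAt ((Iic 0).piecewise ξ η) μ := by
  filter_upwards [hξ, hη] with μ hμξ hμη
  rcases lt_trichotomy μ 0 with hμ | rfl | hμ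
  · exact hμξ.congr ((piecewise_eqOn _ _ _).symm.eventuallyEq_of_mem (Iic_mem_nhds hμ))
  · refine continuousAt_iff_continuous_left_right.2
      ⟨hμξ.continuousWithinAt.congr (piecewise_eqOn _ _ _) (by simp), ?_⟩
    refine hμη.continuousWithinAt.congr (fun μ hμ => ?_) (by simp [h0])
    rcases (mem_Ici.1 hμ).eq_or_lt with rfl | hμ
    · simp [h0]
    · exact piecewise_eq_of_notMem _ _ _ (notMem_Iic.2 hμ)
  · exact hμη.congr (((piecewise_eqOn_compl _ _ _).symm.mono fun μ hμ => notMem_Iic.2 hμ)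
      |>.eventuallyEq_of_mem (Ioi_mem_nhds hμ))

lemma SmoothCurve.isBigO_piecewise_Iic (hξ : SmoothCurve ξ a) (hη : SmoothCurve η a) :
    (fun μ => (Iic 0).piecewise ξ η μ - a) =O[𝓝 0] fun μ => μ := by
  have hle : ∀ μ, ‖(Iic 0).piecewise ξ η μ - a‖ ≤ ‖|ξ μ - a| + |η μ - a|‖ := fun μ => by
    rw [Real.norm_of_nonneg (by positivity : 0 ≤ |ξ μ - a| + |η μ - a|), Real.norm_eq_abs]
    by_cases hμ : μ ∈ Iic 0 <;> simp [hμ]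
  exact (Asymptotics.isBigO_of_le _ hle).trans
    (hξ.isBigO_sub.norm_left.add hη.isBigO_sub.norm_left)

end Gluing

lemma quadFamily_congr {ν s s' t t' : ℝ → ℝ} {μ : ℝ} (hs : s μ = s' μ) (ht : t μ = t' μ) :
    (fun y => quadFamily ν s t y μ) = fun y => quadFamily ν s' t' y μ := by
  simp only [quadFamily, hs, ht]

/-- Admissible parameters of the normal form: `sL = aL + O(μ)`, `sR = aR + O(μ)` and `t` are
continuous near `0`, and the normal form with offset `ν` has the same invariants of
differentiable conjugacy as the map with branches `φL` and `φR`. -/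
structure MatchingParameters (φL φR : ℝ → ℝ → ℝ) (ν : ℝ → ℝ) (aL aR : ℝ) (sL sR t : ℝ → ℝ) :
    Prop where
  continuousAt_left : ∀ᶠ μ in 𝓝 0, ContinuousAt sL μ
  continuousAt_right : ∀ᶠ μ in 𝓝 0, ContinuousAt sR μ
  continuousAt_quad : ∀ᶠ μ in 𝓝 0, ContinuousAt t μ
  left_zero : sL 0 = aL
  right_zero : sR 0 = aR
  isBigO_left : (fun μ => sL μ - aL) =O[𝓝 0] fun μ => μ
  isBigO_right : (fun μ => sR μ - aR) =O[𝓝 0] fun μ => μ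
  matchedInvariants : MatchedInvariants φL φR (quadFamily ν sL t) (quadFamily ν sR 0)

theorem exists_matchingParameters {φL φR : ℝ → ℝ → ℝ} {ν : ℝ → ℝ} {aL aR : ℝ}
    (hL : SmoothBranch φL aL) (hR : SmoothBranch φR aR) (hν : SmoothCurve ν 0)
    (hν' : deriv ν 0 ≠ 0) (haR : aR < -1) (haLR : aL * aR ≠ 1) (haL : aL < 0) :
    ∃ sL sR t, MatchingParameters φL φR ν aL aR sL sR t := by
  obtain ⟨sLp, sRp, tp, hsLp, hsRp, htp, hkinkp, hpos⟩ :=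
    exists_twoCycle_parameters hL hR hν hν' haR haLR
  obtain ⟨sLm, sRm, tm, hsLm, hsRm, htm, hkinkm, hneg⟩ :=
    exists_fixedPt_parameters hL hR hν haL.ne (haL.trans one_pos).ne (tp 0)
  refine ⟨(Iic 0).piecewise sLm sLp, (Iic 0).piecewise sRm sRp, (Iic 0).piecewise tm tp,
    eventually_continuousAt_piecewise_Iic hsLm.eventually_continuousAt
      hsLp.eventually_continuousAt (hsLm.map_zero.trans hsLp.map_zero.symm),
    eventually_continuousAt_piecewise_Iic hsRm.eventually_continuousAt
      hsRp.eventually_continuousAt (hsRm.map_zero.trans hsRp.map_zero.symm),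
    eventually_continuousAt_piecewise_Iic htm.eventually_continuousAt htp htm.map_zero,
    by simp [hsLm.map_zero], by simp [hsRm.map_zero], hsLm.isBigO_piecewise_Iic hsLp,
    hsRm.isBigO_piecewise_Iic hsRp, ?_, ?_, ?_, ?_⟩
  · filter_upwards [hkinkm, hkinkp] with μ hm hp
    simp only [partialFst_quadFamily, mul_zero, add_zero]
    by_cases hμ : μ ∈ Iic 0 <;> simpa [hμ]
  · intro r hr
    filter_upwards [hneg r hr] with μ h hμ
    have hμ' := mem_Iic.2 hμ
    rwa [quadFamily_congr (piecewise_eq_of_mem _ _ _ hμ') (piecewise_eq_of_mem _ _ _ hμ')]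
  · intro r hr
    filter_upwards [hpos r hr] with μ h hμ
    rw [quadFamily_congr (piecewise_eq_of_notMem _ _ _ (notMem_Iic.2 hμ)) rfl]
    exact h.1
  · intro r hr
    filter_upwards [hpos r hr] with μ h hμ
    have hμ' := notMem_Iic.2 hμ
    rw [quadFamily_congr (piecewise_eq_of_notMem _ _ _ hμ') (piecewise_eq_of_notMem _ _ _ hμ'),
      quadFamily_congr (piecewise_eq_of_notMem _ _ _ hμ') rfl]
    exact h.2

/-! ### The border-collision bifurcation -/

/-- A family of maps with branches `fL` and `fR` undergoing a period-doubling-like border-collision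
bifurcation at `μ = 0`, with one-sided slopes `aL` and `aR`. -/
structure PeriodDoublingFamily (fL fR : ℝ → ℝ → ℝ) (aL aR : ℝ) : Prop where
  left : SmoothBranch fL aL
  right : SmoothBranch fR aR
  continuous : ∀ᶠ μ in 𝓝 0, fL 0 μ = fR 0 μ
  deriv_pos : 0 < deriv (fun μ => fL 0 μ) 0
  right_lt : aR < -1
  mul_lt : aL * aR < 1
  left_neg : aL < 0

lemma pwFam_eq_piecewise (fL fR : ℝ → ℝ → ℝ) (μ : ℝ) :
    pwFam fL fR μ = (Iic 0).piecewise (fun x => fL x μ) fun x => fR x μ := rfl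

lemma enf_eq_piecewise (ν sL sR t : ℝ → ℝ) (μ : ℝ) :
    enf (ν μ) (sL μ) (sR μ) (t μ) =
      (Iic 0).piecewise (fun y => quadFamily ν sL t y μ) fun y => quadFamily ν sR 0 y μ := by
  ext y
  simp [enf, quadFamily, piecewise]

lemma MatchingParameters.exists_regularPair {φL φR : ℝ → ℝ → ℝ} {ν sL sR t : ℝ → ℝ} {aL aR : ℝ}
    (h : MatchingParameters φL φR ν aL aR sL sR t) :
    ∃ L, RegularPair (quadFamily ν sL t) (quadFamily ν sR 0) ν aL aR L := by
  have hL : Tendsto sL (𝓝 0) (𝓝 aL) := h.left_zero ▸ h.continuousAt_left.self_of_nhds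
  have hR : Tendsto sR (𝓝 0) (𝓝 aR) := h.right_zero ▸ h.continuousAt_right.self_of_nhds
  exact ⟨_, (regularBranch_quadFamily hL h.continuousAt_quad.self_of_nhds).mono (le_max_left _ _),
    (regularBranch_quadFamily hR tendsto_const_nhds).mono (le_max_right _ _),
    .of_forall quadFamily_zero_left, .of_forall quadFamily_zero_left⟩

lemma exists_pdConclusion_of_eventually {fL fR : ℝ → ℝ → ℝ} {sL sR t : ℝ → ℝ} {N : Set ℝ}
    {δ p ρ : ℝ} (hρ : 0 < ρ) (h : ∀ᶠ μ in 𝓝 0, ∃ qm qp, NearlySymmetric δ p qm qp ∧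
      (μ ≤ 0 → DiffConjOn (pwFam fL fR μ) (enf (fL 0 μ) (sL μ) (sR μ) (t μ)) N (Ioo qm qp)) ∧
      (0 < μ →
        PeriodDoublingConj (pwFam fL fR μ) (enf (fL 0 μ) (sL μ) (sR μ) (t μ)) N (Ioo qm qp))) :
    ∃ μ₁ > 0, μ₁ ≤ ρ ∧ ∃ qm qp : ℝ → ℝ,
      PdConclusion fL fR μ₁ sL sR t N (fun μ => Ioo (qm μ) (qp μ)) ∧
        ∀ μ ∈ Ioo (-μ₁) μ₁, NearlySymmetric δ p (qm μ) (qp μ) := by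
  obtain ⟨ε, hε, hball⟩ := Metric.eventually_nhds_iff_ball.1 h
  rw [Real.ball_eq_Ioo, zero_sub, zero_add] at hball
  choose! qm qp hq hneg hpos using hball
  have hμ₁ : 0 < min ε ρ := lt_min hε hρ
  have hsub : Ioo (-min ε ρ) (min ε ρ) ⊆ Ioo (-ε) ε :=
    Ioo_subset_Ioo (neg_le_neg (min_le_left _ _)) (min_le_left _ _)
  refine ⟨min ε ρ, hμ₁, min_le_right _ _, qm, qp, ⟨fun μ hμ => ?_, fun μ hμ => ?_, fun μ hμ => ?_⟩,
    fun μ hμ => hq μ (hsub hμ)⟩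
  · exact ⟨isOpen_Ioo, (hq μ (hsub hμ)).left_neg, (hq μ (hsub hμ)).right_pos⟩
  · exact hneg μ (hsub ⟨hμ.1, hμ.2.trans_lt hμ₁⟩) hμ.2
  · obtain ⟨x, u, w, y, v, z, hf, hg, hrep, hattr⟩ :=
      hpos μ (hsub ⟨(neg_lt_zero.2 hμ₁).trans hμ.1, hμ.2⟩) hμ.1
    exact ⟨x, u, w, y, v, z, hf.fixedPt_pos, hf.fixedPt_mem, hf.map_fixedPt, hf.unstable, hf.neg,
      hf.fixedPt_lt, hf.left_mem, hf.right_mem, hf.left_ne_right, hf.map_left, hf.map_right,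
      hf.stable, hg.fixedPt_pos, hg.fixedPt_mem, hg.map_fixedPt, hg.unstable, hg.neg,
      hg.fixedPt_lt, hg.left_mem, hg.right_mem, hg.left_ne_right, hg.map_left, hg.map_right,
      hg.stable, hrep, hattr⟩

namespace PeriodDoublingFamily

variable {fL fR : ℝ → ℝ → ℝ} {aL aR : ℝ}

lemma smoothCurve_offset (h : PeriodDoublingFamily fL fR aL aR) :
    SmoothCurve (fun μ => fL 0 μ) 0 := h.left.smoothCurve_apply (.const 0)

lemma exists_matchingParameters (h : PeriodDoublingFamily fL fR aL aR) :
    ∃ sL sR t, MatchingParameters fL fR (fun μ => fL 0 μ) aL aR sL sR t :=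
  _root_.exists_matchingParameters h.left h.right h.smoothCurve_offset h.deriv_pos.ne' h.right_lt
    h.mul_lt.ne h.left_neg

lemma exists_regularPair (h : PeriodDoublingFamily fL fR aL aR) :
    ∃ L, RegularPair fL fR (fun μ => fL 0 μ) aL aR L := by
  obtain ⟨LL, hL⟩ := h.left.exists_regularBranch
  obtain ⟨LR, hR⟩ := h.right.exists_regularBranch
  exact ⟨max LL LR, hL.mono (le_max_left _ _), hR.mono (le_max_right _ _), .of_forall fun _ => rfl,
    h.continuous.mono fun _ hμ => hμ.symm⟩

theorem exists_pdConclusion (h : PeriodDoublingFamily fL fR aL aR) {sL sR t : ℝ → ℝ}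
    (hs : MatchingParameters fL fR (fun μ => fL 0 μ) aL aR sL sR t) {δ r ρ : ℝ} (hδ : 0 < δ)
    (hr : 0 < r) (hρ : 0 < ρ) :
    ∃ μ₁ > 0, μ₁ ≤ ρ ∧ ∃ p ∈ Ioc 0 r, ∃ qm qp : ℝ → ℝ,
      PdConclusion fL fR μ₁ sL sR t (Ioo (-p) p) (fun μ => Ioo (qm μ) (qp μ)) ∧
        ∀ μ ∈ Ioo (-μ₁) μ₁, NearlySymmetric δ p (qm μ) (qp μ) := by
  obtain ⟨Lf, hf⟩ := h.exists_regularPair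
  obtain ⟨Lg, hg⟩ := hs.exists_regularPair
  obtain ⟨p, hp, hconj⟩ := hs.matchedInvariants.exists_eventually_conj h.right_lt h.mul_lt
    h.left_neg (hf.mono (le_max_left Lf Lg)) (hg.mono (le_max_right Lf Lg))
    h.smoothCurve_offset.tendsto (h.smoothCurve_offset.eventually_nonpos_iff h.deriv_pos) hδ hr
  simp only [← pwFam_eq_piecewise, ← enf_eq_piecewise (fun μ => fL 0 μ)] at hconj
  obtain ⟨μ₁, hμ₁, hle, hconcl⟩ := exists_pdConclusion_of_eventually hρ hconj
  exact ⟨μ₁, hμ₁, hle, p, hp, hconcl⟩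

end PeriodDoublingFamily

theorem stmt2_general (ω₁ ω₂ ι₁ ι₂ aL aR β : ℝ) (fL fR : ℝ → ℝ → ℝ)
    (hω₁ : ω₁ < 0) (hω₂ : 0 < ω₂) (hι₁ : ι₁ < 0) (hι₂ : 0 < ι₂)
    (hfL : ContDiffOn ℝ 2 (fun p : ℝ × ℝ => fL p.1 p.2) (Set.Ioo ω₁ ω₂ ×ˢ Set.Ioo ι₁ ι₂))
    (hfR : ContDiffOn ℝ 2 (fun p : ℝ × ℝ => fR p.1 p.2) (Set.Ioo ω₁ ω₂ ×ˢ Set.Ioo ι₁ ι₂))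
    (hcont : ∀ μ ∈ Set.Ioo ι₁ ι₂, fL 0 μ = fR 0 μ)
    (hbcb : fL 0 0 = 0)
    (haL : deriv (fun x => fL x 0) 0 = aL)
    (haR : deriv (fun x => fR x 0) 0 = aR)
    (hβL : deriv (fun μ => fL 0 μ) 0 = β)
    (hβ : 0 < β)
    (hR : aR < -1) (hLlow : 1 / aR < aL) (hLhigh : aL < 0) :
    ∃ μ₀ > 0, Set.Ioo (-μ₀) μ₀ ⊆ Set.Ioo ι₁ ι₂ ∧
      ∃ sL sR t : ℝ → ℝ,
        ContinuousOn sL (Set.Ioo (-μ₀) μ₀) ∧ ContinuousOn sR (Set.Ioo (-μ₀) μ₀) ∧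
        ContinuousOn t (Set.Ioo (-μ₀) μ₀) ∧
        (fun μ => sL μ - aL) =O[nhds (0:ℝ)] (fun μ => μ) ∧
        (fun μ => sR μ - aR) =O[nhds (0:ℝ)] (fun μ => μ) ∧
        (∃ N : Set ℝ, IsOpen N ∧ (0:ℝ) ∈ N ∧ N ⊆ Set.Ioo ω₁ ω₂ ∧
          ∃ M : ℝ → Set ℝ, PdConclusion fL fR μ₀ sL sR t N M) ∧
        (∀ δ > 0, ∃ μ₁ > 0, μ₁ ≤ μ₀ ∧
          ∃ p > 0, Set.Ioo (-p) p ⊆ Set.Ioo ω₁ ω₂ ∧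
            ∃ qm qp : ℝ → ℝ,
              PdConclusion fL fR μ₁ sL sR t (Set.Ioo (-p) p)
                (fun μ => Set.Ioo (qm μ) (qp μ)) ∧
              ∀ μ ∈ Set.Ioo (-μ₁) μ₁,
                qm μ < 0 ∧ 0 < qp μ ∧
                (1 - δ) * p < |qm μ| ∧ |qm μ| < (1 + δ) * p ∧
                (1 - δ) * p < |qp μ| ∧ |qp μ| < (1 + δ) * p) := by
  have hI : Ioo ι₁ ι₂ ∈ 𝓝 (0 : ℝ) := Ioo_mem_nhds hι₁ hι₂
  have hΩ : Ioo ω₁ ω₂ ×ˢ Ioo ι₁ ι₂ ∈ 𝓝 ((0 : ℝ), (0 : ℝ)) :=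
    prod_mem_nhds (Ioo_mem_nhds hω₁ hω₂) hI
  have hf : PeriodDoublingFamily fL fR aL aR :=
    ⟨⟨hfL.contDiffAt hΩ, hbcb, haL⟩, ⟨hfR.contDiffAt hΩ, hcont 0 ⟨hι₁, hι₂⟩ ▸ hbcb, haR⟩,
      mem_of_superset hI hcont, hβL ▸ hβ, hR, (div_lt_iff_of_neg (by linarith)).1 hLlow, hLhigh⟩
  obtain ⟨sL, sR, t, hs⟩ := hf.exists_matchingParameters
  obtain ⟨ρ, hρ, hball⟩ := Metric.eventually_nhds_iff_ball.1
    (hs.continuousAt_left.and (hs.continuousAt_right.and (hs.continuousAt_quad.and hI)))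
  rw [Real.ball_eq_Ioo, zero_sub, zero_add] at hball
  have hr : 0 < min (-ω₁) ω₂ := lt_min (neg_pos.2 hω₁) hω₂
  have hsub : ∀ p ≤ min (-ω₁) ω₂, Ioo (-p) p ⊆ Ioo ω₁ ω₂ := fun p hp =>
    Ioo_subset_Ioo (le_neg.1 (hp.trans (min_le_left _ _))) (hp.trans (min_le_right _ _))
  obtain ⟨μ₀, hμ₀, hle, p, hp, qm, qp, hconcl, -⟩ := hf.exists_pdConclusion hs one_pos hr hρ
  replace hball := fun μ hμ => hball μ (Ioo_subset_Ioo (neg_le_neg hle) hle hμ)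
  refine ⟨μ₀, hμ₀, fun μ hμ => (hball μ hμ).2.2.2, sL, sR, t,
    fun μ hμ => (hball μ hμ).1.continuousWithinAt, fun μ hμ => (hball μ hμ).2.1.continuousWithinAt,
    fun μ hμ => (hball μ hμ).2.2.1.continuousWithinAt, hs.isBigO_left, hs.isBigO_right,
    ⟨_, isOpen_Ioo, ⟨neg_lt_zero.2 hp.1, hp.1⟩, hsub p hp.2, _, hconcl⟩, fun δ hδ => ?_⟩
  obtain ⟨μ₁, hμ₁, hle₁, p, hp, qm, qp, hconcl, hq⟩ := hf.exists_pdConclusion hs hδ hr hμ₀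
  exact ⟨μ₁, hμ₁, hle₁, p, hp.1, hsub p hp.2, qm, qp, hconcl, fun μ hμ =>
    ⟨(hq μ hμ).left_neg, (hq μ hμ).right_pos, (hq μ hμ).lt_abs_left, (hq μ hμ).abs_left_lt,
      (hq μ hμ).lt_abs_right, (hq μ hμ).abs_right_lt⟩⟩

/-- Theorem 2.3 (period-doubling-like border-collision bifurcations).
Here `Ω = (ω₁, ω₂)` and `I = (ι₁, ι₂)` are the open intervals containing `0` on which the
piecewise-`C³` family is defined, `aL, aR` are the one-sided slopes at the bifurcation,
and `β` is the common `μ`-derivative at the origin. -/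
theorem stmt2 (ω₁ ω₂ ι₁ ι₂ aL aR β : ℝ) (fL fR : ℝ → ℝ → ℝ)
    (hω₁ : ω₁ < 0) (hω₂ : 0 < ω₂) (hι₁ : ι₁ < 0) (hι₂ : 0 < ι₂)
    (hfL : ContDiffOn ℝ 3 (fun p : ℝ × ℝ => fL p.1 p.2) (Set.Ioo ω₁ ω₂ ×ˢ Set.Ioo ι₁ ι₂))
    (hfR : ContDiffOn ℝ 3 (fun p : ℝ × ℝ => fR p.1 p.2) (Set.Ioo ω₁ ω₂ ×ˢ Set.Ioo ι₁ ι₂))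
    (hcont : ∀ μ ∈ Set.Ioo ι₁ ι₂, fL 0 μ = fR 0 μ)
    (hbcb : fL 0 0 = 0)
    (haL : deriv (fun x => fL x 0) 0 = aL)
    (haR : deriv (fun x => fR x 0) 0 = aR)
    (hβL : deriv (fun μ => fL 0 μ) 0 = β)
    (hβR : deriv (fun μ => fR 0 μ) 0 = β)
    (hβ : 0 < β)
    (hR : aR < -1) (hLlow : 1 / aR < aL) (hLhigh : aL < 0) :
    ∃ μ₀ > 0, Set.Ioo (-μ₀) μ₀ ⊆ Set.Ioo ι₁ ι₂ ∧
      ∃ sL sR t : ℝ → ℝ,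
        ContinuousOn sL (Set.Ioo (-μ₀) μ₀) ∧ ContinuousOn sR (Set.Ioo (-μ₀) μ₀) ∧
        ContinuousOn t (Set.Ioo (-μ₀) μ₀) ∧
        (fun μ => sL μ - aL) =O[nhds (0:ℝ)] (fun μ => μ) ∧
        (fun μ => sR μ - aR) =O[nhds (0:ℝ)] (fun μ => μ) ∧
        (∃ N : Set ℝ, IsOpen N ∧ (0:ℝ) ∈ N ∧ N ⊆ Set.Ioo ω₁ ω₂ ∧
          ∃ M : ℝ → Set ℝ, PdConclusion fL fR μ₀ sL sR t N M) ∧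
        -- Moreover, the neighbourhoods can be chosen almost symmetric
        (∀ δ > 0, ∃ μ₁ > 0, μ₁ ≤ μ₀ ∧
          ∃ p > 0, Set.Ioo (-p) p ⊆ Set.Ioo ω₁ ω₂ ∧
            ∃ qm qp : ℝ → ℝ,
              PdConclusion fL fR μ₁ sL sR t (Set.Ioo (-p) p)
                (fun μ => Set.Ioo (qm μ) (qp μ)) ∧
              ∀ μ ∈ Set.Ioo (-μ₁) μ₁,
                qm μ < 0 ∧ 0 < qp μ ∧
                (1 - δ) * p < |qm μ| ∧ |qm μ| < (1 + δ) * p ∧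
                (1 - δ) * p < |qp μ| ∧ |qp μ| < (1 + δ) * p) :=
  stmt2_general ω₁ ω₂ ι₁ ι₂ aL aR β fL fR hω₁ hω₂ hι₁ hι₂ (hfL.of_le (by norm_num))
    (hfR.of_le (by norm_num)) hcont hbcb haL haR hβL hβ hR hLlow hLhigh
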